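/- arXiv:1002.4676 — 3 statements merged into one kernel-verified Lean document; each statement's English description precedes it below -/
import Mathlib

section
/- For all d ≥ 2 and h ≥ 1, the fractional pebbling cost of the balanced d-ary tree of height h satisfies #FRpebbles(T_d^h) ≥ (d−1)h/2 − d/2. -/
/-! Fractional black-white pebbling on a finite DAG whose edges are directed from
children to parents (`child u v` means `u` is a child of `v`; a leaf is a node with
no children). -/

/-- A fractional pebble configuration: a black value and a white value for each node. -/
structure FracConfig (V : Type) where
  b : V → ℝ
  w : V → ℝ

/-- Validity of a configuration: `0 ≤ b v`, `0 ≤ w v` and `b v + w v ≤ 1` for all `v`. -/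
def FracConfig.Valid {V : Type} (C : FracConfig V) : Prop :=
  ∀ v, 0 ≤ C.b v ∧ 0 ≤ C.w v ∧ C.b v + C.w v ≤ 1

/-- The legal fractional pebbling moves:
(i) decrease the black value of a node arbitrarily;
(ii) increase the white value of a node arbitrarily;
(iii) for a node all of whose children have pebble value 1, decrease its white value
arbitrarily, increase its black value arbitrarily, and simultaneously decrease the black
values of its children arbitrarily. -/
def FracMove {V : Type} (child : V → V → Prop) (C C' : FracConfig V) : Prop :=
  (∃ i, C'.b i ≤ C.b i ∧ (∀ j, j ≠ i → C'.b j = C.b j) ∧ C'.w = C.w) ∨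
  (∃ i, C.w i ≤ C'.w i ∧ (∀ j, j ≠ i → C'.w j = C.w j) ∧ C'.b = C.b) ∨
  (∃ i, (∀ u, child u i → C.b u + C.w u = 1) ∧
     C'.w i ≤ C.w i ∧ C.b i ≤ C'.b i ∧
     (∀ u, child u i → C'.b u ≤ C.b u ∧ C'.w u = C.w u) ∧
     (∀ j, j ≠ i → ¬ child j i → C'.b j = C.b j ∧ C'.w j = C.w j))

/-- A fractional pebbling of the DAG `(V, child)` with designated root `root`:
a finite sequence of valid configurations, starting and ending with all values `0`,
each obtained from the previous by a legal move, such that at some point the root has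
black value `1`. -/
structure FracPebbling (V : Type) [Fintype V] (child : V → V → Prop) (root : V) where
  T : ℕ
  cfg : ℕ → FracConfig V
  valid : ∀ t ≤ T, (cfg t).Valid
  start_b : ∀ v, (cfg 0).b v = 0
  start_w : ∀ v, (cfg 0).w v = 0
  finish_b : ∀ v, (cfg T).b v = 0
  finish_w : ∀ v, (cfg T).w v = 0
  move : ∀ t < T, FracMove child (cfg t) (cfg (t + 1))
  hits_root : ∃ t ≤ T, (cfg t).b root = 1

/-- The pebbling uses at most `p` pebbles: every configuration in the sequence has total
pebble value at most `p`. -/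
def FracPebbling.UsesAtMost {V : Type} [Fintype V] {child : V → V → Prop} {root : V}
    (P : FracPebbling V child root) (p : ℝ) : Prop :=
  ∀ t ≤ P.T, (∑ v, ((P.cfg t).b v + (P.cfg t).w v)) ≤ p

/-- The number of pebbles used by the pebbling: the maximum over all configurations of the
total pebble value. -/
noncomputable def FracPebbling.cost {V : Type} [Fintype V] {child : V → V → Prop} {root : V}
    (P : FracPebbling V child root) : ℝ :=
  Finset.sup' (Finset.range (P.T + 1)) (Finset.nonempty_range_iff.mpr (Nat.succ_ne_zero _))
    (fun t => ∑ v, ((P.cfg t).b v + (P.cfg t).w v))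

/-! The balanced `d`-ary tree `T_d^h` with `h` levels: a node at depth `l` (the root having
depth `0`, the leaves depth `h - 1`) is indexed by an element of `Fin (d^l)`;
the children of node `(l, j)` are the nodes `(l+1, d*j + r)` for `r < d`. -/

/-- The nodes of the balanced `d`-ary tree with `h` levels. -/
abbrev TreeNode (d h : ℕ) := Σ l : Fin h, Fin (d ^ (l : ℕ))

/-- `treeChild d h u v` holds iff `u` is a child of `v` in `T_d^h`. -/
def treeChild (d h : ℕ) (u v : TreeNode d h) : Prop :=
  (u.1 : ℕ) = (v.1 : ℕ) + 1 ∧ (u.2 : ℕ) / d = (v.2 : ℕ)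

section

open Finset

/-- A finite forest graded by the distance of its nodes to the leaves, every internal node of
which has `d` children. -/
structure GradedForest (V : Type) (d : ℕ) where
  ch : V → Finset V
  lev : V → ℕ
  lev_ch : ∀ {x y}, y ∈ ch x → lev x = lev y + 1
  parent_unique : ∀ {x x' y}, y ∈ ch x → y ∈ ch x' → x = x'
  card_ch : ∀ {x}, (ch x).Nonempty → (ch x).card = d
  lev_leaf : ∀ {x}, ch x = ∅ → lev x = 0

namespace GradedForest

variable {V : Type} {d : ℕ} (G : GradedForest V d)

/-- `x` is internal and all its children lie in `F`. -/
def Covered (F : Finset V) (x : V) : Prop :=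
  (G.ch x).Nonempty ∧ G.ch x ⊆ F

/-- `F` contains every internal node all of whose children it contains. -/
def IsClosed (F : Finset V) : Prop :=
  ∀ x, G.Covered F x → x ∈ F

open Classical in
/-- The amount that has to be added at `x` so that, together with the white values, the nodes of
`F` become full and all black values are hidden. -/
noncomputable def hide (F : Finset V) (b w : V → ℝ) (x : V) : ℝ :=
  if G.Covered F x then 0 else if x ∈ F then 1 - w x else b x

/-- `y` can be reached from `x` by descending only from covered nodes. -/
def Reach (F : Finset V) : V → V → Prop :=
  Relation.ReflTransGen fun x y => G.Covered F x ∧ y ∈ G.ch x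

variable {G} {F : Finset V} {b w : V → ℝ}

theorem Reach.refl {x : V} : G.Reach F x x :=
  Relation.ReflTransGen.refl

theorem hide_covered {x : V} (hx : G.Covered F x) : G.hide F b w x = 0 := by
  simp [hide, hx]

theorem hide_mem {x : V} (hx : ¬ G.Covered F x) (hF : x ∈ F) : G.hide F b w x = 1 - w x := by
  simp [hide, hx, hF]

theorem hide_notMem {x : V} (hx : ¬ G.Covered F x) (hF : x ∉ F) : G.hide F b w x = b x := by
  simp [hide, hx, hF]

theorem Covered.mono {F' : Finset V} (h : F ⊆ F') {x : V} (hx : G.Covered F x) :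
    G.Covered F' x :=
  ⟨hx.1, hx.2.trans h⟩

theorem hide_nonneg (hb : ∀ x, 0 ≤ b x) (hbw : ∀ x, b x + w x ≤ 1) (x : V) :
    0 ≤ G.hide F b w x := by
  have := hb x
  have := hbw x
  unfold hide
  split_ifs <;> linarith

theorem Reach.lev_le {x y : V} (h : G.Reach F x y) : G.lev y ≤ G.lev x := by
  induction h with
  | refl => exact le_rfl
  | tail _ h ih =>
    have := G.lev_ch h.2
    omega

theorem Reach.eq_or_lev_lt {x y : V} (h : G.Reach F x y) : y = x ∨ G.lev y < G.lev x := by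
  rcases Relation.ReflTransGen.cases_tail h with h | ⟨z, hz, h⟩
  · exact Or.inl h
  · have := G.lev_ch h.2
    have := Reach.lev_le hz
    right
    omega

theorem Reach.exists_covered {x y : V} (h : G.Reach F x y) {l : ℕ} (hl : G.lev y < l)
    (hl' : l ≤ G.lev x) :
    ∃ z, G.Covered F z ∧ G.lev z = l ∧ G.Reach F x z ∧ G.Reach F z y := by
  induction h with
  | refl => omega
  | @tail z y hz h ih =>
    have hlev := G.lev_ch h.2
    by_cases hzl : G.lev z = l
    · exact ⟨z, h.1, hzl, hz, .single h⟩
    · obtain ⟨a, ha, hal, hxa, haz⟩ := ih (by omega)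
      exact ⟨a, ha, hal, hxa, haz.tail h⟩

theorem Reach.comparable {x x' y : V} (h : G.Reach F x y) (h' : G.Reach F x' y)
    (hl : G.lev x ≤ G.lev x') : G.Reach F x' x := by
  induction h with
  | refl => exact h'
  | @tail z y hz h ih =>
    rcases Relation.ReflTransGen.cases_tail h' with rfl | ⟨z', hz', h'⟩
    · have := G.lev_ch h.2
      have := Reach.lev_le hz
      omega
    · obtain rfl := G.parent_unique h.2 h'.2
      exact ih hz'

theorem Reach.mem (hF : G.IsClosed F) {x y : V} (hx : G.Covered F x) (h : G.Reach F x y) :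
    y ∈ F := by
  rcases Relation.ReflTransGen.cases_tail h with rfl | ⟨z, _, h⟩
  · exact hF _ hx
  · exact h.1.2 h.2

variable [Fintype V]

variable (G) in
/-- The total of `f` on the nodes of level at least `j`. -/
noncomputable def upper (f : V → ℝ) (j : ℕ) : ℝ :=
  ∑ x with j ≤ G.lev x, f x

variable (G) in
/-- Klawe's potential of `F` is at most `M`. -/
def Good (b w : V → ℝ) (M : ℝ) (F : Finset V) : Prop :=
  ∀ j : ℕ, G.upper (G.hide F b w) j = 0 ∨
    G.upper (G.hide F b w) j + ((d : ℝ) - 1) / 2 * j ≤ M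

open Classical in
variable (G) in
/-- The nodes strictly below `x` that can be reached from `x` by descending from covered nodes. -/
noncomputable def below (F : Finset V) (x : V) : Finset V :=
  univ.filter fun y => G.Reach F x y ∧ y ≠ x

theorem mem_below {x y : V} : y ∈ G.below F x ↔ G.Reach F x y ∧ y ≠ x := by
  simp [below]

theorem lev_lt_of_mem_below {x y : V} (h : y ∈ G.below F x) : G.lev y < G.lev x := by
  rw [mem_below] at h
  exact h.1.eq_or_lev_lt.resolve_left h.2

theorem mem_below_iff_lt {x y : V} : y ∈ G.below F x ↔ G.Reach F x y ∧ G.lev y < G.lev x :=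
  ⟨fun h => ⟨(mem_below.1 h).1, lev_lt_of_mem_below h⟩,
    fun h => mem_below.2 ⟨h.1, fun e => by rw [e] at h; omega⟩⟩

open Classical in
/-- Counting the edges below the covered nodes of level at most `j` reachable from `x`. -/
theorem card_below {x : V} {j : ℕ} (hj : j ≤ G.lev x) :
    d * (univ.filter fun y => G.Covered F y ∧ G.Reach F x y ∧ G.lev y ≤ j).card =
      ((G.below F x).filter fun y => G.lev y < j).card := by
  have : (G.below F x).filter (fun y => G.lev y < j) =
      (univ.filter fun y => G.Covered F y ∧ G.Reach F x y ∧ G.lev y ≤ j).biUnion G.ch := by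
    ext y
    simp only [mem_filter, mem_below_iff_lt, mem_biUnion, mem_univ, true_and]
    constructor
    · rintro ⟨⟨h, hlt⟩, hyj⟩
      rcases Relation.ReflTransGen.cases_tail h with rfl | ⟨z, hz, h⟩
      · omega
      · have := G.lev_ch h.2
        exact ⟨z, ⟨h.1, hz, by omega⟩, h.2⟩
    · rintro ⟨z, ⟨hc, hz, hzj⟩, hy⟩
      have := G.lev_ch hy
      have := hz.lev_le
      exact ⟨⟨hz.tail ⟨hc, hy⟩, by omega⟩, by omega⟩
  rw [this, card_biUnion, sum_congr rfl (fun z hz => G.card_ch (mem_filter.1 hz).2.1.1), sum_const,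
    smul_eq_mul, mul_comm]
  intro z _ z' _ hne
  rw [Function.onFun, disjoint_left]
  exact fun y hy hy' => hne (G.parent_unique hy hy')

open Classical in
theorem below_lt_eq_biUnion {x : V} {j : ℕ} (hj : j ≤ G.lev x) :
    (G.below F x).filter (fun y => G.lev y < j) =
      (univ.filter fun y => G.Covered F y ∧ G.Reach F x y ∧ G.lev y = j).biUnion (G.below F) := by
  ext y
  simp only [mem_filter, mem_below_iff_lt, mem_biUnion, mem_univ, true_and]
  constructor
  · rintro ⟨⟨h, hlt⟩, hyj⟩
    obtain ⟨z, hz, hzj, hxz, hzy⟩ := h.exists_covered hyj hj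
    exact ⟨z, ⟨hz, hxz, hzj⟩, hzy, by omega⟩
  · rintro ⟨z, ⟨hc, hz, rfl⟩, hzy, hlt⟩
    have := hz.lev_le
    exact ⟨⟨hz.trans hzy, by omega⟩, hlt⟩

open Classical in
theorem sum_below_lt_le {x : V} {j : ℕ} (hj : j ≤ G.lev x) (g : V → ℝ)
    (hg : ∀ y, G.Covered F y → G.lev y = j → ∑ z ∈ G.below F y, g z ≤ 1) :
    ∑ y ∈ (G.below F x).filter (fun y => G.lev y < j), g y ≤
      ((univ.filter fun y => G.Covered F y ∧ G.Reach F x y ∧ G.lev y = j).card : ℝ) := by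
  rw [below_lt_eq_biUnion hj, sum_biUnion]
  · refine (sum_le_card_nsmul _ _ 1 fun y hy => ?_).trans (by simp)
    simp only [mem_filter, mem_univ, true_and] at hy
    exact hg y hy.1 hy.2.2
  · intro y hy y' hy' hne
    rw [Function.onFun, disjoint_left]
    intro z hz hz'
    simp only [coe_filter, mem_univ, true_and, Set.mem_ofPred_eq] at hy hy'
    have h := (mem_below.1 hz).1.comparable (mem_below.1 hz').1 (by omega)
    rcases h.eq_or_lev_lt with h | h
    · exact hne h
    · omega

open Classical in
/-- Between a reachable level and `j` there is a covered reachable node on every level. -/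
theorem le_card_covered {x y : V} (h : G.Reach F x y) {j : ℕ} (hj : j ≤ G.lev x) :
    j - G.lev y ≤
      (univ.filter fun y => G.Covered F y ∧ G.Reach F x y ∧ G.lev y ≤ j).card := by
  calc j - G.lev y = (Ioc (G.lev y) j).card := by simp
    _ ≤ ((univ.filter fun y => G.Covered F y ∧ G.Reach F x y ∧ G.lev y ≤ j).image G.lev).card := by
      refine card_le_card fun l hl => ?_
      rw [mem_Ioc] at hl
      obtain ⟨z, hz, hzl, hxz, -⟩ := h.exists_covered hl.1 (hl.2.trans hj)
      exact mem_image.2 ⟨z, by simp [hz, hxz]; omega, hzl⟩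
    _ ≤ _ := card_image_le

open Classical in
/-- The number of uncovered nodes below level `j` reachable from `x`. -/
theorem card_uncovered {x : V} {j : ℕ} (hj : j ≤ G.lev x) :
    ((((G.below F x).filter fun y => G.lev y < j).filter fun y => ¬ G.Covered F y).card : ℝ) =
      (univ.filter fun y => G.Covered F y ∧ G.Reach F x y ∧ G.lev y = j).card +
      ((d : ℝ) - 1) *
        (univ.filter fun y => G.Covered F y ∧ G.Reach F x y ∧ G.lev y ≤ j).card := by
  have h1 := card_below (F := F) hj
  have h2 := card_filter_add_card_filter_not (s := (G.below F x).filter fun y => G.lev y < j)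
    (fun y => G.Covered F y)
  have h3 : (univ.filter fun y => G.Covered F y ∧ G.Reach F x y ∧ G.lev y ≤ j).card =
      (univ.filter fun y => G.Covered F y ∧ G.Reach F x y ∧ G.lev y = j).card +
      (((G.below F x).filter fun y => G.lev y < j).filter fun y => G.Covered F y).card := by
    rw [← card_union_of_disjoint]
    · congr 1
      ext y
      simp only [mem_filter, mem_below_iff_lt, mem_univ, true_and, mem_union]
      constructor
      · rintro ⟨h, h', h''⟩
        rcases h''.eq_or_lt with h0 | h0
        · exact .inl ⟨h, h', h0⟩
        · exact .inr ⟨⟨⟨h', by omega⟩, h0⟩, h⟩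
      · rintro (⟨h, h', h''⟩ | ⟨⟨⟨h, -⟩, h'⟩, h''⟩)
        · exact ⟨h, h', h''.le⟩
        · exact ⟨h'', h, h'.le⟩
    · rw [disjoint_left]
      intro y hy hy'
      simp only [mem_filter, mem_univ, true_and] at hy hy'
      omega
  have h1' := congrArg (Nat.cast (R := ℝ)) h1
  have h2' := congrArg (Nat.cast (R := ℝ)) h2
  have h3' := congrArg (Nat.cast (R := ℝ)) h3
  push_cast at h1' h2' h3'
  linarith

theorem sum_below_eq_add (x : V) (j : ℕ) (f : V → ℝ) :
    ∑ y ∈ G.below F x, f y = ∑ y ∈ (G.below F x).filter (fun y => j ≤ G.lev y), f y +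
      ∑ y ∈ (G.below F x).filter (fun y => G.lev y < j), f y := by
  rw [← sum_filter_add_sum_filter_not (G.below F x) (fun y => j ≤ G.lev y)]
  simp only [not_le]

open Classical in
theorem upper_collapse {u u' : V → ℝ} {x : V} {v : ℝ} (hux : u x = 0) (hux' : u' x = v)
    (hin : ∀ y ∈ G.below F x, u' y = b y)
    (hout : ∀ y, y ≠ x → y ∉ G.below F x → u' y = u y) (j : ℕ) :
    G.upper u' j = G.upper u j + ((if j ≤ G.lev x then v else 0) +
      ∑ y ∈ (G.below F x).filter (fun y => j ≤ G.lev y), (b y - u y)) := by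
  have h : ∀ y, (if j ≤ G.lev y then u' y else 0) = (if j ≤ G.lev y then u y else 0) +
      ((if y = x then (if j ≤ G.lev x then v else 0) else 0) +
        (if y ∈ G.below F x then (if j ≤ G.lev y then b y - u y else 0) else 0)) := by
    intro y
    by_cases hyx : y = x
    · subst hyx
      have : y ∉ G.below F y := by simp [mem_below]
      simp only [this, hux, hux', if_true, if_false, add_zero, ite_self, zero_add]
    · by_cases hy : y ∈ G.below F x
      · simp only [hyx, hy, hin y hy, if_true, if_false]
        split_ifs <;> ring
      · simp only [hyx, hy, hout y hyx hy, if_false, add_zero]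
  simp only [upper, sum_filter]
  rw [sum_congr rfl fun y _ => h y, sum_add_distrib, sum_add_distrib, sum_ite_eq' univ x,
    if_pos (mem_univ _), sum_ite_mem, univ_inter]

theorem upper_add_sum_below_le {u : V → ℝ} (hu : ∀ y, 0 ≤ u y) {x : V} {j l : ℕ} (hlj : l ≤ j)
    (hl : ∀ y ∈ G.below F x, l ≤ G.lev y) :
    G.upper u j + ∑ y ∈ (G.below F x).filter (fun y => G.lev y < j), u y ≤ G.upper u l := by
  classical
  rw [upper, ← sum_union]
  · refine sum_le_sum_of_subset_of_nonneg (fun y hy => ?_) fun y _ _ => hu y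
    simp only [mem_union, mem_filter, mem_univ, true_and] at hy ⊢
    rcases hy with hy | hy
    · omega
    · exact hl y hy.1
  · rw [disjoint_left]
    intro y hy hy'
    simp only [mem_filter, mem_univ, true_and] at hy hy'
    omega

/-- If `F` cannot be improved by replacing everything reachable from `x` by the black values and
the value `v` at `x`, then the hiding set below `x` is small. -/
theorem sum_below_le {M : ℝ} {F' : Finset V} (hd : 1 ≤ d) (hb : ∀ y, 0 ≤ b y)
    (hw : ∀ y, 0 ≤ w y) (hbw : ∀ y, b y + w y ≤ 1) (hF : G.IsClosed F) (hgood : G.Good b w M F)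
    {x : V} (hx : G.Covered F x) {v : ℝ} (hvw : v + w x ≤ 1)
    (hux' : G.hide F' b w x = v) (hin : ∀ y ∈ G.below F x, G.hide F' b w y = b y)
    (hout : ∀ y, y ≠ x → y ∉ G.below F x → G.hide F' b w y = G.hide F b w y)
    (hmin : G.Good b w M F' → G.upper (G.hide F b w) 0 ≤ G.upper (G.hide F' b w) 0)
    (ih : ∀ y, G.Covered F y → G.lev y < G.lev x →
      ∑ z ∈ G.below F y, (G.hide F b w z - b z - w z) ≤ 1) :
    ∑ y ∈ G.below F x, (G.hide F b w y - b y - w y) ≤ v + w x := by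
  classical
  set u := G.hide F b w with hu
  set u' := G.hide F' b w with hu'
  have hu0 : ∀ y, 0 ≤ u y := hide_nonneg hb hbw
  have hu0' : ∀ y, 0 ≤ u' y := hide_nonneg hb hbw
  have hcol := upper_collapse (u := u) (u' := u') (hide_covered hx) hux' hin hout
  by_contra! hS
  have hsub : v < ∑ y ∈ G.below F x, (u y - b y) := by
    rw [sum_sub_distrib] at hS
    have := sum_nonneg fun y (_ : y ∈ G.below F x) => hw y
    linarith [hw x]
  have hneg : ∑ y ∈ G.below F x, (b y - u y) = -∑ y ∈ G.below F x, (u y - b y) := by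
    rw [← sum_neg_distrib]
    simp
  have hbad : ¬ G.Good b w M F' := by
    intro h
    have h1 := hmin h
    have h2 := hcol 0
    simp only [Nat.zero_le, if_true, filter_true, hneg] at h2
    linarith
  simp only [Good, not_forall, not_or, not_le] at hbad
  obtain ⟨j, hj0, hjM⟩ := hbad
  have hcj := hcol j
  set δ := (if j ≤ G.lev x then v else 0) +
      ∑ y ∈ (G.below F x).filter (fun y => j ≤ G.lev y), (b y - u y) with hδ
  have hδ0 : 0 < δ := by
    rcases hgood j with h | h
    · have : 0 ≤ G.upper u' j := sum_nonneg fun y _ => hu0' y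
      have := this.lt_of_ne' hj0
      linarith
    · linarith
  have hjx : j ≤ G.lev x := by
    by_contra hjx
    have : (G.below F x).filter (fun y => j ≤ G.lev y) = ∅ := by
      refine filter_eq_empty_iff.2 fun y hy => ?_
      have := lev_lt_of_mem_below hy
      omega
    rw [this] at hδ
    simp [hjx] at hδ
    linarith
  rw [if_pos hjx] at hδ
  obtain ⟨y₁, hy₁⟩ := hx.1
  have hlev := G.lev_ch hy₁
  have hne : (G.below F x).Nonempty :=
    ⟨y₁, mem_below_iff_lt.2 ⟨.single ⟨hx, hy₁⟩, by omega⟩⟩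
  obtain ⟨y₀, hy₀, hbot⟩ := exists_min_image _ G.lev hne
  by_cases hjb : j ≤ G.lev y₀
  · have : (G.below F x).filter (fun y => j ≤ G.lev y) = G.below F x :=
      filter_true_of_mem fun y hy => hjb.trans (hbot y hy)
    rw [this, hneg] at hδ
    linarith
  push Not at hjb
  have hsplit := sum_below_eq_add (G := G) (F := F) x j fun y => u y - b y - w y
  have hup : ∑ y ∈ (G.below F x).filter (fun y => j ≤ G.lev y), (u y - b y - w y) ≤ v - δ := by
    rw [hδ, ← sub_sub, sub_self, zero_sub, ← sum_neg_distrib]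
    refine sum_le_sum fun y _ => ?_
    linarith [hw y]
  have hlow : δ < ∑ y ∈ (G.below F x).filter (fun y => G.lev y < j), (u y - b y - w y) := by
    linarith [hw x]
  rw [sum_sub_distrib, sum_sub_distrib] at hlow
  have hB := sum_nonneg fun y (_ : y ∈ (G.below F x).filter (fun y => G.lev y < j)) => hb y
  have hK := sum_nonneg fun y (_ : y ∈ (G.below F x).filter (fun y => G.lev y < j)) => hw y
  have hmass := upper_add_sum_below_le hu0 hjb.le hbot
  have huj : 0 ≤ G.upper u j := sum_nonneg fun y _ => hu0 y
  rcases hgood (G.lev y₀) with h | h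
  · linarith
  have he : δ ≤
      ((univ.filter fun y => G.Covered F y ∧ G.Reach F x y ∧ G.lev y = j).card : ℝ) := by
    rcases hjx.eq_or_lt with hjx' | hjx'
    · have h0 : (G.below F x).filter (fun y => j ≤ G.lev y) = ∅ := by
        refine filter_eq_empty_iff.2 fun y hy => ?_
        have := lev_lt_of_mem_below hy
        omega
      rw [h0, sum_empty] at hδ
      have h1 : 1 ≤ (univ.filter fun y => G.Covered F y ∧ G.Reach F x y ∧ G.lev y = j).card :=
        card_pos.2 ⟨x, mem_filter.2 ⟨mem_univ _, hx, .refl, hjx'.symm⟩⟩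
      exact le_trans (by linarith [hw x]) (Nat.one_le_cast.2 h1)
    · have := sum_below_lt_le hjx (fun y => u y - b y - w y) fun y hy hyj =>
        ih y hy (by omega)
      rw [sum_sub_distrib, sum_sub_distrib] at this
      linarith
  have hT : ((((G.below F x).filter fun y => G.lev y < j).filter
      fun y => ¬ G.Covered F y).card : ℝ) ≤
      ∑ y ∈ (G.below F x).filter (fun y => G.lev y < j), (u y + w y) := by
    refine le_trans ?_ (sum_le_sum_of_subset_of_nonneg (filter_subset
      (fun y => ¬ G.Covered F y) ((G.below F x).filter fun y => G.lev y < j))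
      fun y _ _ => add_nonneg (hu0 y) (hw y))
    rw [← nsmul_one, ← sum_const]
    refine sum_le_sum fun y hy => ?_
    simp only [mem_filter, mem_below] at hy
    rw [hu, hide_mem hy.2 (Reach.mem hF hx hy.1.1.1)]
    linarith
  rw [card_uncovered hjx, sum_add_distrib] at hT
  have hI := le_card_covered (mem_below.1 hy₀).1 hjx
  have hI' : (j : ℝ) - G.lev y₀ ≤
      (univ.filter fun y => G.Covered F y ∧ G.Reach F x y ∧ G.lev y ≤ j).card := by
    rw [← Nat.cast_sub hjb.le]
    exact_mod_cast hI
  have hd' : (0 : ℝ) ≤ (d : ℝ) - 1 := by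
    have : (1 : ℝ) ≤ d := by exact_mod_cast hd
    linarith
  have := mul_le_mul_of_nonneg_left hI' hd'
  linarith

theorem Good.of_le {M : ℝ} {b' w' : V → ℝ} {F' : Finset V} (h : G.Good b w M F)
    (hnn : ∀ y, 0 ≤ G.hide F' b' w' y) (hle : ∀ y, G.hide F' b' w' y ≤ G.hide F b w y) :
    G.Good b' w' M F' := by
  intro j
  have h1 : G.upper (G.hide F' b' w') j ≤ G.upper (G.hide F b w) j := sum_le_sum fun y _ => hle y
  have h2 : 0 ≤ G.upper (G.hide F' b' w') j := sum_nonneg fun y _ => hnn y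
  rcases h j with h | h
  · exact .inl (by linarith)
  · exact .inr (by linarith)

theorem not_covered_of_reach {F' : Finset V} (hsub : F' ⊆ F) {x : V}
    (hdisj : ∀ y ∈ G.below F x, y ∉ F') {z : V} (hz : G.Reach F x z) : ¬ G.Covered F' z := by
  intro h
  have hc := h.mono hsub
  obtain ⟨y, hy⟩ := h.1
  have := G.lev_ch hy
  have := hz.lev_le
  exact hdisj y (mem_below_iff_lt.2 ⟨hz.tail ⟨hc, hy⟩, by omega⟩) (h.2 hy)

theorem covered_of_collapse {F' : Finset V} {x : V}
    (hdiff : ∀ y ∈ F, y ∉ F' → y ∈ G.below F x ∨ y = x ∧ ∀ z, G.Covered F z → x ∉ G.ch z)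
    {z : V} (hz : ¬ G.Reach F x z) (h : G.Covered F z) : G.Covered F' z := by
  refine ⟨h.1, fun y hy => ?_⟩
  by_contra hy'
  rcases hdiff y (h.2 hy) hy' with h0 | ⟨rfl, h0⟩
  · rw [mem_below] at h0
    rcases Relation.ReflTransGen.cases_tail h0.1 with h1 | ⟨z', hz', h1⟩
    · exact h0.2 h1
    · obtain rfl := G.parent_unique hy h1.2
      exact hz hz'
  · exact h0 z h hy

theorem isClosed_of_collapse {F' : Finset V} (hF : G.IsClosed F) (hsub : F' ⊆ F) {x : V}
    (hdisj : ∀ y ∈ G.below F x, y ∉ F')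
    (hdiff : ∀ y ∈ F, y ∉ F' → y ∈ G.below F x ∨ y = x ∧ ∀ z, G.Covered F z → x ∉ G.ch z) :
    G.IsClosed F' := by
  intro z hz
  by_contra hzF
  have : G.Reach F x z := by
    rcases hdiff z (hF z (hz.mono hsub)) hzF with h | ⟨rfl, -⟩
    · exact (mem_below.1 h).1
    · exact .refl
  exact not_covered_of_reach hsub hdisj this hz

theorem hide_of_collapse {F' : Finset V} (hsub : F' ⊆ F) {x : V}
    (hdiff : ∀ y ∈ F, y ∉ F' → y ∈ G.below F x ∨ y = x ∧ ∀ z, G.Covered F z → x ∉ G.ch z)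
    (y : V) (hyx : y ≠ x) (hy : y ∉ G.below F x) : G.hide F' b w y = G.hide F b w y := by
  have hr : ¬ G.Reach F x y := fun h => hy (mem_below.2 ⟨h, hyx⟩)
  have hcov : G.Covered F' y ↔ G.Covered F y :=
    ⟨fun h => h.mono hsub, covered_of_collapse hdiff hr⟩
  have hmem : y ∈ F' ↔ y ∈ F := by
    refine ⟨fun h => hsub h, fun h => ?_⟩
    by_contra h'
    rcases hdiff y h h' with h0 | h0
    · exact hy h0
    · exact hyx h0.1
  unfold hide
  split_ifs <;> tauto

/-- Every closed set can be replaced, without increasing the potential, by one whose hiding set is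
at most as large as the given configuration. -/
theorem exists_upper_hide_le {M : ℝ} (hd : 1 ≤ d) (hb : ∀ y, 0 ≤ b y) (hw : ∀ y, 0 ≤ w y)
    (hbw : ∀ y, b y + w y ≤ 1) (hF : G.IsClosed F) (hgood : G.Good b w M F) :
    ∃ F', G.IsClosed F' ∧ G.Good b w M F' ∧ ∑ y, G.hide F' b w y ≤ ∑ y, (b y + w y) := by
  classical
  obtain ⟨F₁, hF₁, hmin⟩ := exists_min_image
    (univ.filter fun F => G.IsClosed F ∧ G.Good b w M F) (fun F => G.upper (G.hide F b w) 0)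
    ⟨F, by simp [hF, hgood]⟩
  clear hF hgood
  rename' F => F₀, F₁ => F
  simp only [mem_filter, mem_univ, true_and, and_imp] at hF₁ hmin
  obtain ⟨hF, hgood⟩ := hF₁
  refine ⟨F, hF, hgood, ?_⟩
  have key : ∀ n, ∀ x, G.Covered F x → G.lev x = n →
      ∑ z ∈ G.below F x, (G.hide F b w z - b z - w z) ≤ 1 := by
    intro n
    induction n using Nat.strong_induction_on with
    | _ n ih =>
      intro x hx hn
      have hsub : F \ G.below F x ⊆ F := sdiff_subset
      have hdisj : ∀ y ∈ G.below F x, y ∉ F \ G.below F x := fun y hy => by simp [hy]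
      have hdiff : ∀ y ∈ F, y ∉ F \ G.below F x →
          y ∈ G.below F x ∨ y = x ∧ ∀ z, G.Covered F z → x ∉ G.ch z := by
        intro y hy hy'
        simp only [mem_sdiff, hy, true_and, not_not] at hy'
        exact .inl hy'
      have := sum_below_le (v := 1 - w x) (F' := F \ G.below F x) hd hb hw hbw hF hgood hx
        (by linarith)
        (hide_mem (not_covered_of_reach hsub hdisj .refl)
          (mem_sdiff.2 ⟨hF x hx, by simp [mem_below]⟩))
        (fun y hy => hide_notMem (not_covered_of_reach hsub hdisj (mem_below.1 hy).1)
          (hdisj y hy))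
        (hide_of_collapse hsub hdiff)
        (hmin _ (isClosed_of_collapse hF hsub hdisj hdiff))
        (fun y hy hlt => ih _ (hn ▸ hlt) y hy rfl)
      linarith
  set tops := univ.filter fun x => G.Covered F x ∧ ∀ z, G.Covered F z → x ∉ G.ch z with htops
  have htop : ∀ x ∈ tops, ∑ z ∈ insert x (G.below F x), (G.hide F b w z - b z - w z) ≤ 0 := by
    intro x hx
    simp only [htops, mem_filter, mem_univ, true_and] at hx
    obtain ⟨hx, hxt⟩ := hx
    have hsub : F \ insert x (G.below F x) ⊆ F := sdiff_subset
    have hdisj : ∀ y ∈ G.below F x, y ∉ F \ insert x (G.below F x) := fun y hy => by simp [hy]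
    have hdiff : ∀ y ∈ F, y ∉ F \ insert x (G.below F x) →
        y ∈ G.below F x ∨ y = x ∧ ∀ z, G.Covered F z → x ∉ G.ch z := by
      intro y hy hy'
      simp only [mem_sdiff, hy, true_and, not_not, mem_insert] at hy'
      exact hy'.symm.imp_right fun h => ⟨h, hxt⟩
    have := sum_below_le (v := b x) (F' := F \ insert x (G.below F x)) hd hb hw hbw hF hgood hx
      (hbw x)
      (hide_notMem (not_covered_of_reach hsub hdisj .refl) (by simp))
      (fun y hy => hide_notMem (not_covered_of_reach hsub hdisj (mem_below.1 hy).1) (hdisj y hy))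
      (hide_of_collapse hsub hdiff)
      (hmin _ (isClosed_of_collapse hF hsub hdisj hdiff))
      (fun y hy _ => key _ y hy rfl)
    rw [sum_insert (by simp [mem_below]), hide_covered hx]
    linarith
  have hrest : ∀ y ∉ tops.biUnion fun x => insert x (G.below F x),
      G.hide F b w y - b y - w y ≤ 0 := by
    intro y hy
    have hno : ∀ x, G.Covered F x → ¬ G.Reach F x y := by
      intro x hx hxy
      obtain ⟨x', hx', hmax⟩ := exists_max_image
        (univ.filter fun x => G.Covered F x ∧ G.Reach F x y) G.lev ⟨x, by simp [hx, hxy]⟩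
      simp only [mem_filter, mem_univ, true_and, and_imp] at hx' hmax
      refine hy (mem_biUnion.2 ⟨x', ?_, ?_⟩)
      · simp only [htops, mem_filter, mem_univ, true_and]
        refine ⟨hx'.1, fun z hz hxz => ?_⟩
        have h1 := hmax z hz (.head ⟨hz, hxz⟩ hx'.2)
        have h2 := G.lev_ch hxz
        omega
      · rw [mem_insert, mem_below]
        by_cases h : y = x'
        · exact .inl h
        · exact .inr ⟨hx'.2, h⟩
    have hc : ¬ G.Covered F y := fun h => hno y h .refl
    by_cases hyF : y ∈ F
    · have hcov : ∀ z, G.Covered F z → y ∉ G.ch z := fun z hz hyz => hno z hz (.single ⟨hz, hyz⟩)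
      have hbel : ∀ z ∈ G.below F y, z ∉ F.erase y := by
        intro z hz
        rw [mem_below] at hz
        rcases Relation.ReflTransGen.cases_head hz.1 with h | ⟨_, h, -⟩
        · exact absurd h.symm hz.2
        · exact absurd h.1 hc
      have hdiff : ∀ z ∈ F, z ∉ F.erase y →
          z ∈ G.below F y ∨ z = y ∧ ∀ z, G.Covered F z → y ∉ G.ch z := by
        intro z hz hz'
        refine .inr ⟨?_, hcov⟩
        by_contra h
        exact hz' (mem_erase.2 ⟨h, hz⟩)
      have hb' : G.hide (F.erase y) b w y = b y :=
        hide_notMem (fun h => hc (h.mono (erase_subset _ _))) (by simp)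
      have hother : ∀ z, z ≠ y → G.hide (F.erase y) b w z = G.hide F b w z := by
        intro z hz
        refine hide_of_collapse (erase_subset _ _) hdiff z hz fun h => ?_
        rcases Relation.ReflTransGen.cases_head (mem_below.1 h).1 with h | ⟨_, h, -⟩
        · exact hz h.symm
        · exact hc h.1
      have hle : ∀ z, G.hide (F.erase y) b w z ≤ G.hide F b w z := by
        intro z
        by_cases hz : z = y
        · subst hz
          rw [hb', hide_mem hc hyF]
          linarith [hbw z]
        · exact (hother z hz).le
      have hg := hmin (F.erase y) (isClosed_of_collapse hF (erase_subset _ _) hbel hdiff)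
        (hgood.of_le (fun z => hide_nonneg hb hbw z) hle)
      have : G.upper (G.hide F b w) 0 = G.upper (G.hide (F.erase y) b w) 0 +
          (G.hide F b w y - b y) := by
        simp only [upper, Nat.zero_le, filter_true]
        rw [← add_sum_erase univ _ (mem_univ y), ← add_sum_erase univ _ (mem_univ y), hb',
          sum_congr rfl fun z hz => hother z (ne_of_mem_erase hz)]
        ring
      linarith [hw y]
    · rw [hide_notMem hc hyF]
      linarith [hw y]
  have hdisj : (tops : Set V).PairwiseDisjoint fun x => insert x (G.below F x) := by
    have hwlog : ∀ x ∈ tops, ∀ x' ∈ tops, ∀ y, G.Reach F x y → G.Reach F x' y →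
        G.lev x ≤ G.lev x' → x = x' := by
      intro x hx x' hx' y hxy hxy' hl
      rcases Relation.ReflTransGen.cases_tail (hxy.comparable hxy' hl) with h | ⟨z, -, h⟩
      · exact h
      · exact absurd h.2 ((mem_filter.1 hx).2.2 z h.1)
    have hreach : ∀ x y, y ∈ insert x (G.below F x) → G.Reach F x y := by
      intro x y hy
      rcases mem_insert.1 hy with rfl | hy
      · exact .refl
      · exact (mem_below.1 hy).1
    intro x hx x' hx' hne
    rw [Function.onFun, disjoint_left]
    intro y hy hy'
    rcases le_total (G.lev x) (G.lev x') with h | h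
    · exact hne (hwlog x hx x' hx' y (hreach x y hy) (hreach x' y hy') h)
    · exact hne (hwlog x' hx' x hx y (hreach x' y hy') (hreach x y hy) h).symm
  have hsum : ∑ y, (G.hide F b w y - b y - w y) ≤ 0 := by
    rw [← sum_add_sum_compl (tops.biUnion fun x => insert x (G.below F x)), sum_biUnion hdisj]
    exact add_nonpos (sum_nonpos htop) (sum_nonpos fun y hy => hrest y (mem_compl.1 hy))
  rw [sum_sub_distrib, sum_sub_distrib] at hsum
  rw [sum_add_distrib]
  linarith

/-- The hypothesis under which an adversary strategy survives the step from `(b, w)` to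
`(b', w')`: values only improve, or a leaf gains black value, or an internal node `i` all of whose
children are full changes arbitrarily while the other values improve. -/
def Step (G : GradedForest V d) (b w b' w' : V → ℝ) : Prop :=
  (∀ j, b' j ≤ b j ∧ w j ≤ w' j) ∨
  (∃ i, G.ch i = ∅ ∧ b i ≤ b' i ∧ (∀ j, j ≠ i → b' j = b j) ∧ w' = w) ∨
  (∃ i, (G.ch i).Nonempty ∧ (∀ y ∈ G.ch i, b y + w y = 1) ∧
    ∀ j, j ≠ i → b' j ≤ b j ∧ w j ≤ w' j)

variable (G) in
/-- The smallest closed set containing `A`. -/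
inductive Closure (A : Finset V) : V → Prop
  | base {x : V} (hx : x ∈ A) : Closure A x
  | up {x : V} (hx : (G.ch x).Nonempty) (h : ∀ y ∈ G.ch x, Closure A y) : Closure A x

theorem exists_good_of_step {M : ℝ} {b' w' : V → ℝ} (hd : 1 ≤ d) (hb : ∀ y, 0 ≤ b y)
    (hw : ∀ y, 0 ≤ w y) (hbw : ∀ y, b y + w y ≤ 1) (hb' : ∀ y, 0 ≤ b' y)
    (hbw' : ∀ y, b' y + w' y ≤ 1) (hM : ∑ y, (b' y + w' y) ≤ M) (hstep : G.Step b w b' w')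
    (hex : ∃ F, G.IsClosed F ∧ G.Good b w M F) : ∃ F, G.IsClosed F ∧ G.Good b' w' M F := by
  classical
  obtain ⟨F, hF, hgood⟩ := hex
  rcases hstep with h | ⟨i, hi, hbi, hbj, rfl⟩ | ⟨i, hi, hfull, h⟩
  · refine ⟨F, hF, hgood.of_le (fun y => hide_nonneg hb' hbw' y) fun y => ?_⟩
    have := h y
    unfold hide
    split_ifs <;> linarith
  · obtain ⟨F, hF, hgood, hle⟩ := exists_upper_hide_le hd hb hw hbw hF hgood
    refine ⟨F, hF, fun j => ?_⟩
    have hci : ¬ G.Covered F i := fun h => by simp [Covered, hi] at h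
    have hother : ∀ y, y ≠ i → G.hide F b' w' y = G.hide F b w' y := by
      intro y hy
      simp only [hide, hbj y hy]
    rcases Nat.eq_zero_or_pos j with rfl | hj
    · right
      refine le_trans ?_ hM
      simp only [upper, Nat.zero_le, filter_true, Nat.cast_zero, mul_zero, add_zero]
      have h1 : G.hide F b' w' i ≤ G.hide F b w' i + (b' i - b i) := by
        by_cases hiF : i ∈ F
        · rw [hide_mem hci hiF, hide_mem hci hiF]
          linarith
        · rw [hide_notMem hci hiF, hide_notMem hci hiF]
          linarith
      rw [← add_sum_erase univ _ (mem_univ i)] at hle ⊢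
      rw [← add_sum_erase univ _ (mem_univ i)] at hle ⊢
      have h2 : ∑ y ∈ univ.erase i, G.hide F b' w' y = ∑ y ∈ univ.erase i, G.hide F b w' y :=
        sum_congr rfl fun z hz => hother z (ne_of_mem_erase hz)
      have h3 : ∑ y ∈ univ.erase i, (b' y + w' y) = ∑ y ∈ univ.erase i, (b y + w' y) :=
        sum_congr rfl fun z hz => by rw [hbj z (ne_of_mem_erase hz)]
      linarith
    · have : G.upper (G.hide F b' w') j = G.upper (G.hide F b w') j := by
        refine sum_congr rfl fun y hy => hother y ?_
        rintro rfl
        have := G.lev_leaf hi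
        simp only [mem_filter, mem_univ, true_and] at hy
        omega
      rw [this]
      exact hgood j
  · have hmem : ∀ x, x ∈ univ.filter (G.Closure (F ∪ G.ch i)) ↔ G.Closure (F ∪ G.ch i) x := by
      simp
    set F' := univ.filter (G.Closure (F ∪ G.ch i)) with hF'
    have hsub : F ⊆ F' := fun x hx => (hmem x).2 (.base (mem_union_left _ hx))
    have hci : G.Covered F' i :=
      ⟨hi, fun y hy => (hmem y).2 (.base (mem_union_right _ hy))⟩
    refine ⟨F', fun x hx => (hmem x).2 (.up hx.1 fun y hy => (hmem y).1 (hx.2 hy)),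
      hgood.of_le (fun y => hide_nonneg hb' hbw' y) fun y => ?_⟩
    by_cases hc : G.Covered F' y
    · rw [hide_covered hc]
      exact hide_nonneg hb hbw y
    have hyi : y ≠ i := fun h => hc (h ▸ hci)
    have hc' : ¬ G.Covered F y := fun h => hc (h.mono hsub)
    have hy := h y hyi
    by_cases hyF : y ∈ F
    · rw [hide_mem hc (hsub hyF), hide_mem hc' hyF]
      linarith
    rw [hide_notMem hc' hyF]
    by_cases hyF' : y ∈ F'
    · rw [hide_mem hc hyF']
      rcases (hmem y).1 hyF' with hx | ⟨hx, hx'⟩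
      · rcases mem_union.1 hx with hx | hx
        · exact absurd hx hyF
        · linarith [hfull y hx]
      · exact absurd ⟨hx, fun z hz => (hmem z).2 (hx' z hz)⟩ hc
    · rw [hide_notMem hc hyF']
      exact hy.1

/-- A good closed set for the configuration consisting of one black pebble at `r` bounds `M`. -/
theorem le_of_good_single {M : ℝ} (hd : 2 ≤ d) {r : V} (hbr : b r = 1) (hwr : ∀ y, w y = 0)
    (hb0 : ∀ y, y ≠ r → b y = 0) (hF : G.IsClosed F) (hgood : G.Good b w M F) :
    1 + ((d : ℝ) - 1) / 2 * G.lev r ≤ M := by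
  classical
  have hb : ∀ y, 0 ≤ b y := by
    intro y
    by_cases h : y = r
    · rw [h, hbr]
      norm_num
    · rw [hb0 y h]
  have hbw : ∀ y, b y + w y ≤ 1 := by
    intro y
    by_cases h : y = r
    · rw [h, hbr, hwr]
      norm_num
    · rw [hb0 y h, hwr]
      norm_num
  obtain ⟨F, hF, hgood, hle⟩ := exists_upper_hide_le (by omega) hb (fun y => (hwr y).ge) hbw hF
    hgood
  have htot : ∑ y, (b y + w y) = 1 := by
    rw [sum_eq_single r (fun y _ hy => by rw [hb0 y hy, hwr, add_zero]) (by simp), hbr, hwr,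
      add_zero]
  rw [htot] at hle
  have h0 : ∀ y, 0 ≤ G.hide F b w y := fun y => hide_nonneg hb hbw y
  have hc : ¬ G.Covered F r := by
    intro hc
    have h1 := card_uncovered (F := F) (le_refl (G.lev r))
    have h2 : 1 ≤ (univ.filter fun y => G.Covered F y ∧ G.Reach F r y ∧ G.lev y = G.lev r).card :=
      card_pos.2 ⟨r, mem_filter.2 ⟨mem_univ _, hc, .refl, rfl⟩⟩
    have h3 : 1 ≤ (univ.filter fun y => G.Covered F y ∧ G.Reach F r y ∧ G.lev y ≤ G.lev r).card :=
      card_pos.2 ⟨r, mem_filter.2 ⟨mem_univ _, hc, .refl, le_rfl⟩⟩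
    have h2' := Nat.one_le_cast (α := ℝ).2 h2
    have h3' := Nat.one_le_cast (α := ℝ).2 h3
    have h4 : ((((G.below F r).filter fun y => G.lev y < G.lev r).filter
        fun y => ¬ G.Covered F y).card : ℝ) ≤ ∑ y, G.hide F b w y := by
      refine le_trans ?_ (sum_le_sum_of_subset_of_nonneg (subset_univ
        (((G.below F r).filter fun y => G.lev y < G.lev r).filter fun y => ¬ G.Covered F y))
        fun y _ _ => h0 y)
      rw [← nsmul_one, ← sum_const]
      refine sum_le_sum fun y hy => ?_
      simp only [mem_filter, mem_below] at hy
      rw [hide_mem hy.2 (Reach.mem hF hc hy.1.1.1), hwr, sub_zero]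
    have hd' : (2 : ℝ) ≤ d := by exact_mod_cast hd
    nlinarith
  have hr : G.hide F b w r = 1 := by
    by_cases hrF : r ∈ F
    · rw [hide_mem hc hrF, hwr, sub_zero]
    · rw [hide_notMem hc hrF, hbr]
  have hup : 1 ≤ G.upper (G.hide F b w) (G.lev r) := by
    rw [← hr]
    exact single_le_sum (f := G.hide F b w) (fun y _ => h0 y) (by simp)
  rcases hgood (G.lev r) with h | h <;> linarith

end GradedForest

namespace FracConfig

variable {V : Type} {d : ℕ} (G : GradedForest V d) (s : Set V) (C C' : FracConfig V)

open Classical in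
/-- Black values after recolouring the leaves black and putting a black pebble on all of `s`. -/
noncomputable def recolourB (v : V) : ℝ :=
  if v ∈ s then 1 else if G.ch v = ∅ then C.b v + C.w v else C.b v

open Classical in
/-- White values after recolouring the leaves black and putting a black pebble on all of `s`. -/
noncomputable def recolourW (v : V) : ℝ :=
  if v ∈ s then 0 else if G.ch v = ∅ then 0 else C.w v

variable {G s C C'}

theorem Valid.recolour (hC : C.Valid) (v : V) :
    0 ≤ C.recolourB G s v ∧ 0 ≤ C.recolourW G s v ∧
      C.recolourB G s v + C.recolourW G s v ≤ 1 := by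
  obtain ⟨h1, h2, h3⟩ := hC v
  unfold recolourB recolourW
  split_ifs <;> refine ⟨?_, ?_, ?_⟩ <;> linarith

theorem recolour_add {v : V} (hv : v ∉ s) :
    C.recolourB G s v + C.recolourW G s v = C.b v + C.w v := by
  unfold recolourB recolourW
  split_ifs <;> simp

theorem exists_of_move {child : V → V → Prop} (hch : ∀ u v, child u v ↔ u ∈ G.ch v)
    (h : FracMove child C C') :
    ∃ i, (∀ j, j ≠ i → C'.b j ≤ C.b j ∧ C'.w j = C.w j) ∧
      (G.ch i = ∅ → ∀ j, j ≠ i → C'.b j = C.b j) ∧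
      ((∀ u ∈ G.ch i, C.b u + C.w u = 1) ∨ C'.b i ≤ C.b i ∧ C.w i ≤ C'.w i) := by
  rcases h with ⟨i, h1, h2, h3⟩ | ⟨i, h1, h2, h3⟩ | ⟨i, h1, h2, h3, h4, h5⟩
  · exact ⟨i, fun j hj => ⟨(h2 j hj).le, by rw [h3]⟩, fun _ => h2, .inr ⟨h1, by rw [h3]⟩⟩
  · exact ⟨i, fun j hj => ⟨by rw [h3], h2 j hj⟩, fun _ _ _ => by rw [h3], .inr ⟨by rw [h3], h1⟩⟩
  · refine ⟨i, fun j hj => ?_, fun hi j hj => (h5 j hj ?_).1,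
      .inl fun u hu => h1 u ((hch u i).2 hu)⟩
    · by_cases hc : child j i
      · exact h4 j hc
      · exact ⟨(h5 j hj hc).1.le, (h5 j hj hc).2⟩
    · rw [hch, hi]
      simp

theorem step_of_move {child : V → V → Prop} (hch : ∀ u v, child u v ↔ u ∈ G.ch v)
    (hs : ∀ u ∈ s, ∀ v, u ∉ G.ch v) (h : FracMove child C C') :
    G.Step (C.recolourB G s) (C.recolourW G s) (C'.recolourB G s) (C'.recolourW G s) := by
  obtain ⟨i, hother, hleaf, hi⟩ := exists_of_move hch h
  have key : ∀ j, j ≠ i → C'.recolourB G s j ≤ C.recolourB G s j ∧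
      C.recolourW G s j ≤ C'.recolourW G s j := by
    intro j hj
    obtain ⟨h1, h2⟩ := hother j hj
    unfold recolourB recolourW
    split_ifs <;> constructor <;> linarith
  by_cases his : i ∈ s
  · refine .inl fun j => ?_
    by_cases hj : j = i
    · simp [recolourB, recolourW, hj, his]
    · exact key j hj
  by_cases hci : G.ch i = ∅
  · have hW : C'.recolourW G s i = C.recolourW G s i := by simp [recolourW, hci]
    rcases le_total (C'.recolourB G s i) (C.recolourB G s i) with h0 | h0
    · refine .inl fun j => ?_
      by_cases hj : j = i
      · rw [hj]
        exact ⟨h0, hW.ge⟩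
      · exact key j hj
    · refine .inr (.inl ⟨i, hci, h0, fun j hj => ?_, funext fun j => ?_⟩)
      · simp only [recolourB, hleaf hci j hj, (hother j hj).2]
      · by_cases hj : j = i
        · rw [hj, hW]
        · simp only [recolourW, (hother j hj).2]
  rcases hi with hi | hi
  · refine .inr (.inr ⟨i, Finset.nonempty_iff_ne_empty.2 hci, fun u hu => ?_, key⟩)
    rw [recolour_add fun h => hs u h i hu, hi u hu]
  · refine .inl fun j => ?_
    by_cases hj : j = i
    · simpa [recolourB, recolourW, hj, his, hci] using hi
    · exact key j hj

end FracConfig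

namespace GradedForest

/-- The lower bound for graded forests in which every internal node has `d` children. -/
theorem le_of_usesAtMost {V : Type} [Fintype V] {d : ℕ} (G : GradedForest V d) (hd : 2 ≤ d)
    {child : V → V → Prop} (hch : ∀ u v, child u v ↔ u ∈ G.ch v) {r : V}
    (hr : ∀ v, r ∉ G.ch v) (P : FracPebbling V child r) {p : ℝ} (hP : P.UsesAtMost p) :
    ((d : ℝ) - 1) / 2 * G.lev r ≤ p := by
  classical
  obtain ⟨t₀, ht₀, hroot⟩ := P.hits_root
  have htot : ∀ s ⊆ ({r} : Set V), ∀ t ≤ P.T,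
      ∑ v, ((P.cfg t).recolourB G s v + (P.cfg t).recolourW G s v) ≤ p + 1 := by
    intro s hs t ht
    calc _ ≤ ∑ v, (((P.cfg t).b v + (P.cfg t).w v) + if v = r then 1 else 0) := by
          refine sum_le_sum fun v _ => ?_
          by_cases hv : v = r
          · have h1 := P.valid t ht v
            have h2 := ((P.valid t ht).recolour (G := G) (s := s) v).2.2
            rw [if_pos hv]
            linarith
          · rw [if_neg hv, FracConfig.recolour_add fun h => hv (hs h), add_zero]
      _ ≤ p + 1 := by
          rw [sum_add_distrib, sum_ite_eq' univ r, if_pos (mem_univ r)]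
          linarith [hP t ht]
  have hstep : ∀ s ⊆ ({r} : Set V), ∀ t < P.T,
      (∃ F, G.IsClosed F ∧
        G.Good ((P.cfg t).recolourB G s) ((P.cfg t).recolourW G s) (p + 1) F) →
      ∃ F, G.IsClosed F ∧
        G.Good ((P.cfg (t + 1)).recolourB G s) ((P.cfg (t + 1)).recolourW G s) (p + 1) F := by
    intro s hs t ht
    have h1 := fun v => (P.valid t ht.le).recolour (G := G) (s := s) v
    have h2 := fun v => (P.valid (t + 1) ht).recolour (G := G) (s := s) v
    refine exists_good_of_step (by omega) (fun v => (h1 v).1) (fun v => (h1 v).2.1)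
      (fun v => (h1 v).2.2) (fun v => (h2 v).1) (fun v => (h2 v).2.2) (htot s hs _ ht)
      (FracConfig.step_of_move hch ?_ (P.move t ht))
    intro u hu v
    rw [hs hu]
    exact hr v
  have hfirst : ∀ t ≤ t₀, ∃ F, G.IsClosed F ∧
      G.Good ((P.cfg t).recolourB G ∅) ((P.cfg t).recolourW G ∅) (p + 1) F := by
    intro t
    induction t with
    | zero =>
      intro _
      have hc : ∀ x, ¬ G.Covered ∅ x := fun x hx => hx.1.ne_empty (subset_empty.1 hx.2)
      refine ⟨∅, fun x hx => absurd hx (hc x), fun j => .inl (sum_eq_zero fun x _ => ?_)⟩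
      rw [hide_notMem (hc x) (by simp)]
      simp [FracConfig.recolourB, P.start_b, P.start_w]
    | succ t ih =>
      intro ht
      exact hstep ∅ (Set.empty_subset _) t (by omega) (ih (by omega))
  have hsecond : ∀ k, t₀ + k ≤ P.T → ∃ F, G.IsClosed F ∧
      G.Good ((P.cfg (t₀ + k)).recolourB G {r}) ((P.cfg (t₀ + k)).recolourW G {r}) (p + 1) F := by
    intro k
    induction k with
    | zero =>
      intro _
      have hw : (P.cfg t₀).w r = 0 := by
        have := P.valid t₀ ht₀ r
        linarith
      have hB : (P.cfg t₀).recolourB G {r} = (P.cfg t₀).recolourB G ∅ := by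
        funext v
        by_cases hv : v = r <;> simp [FracConfig.recolourB, hv, hw, hroot]
      have hW : (P.cfg t₀).recolourW G {r} = (P.cfg t₀).recolourW G ∅ := by
        funext v
        by_cases hv : v = r <;> simp [FracConfig.recolourW, hv, hw]
      rw [add_zero, hB, hW]
      exact hfirst t₀ le_rfl
    | succ k ih =>
      intro hk
      exact hstep {r} subset_rfl (t₀ + k) (by omega) (ih (by omega))
  obtain ⟨F, hF, hgood⟩ := hsecond (P.T - t₀) (by omega)
  rw [Nat.add_sub_cancel' ht₀] at hgood
  have := le_of_good_single hd (r := r) (by simp [FracConfig.recolourB])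
    (fun y => by simp [FracConfig.recolourW, P.finish_w])
    (fun y hy => by simp [FracConfig.recolourB, hy, P.finish_b, P.finish_w]) hF hgood
  linarith

open Classical in
/-- The balanced `d`-ary tree with `h` levels. -/
noncomputable def balanced (d h : ℕ) (hd : 0 < d) : GradedForest (TreeNode d h) d where
  ch v := univ.filter fun u => treeChild d h u v
  lev v := h - 1 - v.1
  lev_ch := by
    intro x y hy
    have h1 := (mem_filter.1 hy).2.1
    have := y.1.2
    omega
  parent_unique := by
    rintro ⟨⟨l, hl⟩, a⟩ ⟨⟨l', hl'⟩, a'⟩ y hy hy'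
    have h1 := (mem_filter.1 hy).2
    have h2 := (mem_filter.1 hy').2
    simp only [treeChild] at h1 h2
    obtain rfl : l = l' := by omega
    obtain rfl : a = a' := Fin.ext (by omega)
    rfl
  card_ch := by
    rintro ⟨⟨l, hl⟩, a⟩ ⟨y, hy⟩
    have hl1 : l + 1 < h := (mem_filter.1 hy).2.1 ▸ y.1.2
    have hlt : ∀ r : Fin d, d * a + r < d ^ (l + 1) := by
      intro r
      calc d * a + r < d * (a + 1) := by
            have := r.2
            rw [mul_add]
            omega
        _ ≤ d * d ^ l := Nat.mul_le_mul_left d a.2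
        _ = d ^ (l + 1) := by ring
    let f : Fin d → TreeNode d h := fun r => ⟨⟨l + 1, hl1⟩, ⟨d * a + r, hlt r⟩⟩
    have hf : Function.Injective f := by
      intro r r' hrr
      simp only [f, Sigma.mk.injEq, heq_eq_eq, true_and, Fin.mk.injEq] at hrr
      exact Fin.ext (by omega)
    have himage : (univ.filter fun u => treeChild d h u ⟨⟨l, hl⟩, a⟩) = univ.image f := by
      ext ⟨⟨m, hm⟩, c⟩
      rw [mem_filter, mem_image]
      simp only [mem_univ, true_and, treeChild]
      constructor
      · rintro ⟨hm', hc⟩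
        obtain rfl : m = l + 1 := hm'
        refine ⟨⟨c % d, Nat.mod_lt _ hd⟩, ?_⟩
        simp only [f, Sigma.mk.injEq, heq_eq_eq, true_and]
        refine Fin.ext ?_
        simp only [← hc]
        exact Nat.div_add_mod _ _
      · rintro ⟨r, hr⟩
        simp only [f, Sigma.mk.injEq, Fin.mk.injEq] at hr
        obtain ⟨rfl, hr⟩ := hr
        obtain rfl := eq_of_heq hr
        refine ⟨rfl, ?_⟩
        have := r.2
        simp only
        rw [Nat.mul_add_div (by omega), Nat.div_eq_of_lt this, add_zero]
    rw [himage, card_image_of_injective _ hf, card_univ, Fintype.card_fin]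
  lev_leaf := by
    rintro ⟨⟨l, hl⟩, a⟩ hx
    by_contra hne
    simp only at hne
    have hl1 : l + 1 < h := by omega
    have hlt : d * a < d ^ (l + 1) :=
      calc d * a < d * (a + 1) := Nat.mul_lt_mul_of_pos_left (Nat.lt_succ_self _) hd
        _ ≤ d * d ^ l := Nat.mul_le_mul_left d a.2
        _ = d ^ (l + 1) := by ring
    have hmem : (⟨⟨l + 1, hl1⟩, ⟨d * a, hlt⟩⟩ : TreeNode d h) ∈
        univ.filter fun u => treeChild d h u ⟨⟨l, hl⟩, a⟩ :=
      mem_filter.2 ⟨mem_univ _, rfl, Nat.mul_div_cancel_left _ hd⟩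
    rw [hx] at hmem
    exact notMem_empty _ hmem

theorem mem_ch_balanced {d h : ℕ} (hd : 0 < d) {u v : TreeNode d h} :
    u ∈ (balanced d h hd).ch v ↔ treeChild d h u v := by
  simp [balanced]

end GradedForest

end

/-- For all `d ≥ 2` and `h ≥ 1`, the fractional pebbling cost of the balanced
`d`-ary tree of height `h` is at least `(d-1)h/2 - d/2`: every fractional pebbling of
`T_d^h` using at most `p` pebbles satisfies `(d-1)h/2 - d/2 ≤ p`. -/
theorem stmt_11 (d h : ℕ) (hd : 2 ≤ d) (hh : 1 ≤ h) (p : ℝ)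
    (P : FracPebbling (TreeNode d h) (treeChild d h) ⟨⟨0, hh⟩, ⟨0, by simp⟩⟩)
    (hP : P.UsesAtMost p) :
    ((d : ℝ) - 1) * (h : ℝ) / 2 - (d : ℝ) / 2 ≤ p := by
  have h1 := GradedForest.le_of_usesAtMost (GradedForest.balanced d h (by omega)) hd
    (fun _ _ => (GradedForest.mem_ch_balanced _).symm)
    (fun v hv => by simpa using ((GradedForest.mem_ch_balanced _).1 hv).1) P hP
  have h2 : ((GradedForest.balanced d h (by omega)).lev ⟨⟨0, hh⟩, ⟨0, by simp⟩⟩ : ℝ) = h - 1 := by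
    simp [GradedForest.balanced, Nat.cast_sub hh]
  rw [h2] at h1
  linarith
end

section
/- For every finite DAG G (with a designated root node), there is an optimal fractional black-white pebbling of G all of whose pebble values are rational: there exists a fractional pebbling of G in which every value b(i) and w(i) occurring in every configuration is a rational number, and whose number of pebbles is at most the number of pebbles used by any fractional pebbling of G; in particular the infimum #FRpebbles(G) is attained by a rational-valued pebbling. -/
/-! ### Fourier–Motzkin elimination and rational optima of linear programs -/

lemma exists_between_of_finite {K : Type*} [LinearOrder K] [Nonempty K] {A B : Set K}
    (hA : A.Finite) (hB : B.Finite) (h : ∀ a ∈ A, ∀ b ∈ B, a ≤ b) :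
    ∃ y, (∀ a ∈ A, a ≤ y) ∧ ∀ b ∈ B, y ≤ b := by
  rcases A.eq_empty_or_nonempty with rfl | hne
  · rcases B.eq_empty_or_nonempty with rfl | hne
    · exact ⟨Classical.arbitrary K, by simp, by simp⟩
    · obtain ⟨y, hy, hmin⟩ := Set.exists_min_image B id hB hne
      exact ⟨y, by simp, hmin⟩
  · obtain ⟨y, hy, hmax⟩ := Set.exists_max_image A id hA hne
    exact ⟨y, hmax, h y hy⟩

/-- Elimination of one variable from a finite system of affine inequalities. -/
lemma exists_forall_affine_nonpos_iff {K κ : Type*} [Field K] [LinearOrder K]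
    [IsStrictOrderedRing K] {S : Set κ} (hS : S.Finite) (a r : κ → K) :
    (∃ y, ∀ q ∈ S, a q * y + r q ≤ 0) ↔
      (∀ q ∈ S, a q = 0 → r q ≤ 0) ∧
        ∀ q ∈ S, ∀ q' ∈ S, 0 < a q → a q' < 0 → a q * r q' - a q' * r q ≤ 0 := by
  constructor
  · rintro ⟨y, hy⟩
    refine ⟨fun q hq h0 => by simpa [h0] using hy q hq, fun q hq q' hq' hpos hneg => ?_⟩
    nlinarith [mul_le_mul_of_nonneg_left (hy q' hq') hpos.le,
      mul_le_mul_of_nonpos_left (hy q hq) hneg.le]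
  · rintro ⟨hzero, hpair⟩
    obtain ⟨y, hlo, hhi⟩ := exists_between_of_finite
      (A := (fun q => -r q / a q) '' {q ∈ S | a q < 0})
      (B := (fun q => -r q / a q) '' {q ∈ S | 0 < a q})
      ((hS.sep _).image _) ((hS.sep _).image _) (by
        rintro _ ⟨q', ⟨hq', hneg⟩, rfl⟩ _ ⟨q, ⟨hq, hpos⟩, rfl⟩
        have := hpair q hq q' hq' hpos hneg
        dsimp only
        rw [div_le_iff_of_neg hneg, div_mul_eq_mul_div, div_le_iff₀ hpos]
        linarith)
    refine ⟨y, fun q hq => ?_⟩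
    rcases lt_trichotomy (a q) 0 with hneg | h0 | hpos
    · have := hlo _ ⟨q, ⟨hq, hneg⟩, rfl⟩
      dsimp only at this
      rw [div_le_iff_of_neg hneg] at this
      linarith
    · simpa [h0] using hzero q hq h0
    · have := hhi _ ⟨q, ⟨hq, hpos⟩, rfl⟩
      dsimp only at this
      rw [le_div_iff₀ hpos] at this
      linarith

/-- A rational linear inequality `∑ i, coeff i * x i + slope * t ≤ bound` in the variables `x i`
and a distinguished variable `t`. -/
structure RatIneq (ι : Type) where
  coeff : ι → ℚ
  slope : ℚ
  bound : ℚ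

/-- The inequality holds at the point `(t, x)` with coordinates in `K`. -/
def RatIneq.Holds {ι : Type} [Fintype ι] (q : RatIneq ι) {K : Type} [Field K] [LinearOrder K]
    (t : K) (x : ι → K) : Prop :=
  ∑ i, (q.coeff i : K) * x i + (q.slope : K) * t ≤ (q.bound : K)

/-- Fourier–Motzkin elimination of the first variable, uniformly in the ordered field. -/
lemma RatIneq.exists_elim {n : ℕ} {S : Set (RatIneq (Fin (n + 1)))} (hS : S.Finite) :
    ∃ S' : Set (RatIneq (Fin n)), S'.Finite ∧
      ∀ (K : Type) [Field K] [LinearOrder K] [IsStrictOrderedRing K] (t : K) (x : Fin n → K),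
        (∀ q ∈ S', q.Holds t x) ↔ ∃ y : K, ∀ q ∈ S, q.Holds t (Fin.cons y x : Fin (n + 1) → K) := by
  let tail : RatIneq (Fin (n + 1)) → RatIneq (Fin n) :=
    fun q => ⟨fun i => q.coeff i.succ, q.slope, q.bound⟩
  let comb : RatIneq (Fin (n + 1)) → RatIneq (Fin (n + 1)) → RatIneq (Fin n) := fun q q' =>
    ⟨fun i => q.coeff 0 * q'.coeff i.succ - q'.coeff 0 * q.coeff i.succ,
      q.coeff 0 * q'.slope - q'.coeff 0 * q.slope, q.coeff 0 * q'.bound - q'.coeff 0 * q.bound⟩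
  refine ⟨tail '' {q ∈ S | q.coeff 0 = 0} ∪
    Set.image2 comb {q ∈ S | 0 < q.coeff 0} {q ∈ S | q.coeff 0 < 0},
    ((hS.sep _).image _).union ((hS.sep _).image2 _ (hS.sep _)), ?_⟩
  intro K _ _ _ t x
  let r : RatIneq (Fin (n + 1)) → K :=
    fun q => ∑ i : Fin n, (q.coeff i.succ : K) * x i + (q.slope : K) * t - (q.bound : K)
  have hcons : ∀ q : RatIneq (Fin (n + 1)), ∀ y : K,
      q.Holds t (Fin.cons y x : Fin (n + 1) → K) ↔ (q.coeff 0 : K) * y + r q ≤ 0 := by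
    intro q y
    simp only [RatIneq.Holds, Fin.sum_univ_succ, Fin.cons_zero, Fin.cons_succ, r]
    constructor <;> intro h <;> linarith
  have htail : ∀ q, (tail q).Holds t x ↔ r q ≤ 0 := by
    intro q
    simp only [RatIneq.Holds, r, tail]
    constructor <;> intro h <;> linarith
  have hcomb : ∀ q q', (comb q q').Holds t x ↔
      (q.coeff 0 : K) * r q' - (q'.coeff 0 : K) * r q ≤ 0 := by
    intro q q'
    have : ∑ i : Fin n, ((comb q q').coeff i : K) * x i =
        (q.coeff 0 : K) * ∑ i : Fin n, (q'.coeff i.succ : K) * x i -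
          (q'.coeff 0 : K) * ∑ i : Fin n, (q.coeff i.succ : K) * x i := by
      rw [Finset.mul_sum, Finset.mul_sum, ← Finset.sum_sub_distrib]
      refine Finset.sum_congr rfl fun i _ => ?_
      simp only [comb]
      push_cast
      ring
    rw [RatIneq.Holds, this]
    simp only [r, comb]
    push_cast
    constructor <;> intro h <;> linarith
  simp_rw [hcons]
  rw [exists_forall_affine_nonpos_iff hS (fun q => (q.coeff 0 : K)) r]
  simp only [Set.mem_union, or_imp, forall_and, Set.forall_mem_image, Set.forall_mem_image2, htail,
    hcomb, Set.mem_ofPred_eq, and_imp, Rat.cast_eq_zero, Rat.cast_pos, Rat.cast_lt_zero]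
  constructor
  · rintro ⟨h1, h2⟩
    exact ⟨h1, fun q hq q' hq' hp hn => h2 q hq hp q' hq' hn⟩
  · rintro ⟨h1, h2⟩
    exact ⟨h1, fun q hq hp q' hq' hn => h2 q hq q' hq' hp hn⟩

/-- The values of `t` for which a finite rational system is solvable are described, uniformly in the
ordered field, by a finite system in `t` alone. -/
lemma RatIneq.exists_elim_all {n : ℕ} {S : Set (RatIneq (Fin n))} (hS : S.Finite) :
    ∃ S' : Set (ℚ × ℚ), S'.Finite ∧
      ∀ (K : Type) [Field K] [LinearOrder K] [IsStrictOrderedRing K] (t : K),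
        (∀ q ∈ S', (q.1 : K) * t ≤ (q.2 : K)) ↔ ∃ x : Fin n → K, ∀ q ∈ S, q.Holds t x := by
  induction n with
  | zero =>
    refine ⟨(fun q => (q.slope, q.bound)) '' S, hS.image _, fun K _ _ _ t => ?_⟩
    simp [RatIneq.Holds]
  | succ n ih =>
    obtain ⟨S₁, hS₁, h₁⟩ := RatIneq.exists_elim hS
    obtain ⟨S₂, hS₂, h₂⟩ := ih hS₁
    refine ⟨S₂, hS₂, fun K _ _ _ t => ?_⟩
    rw [h₂]
    simp_rw [h₁]
    constructor
    · rintro ⟨x, y, h⟩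
      exact ⟨_, h⟩
    · rintro ⟨x, h⟩
      exact ⟨Fin.tail x, x 0, by simpa [Fin.cons_self_tail] using h⟩

/-- A feasible finite rational system all of whose real solutions have `0 ≤ t` has a rational
solution minimizing `t`. -/
lemma RatIneq.exists_rat_min_fin {n : ℕ} {S : Set (RatIneq (Fin n))} (hS : S.Finite)
    (hne : ∃ (t : ℝ) (x : Fin n → ℝ), ∀ q ∈ S, q.Holds t x)
    (hbdd : ∀ (t : ℝ) (x : Fin n → ℝ), (∀ q ∈ S, q.Holds t x) → 0 ≤ t) :
    ∃ (s : ℚ) (y : Fin n → ℚ), (∀ q ∈ S, q.Holds s y) ∧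
      ∀ (t : ℝ) (x : Fin n → ℝ), (∀ q ∈ S, q.Holds t x) → (s : ℝ) ≤ t := by
  obtain ⟨S', hS', h⟩ := RatIneq.exists_elim_all hS
  obtain ⟨t₀, x₀, h₀⟩ := hne
  have ht₀ := (h ℝ t₀).2 ⟨x₀, h₀⟩
  have hlow : {q ∈ S' | q.1 < 0}.Nonempty := by
    by_contra hemp
    have hall : ∀ q ∈ S', 0 ≤ q.1 := fun q hq => not_lt.1 fun hlt => hemp ⟨q, hq, hlt⟩
    obtain ⟨x, hx⟩ := (h ℝ (min t₀ (-1))).1 fun q hq =>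
      (mul_le_mul_of_nonneg_left (min_le_left _ _) (by exact_mod_cast hall q hq)).trans (ht₀ q hq)
    have := hbdd _ x hx
    have := min_le_right t₀ (-1)
    linarith
  obtain ⟨q₀, ⟨hq₀, hneg₀⟩, hmax⟩ :=
    Set.exists_max_image _ (fun q : ℚ × ℚ => q.2 / q.1) (hS'.sep _) hlow
  have hmin : ∀ (t : ℝ) (x : Fin n → ℝ), (∀ q ∈ S, q.Holds t x) → ((q₀.2 / q₀.1 : ℚ) : ℝ) ≤ t := by
    intro t x hx
    have := (h ℝ t).2 ⟨x, hx⟩ q₀ hq₀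
    push_cast
    rw [div_le_iff_of_neg (by exact_mod_cast hneg₀)]
    linarith
  obtain ⟨y, hy⟩ := (h ℚ (q₀.2 / q₀.1)).1 fun q hq => by
    simp only [Rat.cast_id]
    rcases lt_or_ge q.1 0 with hneg | hnn
    · have := hmax q ⟨hq, hneg⟩
      rw [div_le_iff_of_neg hneg] at this
      linarith
    · have h1 := ht₀ q hq
      have h2 := mul_le_mul_of_nonneg_left (hmin t₀ x₀ h₀)
        (show (0 : ℝ) ≤ (q.1 : ℝ) by exact_mod_cast hnn)
      exact_mod_cast h2.trans h1
  exact ⟨_, y, hy, hmin⟩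

/-- A function of `(t, x)` that is affine with rational coefficients. -/
def RatAffine {ι : Type} [Fintype ι] (f : ℝ → (ι → ℝ) → ℝ) : Prop :=
  ∃ (a : ι → ℚ) (d c : ℚ), ∀ t x, f t x = ∑ i, (a i : ℝ) * x i + (d : ℝ) * t + (c : ℝ)

/-- A set of points `(t, x)` cut out by finitely many rational linear inequalities. -/
def RatPolyhedral {ι : Type} [Fintype ι] (P : ℝ → (ι → ℝ) → Prop) : Prop :=
  ∃ S : Set (RatIneq ι), S.Finite ∧ ∀ t x, P t x ↔ ∀ q ∈ S, q.Holds t x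

section RatPolyhedral

variable {ι : Type} [Fintype ι]

lemma RatAffine.const (c : ℚ) : RatAffine (fun _ (_ : ι → ℝ) => (c : ℝ)) :=
  ⟨0, 0, c, by simp⟩

lemma RatAffine.param : RatAffine (fun t (_ : ι → ℝ) => t) :=
  ⟨0, 1, 0, by simp⟩

lemma RatAffine.coord (i : ι) : RatAffine (fun _ (x : ι → ℝ) => x i) := by
  classical
  exact ⟨Pi.single i 1, 0, 0, fun t x => by
    simp [Pi.single_apply, apply_ite (Rat.cast : ℚ → ℝ)]⟩

lemma RatAffine.add {f g : ℝ → (ι → ℝ) → ℝ} (hf : RatAffine f) (hg : RatAffine g) :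
    RatAffine (fun t x => f t x + g t x) := by
  obtain ⟨a, d, c, h⟩ := hf
  obtain ⟨a', d', c', h'⟩ := hg
  refine ⟨a + a', d + d', c + c', fun t x => ?_⟩
  simp only [h, h', Pi.add_apply]
  push_cast
  simp only [add_mul, Finset.sum_add_distrib]
  ring

lemma RatAffine.sum {κ : Type} (s : Finset κ) {f : κ → ℝ → (ι → ℝ) → ℝ}
    (hf : ∀ k, RatAffine (f k)) : RatAffine (fun t x => ∑ k ∈ s, f k t x) := by
  classical
  induction s using Finset.induction_on with
  | empty => simpa using RatAffine.const (ι := ι) 0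
  | insert k s hk ih =>
    simp only [Finset.sum_insert hk]
    exact (hf k).add ih

lemma RatAffine.le {f g : ℝ → (ι → ℝ) → ℝ} (hf : RatAffine f) (hg : RatAffine g) :
    RatPolyhedral (fun t x => f t x ≤ g t x) := by
  obtain ⟨a, d, c, h⟩ := hf
  obtain ⟨a', d', c', h'⟩ := hg
  refine ⟨{⟨a - a', d - d', c' - c⟩}, Set.finite_singleton _, fun t x => ?_⟩
  simp only [Set.mem_singleton_iff, forall_eq, RatIneq.Holds, h, h', Pi.sub_apply]
  push_cast
  simp only [sub_mul, Finset.sum_sub_distrib]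
  constructor <;> intro h <;> linarith

lemma RatPolyhedral.ball {κ : Type} {s : Set κ} (hs : s.Finite) {P : κ → ℝ → (ι → ℝ) → Prop}
    (hP : ∀ k ∈ s, RatPolyhedral (P k)) : RatPolyhedral (fun t x => ∀ k ∈ s, P k t x) := by
  have hP' : ∀ k : s, RatPolyhedral (P k) := fun k => hP k k.2
  choose S hS h using hP'
  have := hs.to_subtype
  refine ⟨⋃ k, S k, Set.finite_iUnion hS, fun t x => ?_⟩
  simp only [Set.mem_iUnion, forall_exists_index]
  constructor
  · intro hall q k hq
    exact (h k t x).1 (hall k k.2) q hq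
  · intro hall k hk
    exact (h ⟨k, hk⟩ t x).2 fun q hq => hall q _ hq

lemma RatPolyhedral.all {κ : Type} [Finite κ] {P : κ → ℝ → (ι → ℝ) → Prop}
    (hP : ∀ k, RatPolyhedral (P k)) : RatPolyhedral (fun t x => ∀ k, P k t x) := by
  simpa using RatPolyhedral.ball Set.finite_univ fun k _ => hP k

lemma RatPolyhedral.imp {A : Prop} {P : ℝ → (ι → ℝ) → Prop} (hP : A → RatPolyhedral P) :
    RatPolyhedral (fun t x => A → P t x) := by
  by_cases hA : A
  · simpa [hA] using hP hA
  · exact ⟨∅, Set.finite_empty, by simp [hA]⟩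

lemma RatPolyhedral.prop (A : Prop) : RatPolyhedral (fun _ (_ : ι → ℝ) => A) := by
  by_cases hA : A
  · exact ⟨∅, Set.finite_empty, by simp [hA]⟩
  · exact ⟨{⟨0, 0, -1⟩}, Set.finite_singleton _, fun t x => by simp [hA, RatIneq.Holds]⟩

lemma RatPolyhedral.and {P Q : ℝ → (ι → ℝ) → Prop} (hP : RatPolyhedral P) (hQ : RatPolyhedral Q) :
    RatPolyhedral (fun t x => P t x ∧ Q t x) := by
  obtain ⟨S, hS, h⟩ := hP
  obtain ⟨S', hS', h'⟩ := hQ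
  refine ⟨S ∪ S', hS.union hS', fun t x => ?_⟩
  simp only [h, h', Set.mem_union, or_imp, forall_and]

lemma RatAffine.eq {f g : ℝ → (ι → ℝ) → ℝ} (hf : RatAffine f) (hg : RatAffine g) :
    RatPolyhedral (fun t x => f t x = g t x) := by
  simpa only [le_antisymm_iff] using (hf.le hg).and (hg.le hf)

/-- A rational linear program that is feasible and bounded below has a rational optimum. -/
theorem RatPolyhedral.exists_rat_min {P : ℝ → (ι → ℝ) → Prop} (hP : RatPolyhedral P)
    (hne : ∃ t x, P t x) (hbdd : ∀ t x, P t x → 0 ≤ t) :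
    ∃ (s : ℚ) (y : ι → ℚ), P s (fun i => (y i : ℝ)) ∧ ∀ t x, P t x → (s : ℝ) ≤ t := by
  obtain ⟨S, hS, h⟩ := hP
  let e := Fintype.equivFin ι
  let g : RatIneq ι → RatIneq (Fin (Fintype.card ι)) := fun q => ⟨q.coeff ∘ e.symm, q.slope, q.bound⟩
  have hg : ∀ q t (x : Fin (Fintype.card ι) → ℝ), (g q).Holds t x ↔ q.Holds t (x ∘ e) := by
    intro q t x
    simp only [RatIneq.Holds, g]
    rw [← Equiv.sum_comp e]
    simp
  have hiff : ∀ t (x : Fin (Fintype.card ι) → ℝ),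
      (∀ q ∈ g '' S, q.Holds t x) ↔ P t (x ∘ e) := by
    intro t x
    simp only [Set.forall_mem_image, hg, h]
  have hback : ∀ x : ι → ℝ, (x ∘ e.symm) ∘ e = x := fun x => by ext; simp
  obtain ⟨s, y, hy, hmin⟩ := RatIneq.exists_rat_min_fin (hS.image g)
    (by
      obtain ⟨t, x, hx⟩ := hne
      exact ⟨t, x ∘ e.symm, (hiff _ _).2 (by rwa [hback])⟩)
    (fun t x hx => hbdd _ _ ((hiff t x).1 hx))
  refine ⟨s, y ∘ e, ?_, fun t x hx => hmin t (x ∘ e.symm) ((hiff _ _).2 (by rwa [hback]))⟩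
  refine (hiff s fun i => (y i : ℝ)).1 fun q hq => ?_
  have := hy q hq
  simp only [RatIneq.Holds, Rat.cast_id] at this ⊢
  exact_mod_cast this

end RatPolyhedral

/-! ### Schedules: pebblings with macro moves -/

/-- A macro move: for `o = some i`, node `i`, all of whose children have pebble value 1, may change
arbitrarily; black values of all other nodes may decrease and their white values may increase. -/
def MacroMove {V : Type} (child : V → V → Prop) (o : Option V) (C C' : FracConfig V) : Prop :=
  (∀ i, o = some i → ∀ u, child u i → C.b u + C.w u = 1) ∧
    ∀ j, o ≠ some j → C'.b j ≤ C.b j ∧ C.w j ≤ C'.w j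

/-- A pebbling by macro moves of length `T` with labels `lab`, using at most `p` pebbles, in which
the root has black value 1 at time `h`. -/
structure IsSchedule {V : Type} [Fintype V] (child : V → V → Prop) (root : V) (p : ℝ) (T h : ℕ)
    (lab : ℕ → Option V) (C : ℕ → FracConfig V) : Prop where
  valid : ∀ t ≤ T, (C t).Valid
  cost_le : ∀ t ≤ T, ∑ v, ((C t).b v + (C t).w v) ≤ p
  start : ∀ v, (C 0).b v = 0 ∧ (C 0).w v = 0
  finish : ∀ v, (C T).b v = 0 ∧ (C T).w v = 0
  move : ∀ t < T, MacroMove child (lab t) (C t) (C (t + 1))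
  hit_le : h ≤ T
  hit : (C h).b root = 1

lemma isSchedule_iff {V : Type} [Fintype V] {child : V → V → Prop} {root : V} {p : ℝ} {T h : ℕ}
    {lab : ℕ → Option V} {C : ℕ → FracConfig V} :
    IsSchedule child root p T h lab C ↔
      (∀ t ≤ T, (C t).Valid) ∧ (∀ t ≤ T, ∑ v, ((C t).b v + (C t).w v) ≤ p) ∧
        (∀ v, (C 0).b v = 0 ∧ (C 0).w v = 0) ∧ (∀ v, (C T).b v = 0 ∧ (C T).w v = 0) ∧
        (∀ t < T, MacroMove child (lab t) (C t) (C (t + 1))) ∧ h ≤ T ∧ (C h).b root = 1 :=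
  ⟨fun ⟨h1, h2, h3, h4, h5, h6, h7⟩ => ⟨h1, h2, h3, h4, h5, h6, h7⟩,
    fun ⟨h1, h2, h3, h4, h5, h6, h7⟩ => ⟨h1, h2, h3, h4, h5, h6, h7⟩⟩

section Pebbling

variable {V : Type} {child : V → V → Prop}

lemma FracMove.exists_macroMove {C C' : FracConfig V} (hm : FracMove child C C') :
    ∃ o, MacroMove child o C C' := by
  rcases hm with ⟨i, hi, hb, hw⟩ | ⟨i, hi, hw, hb⟩ | ⟨i, hfull, -, -, hch, hoth⟩
  · refine ⟨none, by simp, fun j _ => ⟨?_, by rw [hw]⟩⟩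
    by_cases hj : j = i
    · rwa [hj]
    · exact (hb j hj).le
  · refine ⟨none, by simp, fun j _ => ⟨by rw [hb], ?_⟩⟩
    by_cases hj : j = i
    · rwa [hj]
    · exact (hw j hj).ge
  · refine ⟨some i, fun i' h => by cases h; exact hfull, fun j hj => ?_⟩
    have hj : j ≠ i := fun h => hj (by rw [h])
    by_cases hc : child j i
    · exact ⟨(hch j hc).1, (hch j hc).2.ge⟩
    · exact ⟨(hoth j hj hc).1.le, (hoth j hj hc).2.ge⟩

lemma MacroMove.trans_none {o : Option V} {C C₁ C₂ : FracConfig V}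
    (h : MacroMove child o C C₁) (h' : MacroMove child none C₁ C₂) : MacroMove child o C C₂ :=
  ⟨h.1, fun j hj => ⟨(h'.2 j (by simp)).1.trans (h.2 j hj).1,
    (h.2 j hj).2.trans (h'.2 j (by simp)).2⟩⟩

variable [Fintype V] {root : V}

lemma FracPebbling.exists_isSchedule (P : FracPebbling V child root) :
    ∃ (h : ℕ) (lab : ℕ → Option V), IsSchedule child root P.cost P.T h lab P.cfg := by
  obtain ⟨h, hle, hit⟩ := P.hits_root
  choose! lab hlab using fun t (ht : t < P.T) => (P.move t ht).exists_macroMove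
  refine ⟨h, lab, P.valid, fun t ht => ?_, fun v => ⟨P.start_b v, P.start_w v⟩,
    fun v => ⟨P.finish_b v, P.finish_w v⟩, hlab, hle, hit⟩
  exact Finset.le_sup' (fun t => ∑ v, ((P.cfg t).b v + (P.cfg t).w v))
    (Finset.mem_range.2 (Nat.lt_succ_of_le ht))

/-- Some schedule exists: fill the graph with white pebbles, turn them black one by one, and remove
them. -/
lemma exists_isSchedule (child : V → V → Prop) (root : V) :
    ∃ p T h lab C, IsSchedule child root p T h lab C := by
  let e := Fintype.equivFin V
  let n := Fintype.card V
  let C : ℕ → FracConfig V := fun t =>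
    ⟨fun v => if t = 0 ∨ n + 1 < t then 0 else if e v + 1 < t then 1 else 0,
      fun v => if t = 0 ∨ n + 1 < t then 0 else if e v + 1 < t then 0 else 1⟩
  let lab : ℕ → Option V := fun t =>
    if ht : t - 1 < n ∧ 0 < t then some (e.symm ⟨t - 1, ht.1⟩) else none
  have hvalid : ∀ t, (C t).Valid := by
    intro t v
    simp only [C]
    split_ifs <;> norm_num
  refine ⟨n, n + 2, n + 1, lab, C, fun t _ => hvalid t, fun t _ => ?_, by simp [C], by simp [C],
    fun t ht => ⟨fun i hi u _ => ?_, fun j hj => ?_⟩, by omega, ?_⟩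
  · calc ∑ v, ((C t).b v + (C t).w v) ≤ ∑ _v : V, (1 : ℝ) :=
        Finset.sum_le_sum fun v _ => (hvalid t v).2.2
      _ = n := by simp [n]
  · have : t - 1 < n ∧ 0 < t := by
      by_contra hcon
      simp [lab, hcon] at hi
    have h0 : ¬ (t = 0 ∨ n + 1 < t) := by omega
    simp only [C, h0, if_false]
    split_ifs <;> norm_num
  · have hlt := (e j).2
    have hne : (e j : ℕ) + 1 ≠ t := by
      intro heq
      apply hj
      have : t - 1 < n ∧ 0 < t := by omega
      simp only [lab, this, and_self, dif_pos]
      congr 1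
      rw [Equiv.symm_apply_eq]
      ext
      simp only
      omega
    simp only [C]
    have : n = Fintype.card V := rfl
    split_ifs <;> first | (norm_num; done) | grind
  · have hlt := (e root).2
    have : n = Fintype.card V := rfl
    simp only [C]
    split_ifs <;> first | (norm_num; done) | grind

/-! ### Shortening schedules -/

/-- Time `t` lies after the last element of `A` before `m` and at most at the first element of `A`
after `m`. -/
def Near (A : Set ℕ) (m t : ℕ) : Prop :=
  (∀ s ∈ A, t ≤ s → m ≤ s) ∧ ∀ s ∈ A, s < t → s ≤ m

lemma IsSchedule.exists_update_none {p : ℝ} {T h : ℕ} {lab : ℕ → Option V} {C : ℕ → FracConfig V}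
    (hC : IsSchedule child root p T h lab C) {m : ℕ} {v : V}
    (hm : lab m = some v) (hh : v = root → ¬ Near {t | t < T ∧ lab t = some v} m h)
    (hlab : ∀ t < T, ∀ u, lab t = some u → child v u → ¬ Near {t | t < T ∧ lab t = some v} m t) :
    ∃ C', IsSchedule child root p T h (Function.update lab m none) C' := by
  classical
  let A : Set ℕ := {t | t < T ∧ lab t = some v}
  let C' : ℕ → FracConfig V := fun t =>
    ⟨fun j => if j = v ∧ Near A m t then 0 else (C t).b j,
      fun j => if j = v ∧ Near A m t then 0 else (C t).w j⟩
  have hle : ∀ t ≤ T, ∀ j, (C' t).b j ≤ (C t).b j ∧ (C' t).w j ≤ (C t).w j := by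
    intro t ht j
    have := hC.valid t ht j
    simp only [C']
    split_ifs
    · exact ⟨this.1, this.2.1⟩
    · simp
  refine ⟨C', fun t ht j => ?_, fun t ht => ?_, fun j => ?_, fun j => ?_, fun t ht => ⟨?_, ?_⟩,
    hC.hit_le, ?_⟩
  · have := hC.valid t ht j
    simp only [C']
    split_ifs
    · norm_num
    · exact this
  · exact (Finset.sum_le_sum fun j _ => add_le_add (hle t ht j).1 (hle t ht j).2).trans
      (hC.cost_le t ht)
  · simp [C', hC.start j]
  · simp [C', hC.finish j]
  · intro i hi u hu
    have hi' : lab t = some i := by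
      by_cases htm : t = m
      · simp [htm] at hi
      · simpa [Function.update_of_ne htm] using hi
    have hnot : ¬ (u = v ∧ Near A m t) := by
      rintro ⟨rfl, hn⟩
      exact hlab t ht i hi' hu hn
    simpa only [C', hnot, if_false] using (hC.move t ht).1 i hi' u hu
  · intro j hj
    by_cases hjv : j = v
    · subst hjv
      by_cases htm : t = m
      · subst htm
        have h1 : Near A t t := ⟨fun s _ h => h, fun s _ h => h.le⟩
        have h2 : Near A t (t + 1) := ⟨fun s _ h => by omega, fun s _ h => by omega⟩
        simp [C', h1, h2]
      · rw [Function.update_of_ne htm] at hj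
        have hA : t ∉ A := fun h => hj h.2
        have hiff : Near A m (t + 1) ↔ Near A m t := by
          have hs : ∀ s ∈ A, s ≠ t := fun s hs h => hA (h ▸ hs)
          constructor
          · rintro ⟨h1, h2⟩
            exact ⟨fun s hsA h => h1 s hsA (by have := hs s hsA; omega),
              fun s hsA h => h2 s hsA (by omega)⟩
          · rintro ⟨h1, h2⟩
            exact ⟨fun s hsA h => h1 s hsA (by omega),
              fun s hsA h => h2 s hsA (by have := hs s hsA; omega)⟩
        simp only [C', hiff]
        split_ifs
        · simp
        · exact (hC.move t ht).2 j hj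
    · have hj' : lab t ≠ some j := by
        by_cases htm : t = m
        · rw [htm, hm]
          exact fun h => hjv (Option.some.inj h).symm
        · simpa [Function.update_of_ne htm] using hj
      simpa [C', hjv] using (hC.move t ht).2 j hj'
  · have hnot : ¬ (root = v ∧ Near A m h) := by
      rintro ⟨rfl, hn⟩
      exact hh rfl hn
    simpa only [C', hnot, if_false] using hC.hit

/-- A null move between two configurations the first of which is not needed can be skipped. -/
lemma IsSchedule.exists_skip {p : ℝ} {T h : ℕ} {lab : ℕ → Option V} {C : ℕ → FracConfig V}
    (hC : IsSchedule child root p (T + 1) h lab C) {k : ℕ} (hk : k < T) (hlab : lab (k + 1) = none)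
    (hkh : k + 1 ≠ h) :
    ∃ h', IsSchedule child root p T h' (fun t => if t ≤ k then lab t else lab (t + 1))
      (fun t => if t ≤ k then C t else C (t + 1)) := by
  refine ⟨if h ≤ k then h else h - 1, fun t ht => ?_, fun t ht => ?_, by simpa using hC.start, ?_,
    fun t ht => ?_, ?_, ?_⟩
  · split_ifs
    · exact hC.valid t (by omega)
    · exact hC.valid (t + 1) (by omega)
  · split_ifs
    · exact hC.cost_le t (by omega)
    · exact hC.cost_le (t + 1) (by omega)
  · simpa [not_le.2 hk] using hC.finish
  · rcases lt_trichotomy t k with hlt | rfl | hlt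
    · simpa [hlt.le, Nat.succ_le_of_lt hlt] using hC.move t (by omega)
    · have h2 := hC.move (t + 1) (by omega)
      rw [hlab] at h2
      simpa using (hC.move t (by omega)).trans_none h2
    · have h1 : ¬ t ≤ k := by omega
      have h2 : ¬ t + 1 ≤ k := by omega
      simpa only [h1, h2, if_false] using hC.move (t + 1) (by omega)
  · have := hC.hit_le
    split_ifs <;> omega
  · have := hC.hit
    by_cases hle : h ≤ k
    · simpa [hle] using this
    · have h1 : ¬ h - 1 ≤ k := by omega
      have h2 : h - 1 + 1 = h := by omega
      simpa only [hle, h1, if_false, h2] using this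

/-- Each time is near at most two elements of `A`. -/
lemma card_le_of_near {A U : Finset ℕ} (hU : ∀ m ∈ A, ∃ t ∈ U, Near A m t) :
    A.card ≤ 2 * U.card := by
  classical
  choose! f hfU hf using hU
  refine Finset.card_le_mul_card_image_of_maps_to hfU 2 fun t _ => ?_
  have hcov : A.filter (fun m => f m = t) ⊆
      A.filter (fun m => f m = t ∧ t ≤ m) ∪ A.filter (fun m => f m = t ∧ m < t) := by
    intro m
    simp only [Finset.mem_filter, Finset.mem_union]
    have := le_or_gt t m
    tauto
  have h1 : (A.filter (fun m => f m = t ∧ t ≤ m)).card ≤ 1 := by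
    refine Finset.card_le_one.2 fun m hm m' hm' => ?_
    simp only [Finset.mem_filter] at hm hm'
    have h := (hf m hm.1).1 m' hm'.1
    have h' := (hf m' hm'.1).1 m hm.1
    rw [hm.2.1] at h
    rw [hm'.2.1] at h'
    exact le_antisymm (h hm'.2.2) (h' hm.2.2)
  have h2 : (A.filter (fun m => f m = t ∧ m < t)).card ≤ 1 := by
    refine Finset.card_le_one.2 fun m hm m' hm' => ?_
    simp only [Finset.mem_filter] at hm hm'
    have h := (hf m hm.1).2 m' hm'.1
    have h' := (hf m' hm'.1).2 m hm.1
    rw [hm.2.1] at h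
    rw [hm'.2.1] at h'
    exact le_antisymm (h' hm.2.2) (h hm'.2.2)
  calc _ ≤ _ := Finset.card_le_card hcov
    _ ≤ _ := Finset.card_union_le _ _
    _ ≤ 2 := by omega

open Classical in
/-- In a finite DAG, functions bounded at each node by twice one plus the sum over the parents are
uniformly bounded. -/
lemma exists_bound_of_acyclic (hacyclic : ∀ v, ¬ Relation.TransGen child v v) :
    ∃ B : V → ℕ, ∀ f : V → ℕ,
      (∀ v, f v ≤ 2 * (∑ u ∈ Finset.univ.filter (fun u => child v u), f u + 1)) →
      ∀ v, f v ≤ B v := by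
  have hwf : WellFounded (fun u v => child v u) := by
    have htrans : IsTrans V (fun u v => Relation.TransGen child v u) :=
      ⟨fun _ _ _ h h' => h'.trans h⟩
    have hirr : Std.Irrefl (fun u v => Relation.TransGen child v u) := ⟨hacyclic⟩
    have := Finite.wellFounded_of_trans_of_irrefl (fun u v => Relation.TransGen child v u)
    exact Subrelation.wf (fun h => Relation.TransGen.single h) this
  have hex : ∀ v, ∃ n : ℕ, ∀ f : V → ℕ,
      (∀ v, f v ≤ 2 * (∑ u ∈ Finset.univ.filter (fun u => child v u), f u + 1)) → f v ≤ n := by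
    intro v
    induction v using hwf.induction with
    | _ v ih =>
      choose! n hn using ih
      refine ⟨2 * (∑ u ∈ Finset.univ.filter (fun u => child v u), n u + 1), fun f hf => ?_⟩
      refine (hf v).trans ?_
      gcongr with u hu
      exact hn u (by simpa using hu) f hf
  choose B hB using hex
  exact ⟨B, fun f hf v => hB v f hf⟩

/-- Schedules can be shortened to a length depending only on the graph. -/
lemma exists_bounded_schedule (hacyclic : ∀ v, ¬ Relation.TransGen child v v) :
    ∃ N : ℕ, ∀ {p : ℝ} {T h : ℕ} {lab : ℕ → Option V} {C : ℕ → FracConfig V},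
      IsSchedule child root p T h lab C →
      ∃ T' h' lab' C', T' ≤ N ∧ IsSchedule child root p T' h' lab' C' := by
  classical
  obtain ⟨B, hB⟩ := exists_bound_of_acyclic hacyclic
  refine ⟨∑ v, B v + 2, fun {p T h lab C} hC => ?_⟩
  obtain ⟨n, hn⟩ : ∃ n, n = T + ((Finset.range T).filter (fun t => lab t ≠ none)).card := ⟨_, rfl⟩
  induction n using Nat.strong_induction_on generalizing T h lab C with
  | _ n ih =>
  by_contra! hlong
  let A : V → Finset ℕ := fun v => (Finset.range T).filter (fun t => lab t = some v)
  have hAset : ∀ v, (A v : Set ℕ) = {t | t < T ∧ lab t = some v} := fun v => by ext; simp [A]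
  have hnear : ∀ v, ∀ m ∈ A v,
      ∃ t ∈ (Finset.univ.filter (fun u => child v u)).biUnion A ∪ {h}, Near (A v) m t := by
    intro v m hm
    by_contra! hno
    simp only [A, Finset.mem_filter, Finset.mem_range] at hm
    simp only [hAset] at hno
    obtain ⟨C', hC'⟩ := hC.exists_update_none hm.2 (fun _ => hno h (by simp))
      (fun t ht u hu hvu => hno t (Finset.mem_union_left _ (Finset.mem_biUnion.2
        ⟨u, by simpa using hvu, by simp [A, ht, hu]⟩)))
    obtain ⟨T', h', lab', C'', hT', hS⟩ := ih _ (by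
      rw [hn]
      refine Nat.add_lt_add_left (Finset.card_lt_card ?_) T
      refine (Finset.ssubset_iff_of_subset fun t => ?_).2 ⟨m, by simp [hm], by simp⟩
      simp only [Finset.mem_filter]
      rintro ⟨h1, h2⟩
      refine ⟨h1, fun h3 => h2 ?_⟩
      by_cases htm : t = m
      · simp [htm]
      · rwa [Function.update_of_ne htm]) hC' rfl
    exact hlong T' h' lab' C'' hT' hS
  have hA := hB (fun v => (A v).card) fun v => by
    refine (card_le_of_near (hnear v)).trans ?_
    gcongr
    refine (Finset.card_union_le _ _).trans ?_
    simpa using Finset.card_biUnion_le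
  have hcov : Finset.range T ⊆ Finset.univ.biUnion A ∪ {0, h} := by
    intro t ht
    rw [Finset.mem_range] at ht
    by_contra hno
    simp only [Finset.mem_union, Finset.mem_biUnion, Finset.mem_univ, true_and, A,
      Finset.mem_filter, Finset.mem_range, ht, Finset.mem_insert, Finset.mem_singleton, not_or,
      not_exists] at hno
    have hnone : lab t = none := Option.eq_none_iff_forall_ne_some.2 fun v h => hno.1 v h
    obtain ⟨k, rfl⟩ := Nat.exists_eq_succ_of_ne_zero hno.2.1
    obtain ⟨T, rfl⟩ : ∃ S, T = S + 1 := ⟨T - 1, by omega⟩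
    obtain ⟨h', hC'⟩ := hC.exists_skip (Nat.lt_of_succ_lt_succ ht) hnone hno.2.2
    obtain ⟨T', h'', lab', C'', hT', hS⟩ := ih _ (by
      rw [hn]
      refine Nat.add_lt_add_of_lt_of_le (Nat.lt_succ_self T) ?_
      refine Finset.card_le_card_of_injOn (fun t => if t ≤ k then t else t + 1) ?_ ?_
      · intro t ht
        simp only [Finset.coe_filter, Finset.mem_range, Set.mem_ofPred_eq] at ht ⊢
        split_ifs at ht ⊢
        · exact ⟨by omega, ht.2⟩
        · exact ⟨by omega, ht.2⟩
      · intro t _ t' _ heq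
        dsimp only at heq
        split_ifs at heq <;> omega) hC' rfl
    exact hlong T' h'' lab' C'' hT' hS
  have hcard := Finset.card_le_card hcov
  rw [Finset.card_range] at hcard
  refine hlong T h lab C ?_ hC
  calc T ≤ _ := hcard
    _ ≤ (Finset.univ.biUnion A).card + 2 :=
      (Finset.card_union_le _ _).trans (Nat.add_le_add_left Finset.card_le_two _)
    _ ≤ ∑ v, B v + 2 :=
      Nat.add_le_add_right (Finset.card_biUnion_le.trans (Finset.sum_le_sum fun v _ => hA v)) 2

/-- Schedules can be prolonged by null moves. -/
lemma IsSchedule.pad {p : ℝ} {T h N : ℕ} {lab : ℕ → Option V} {C : ℕ → FracConfig V}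
    (hC : IsSchedule child root p T h lab C) (hT : T ≤ N) :
    IsSchedule child root p N h (fun t => if t < T then lab t else none)
      (fun t => C (min t T)) := by
  refine ⟨fun t _ => hC.valid _ (min_le_right _ _), fun t _ => hC.cost_le _ (min_le_right _ _),
    by simpa using hC.start, by simpa [hT] using hC.finish, fun t _ => ?_, hC.hit_le.trans hT,
    by simpa [hC.hit_le] using hC.hit⟩
  by_cases ht : t < T
  · simpa [ht, ht.le, Nat.succ_le_of_lt ht] using hC.move t ht
  · have h1 : T ≤ t := not_lt.1 ht
    simp [ht, h1, h1.trans (Nat.le_succ t), MacroMove]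

/-! ### Rational optimal schedules -/

/-- The configurations encoded by the variables of the linear program for schedules of
length `N`. -/
def decodeConfig {N : ℕ} (x : Fin (N + 1) × V × Bool → ℝ) (t : ℕ) : FracConfig V :=
  ⟨fun v => x (Fin.ofNat (N + 1) t, v, true), fun v => x (Fin.ofNat (N + 1) t, v, false)⟩

lemma ratPolyhedral_isSchedule (root : V) (N h : ℕ) (lab : ℕ → Option V) :
    RatPolyhedral (fun p (x : Fin (N + 1) × V × Bool → ℝ) =>
      IsSchedule child root p N h lab (decodeConfig x)) := by
  have hb : ∀ t v, RatAffine (fun _ (x : Fin (N + 1) × V × Bool → ℝ) =>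
      (decodeConfig x t).b v) := fun t v => RatAffine.coord _
  have hw : ∀ t v, RatAffine (fun _ (x : Fin (N + 1) × V × Bool → ℝ) =>
      (decodeConfig x t).w v) := fun t v => RatAffine.coord _
  have h0 : RatAffine (fun _ (_ : Fin (N + 1) × V × Bool → ℝ) => (0 : ℝ)) := by
    simpa using RatAffine.const (ι := Fin (N + 1) × V × Bool) 0
  have h1 : RatAffine (fun _ (_ : Fin (N + 1) × V × Bool → ℝ) => (1 : ℝ)) := by
    simpa using RatAffine.const (ι := Fin (N + 1) × V × Bool) 1
  simp only [isSchedule_iff, FracConfig.Valid, MacroMove]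
  refine .and (.ball (Set.finite_Iic N) fun t _ => .all fun v => ?_)
    (.and (.ball (Set.finite_Iic N) fun t _ => ?_) (.and (.all fun v => ?_)
    (.and (.all fun v => ?_) (.and (.ball (Set.finite_Iio N) fun t _ => .and ?_ ?_)
    (.and ?_ ?_)))))
  · exact (h0.le (hb t v)).and ((h0.le (hw t v)).and (((hb t v).add (hw t v)).le h1))
  · exact (RatAffine.sum _ fun v => (hb t v).add (hw t v)).le RatAffine.param
  · exact ((hb 0 v).eq h0).and ((hw 0 v).eq h0)
  · exact ((hb N v).eq h0).and ((hw N v).eq h0)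
  · exact .all fun i => .imp fun _ => .all fun u => .imp fun _ => ((hb t u).add (hw t u)).eq h1
  · exact .all fun j => .imp fun _ =>
      ((hb (t + 1) j).le (hb t j)).and ((hw t j).le (hw (t + 1) j))
  · exact .prop _
  · exact (hb h root).eq h1

/-- All values of the configuration are rational. -/
def FracConfig.IsRat (C : FracConfig V) : Prop :=
  ∀ v, (∃ q : ℚ, C.b v = (q : ℝ)) ∧ ∃ q : ℚ, C.w v = (q : ℝ)

/-- There is a schedule with rational values using at most as many pebbles as any other. -/
lemma exists_rat_optimal_schedule (hacyclic : ∀ v, ¬ Relation.TransGen child v v) (root : V) :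
    ∃ p N h lab C, IsSchedule child root p N h lab C ∧ (∀ t, (C t).IsRat) ∧
      ∀ {p' : ℝ} {T h' : ℕ} {lab' : ℕ → Option V} {C' : ℕ → FracConfig V},
        IsSchedule child root p' T h' lab' C' → p ≤ p' := by
  obtain ⟨N, hN⟩ := exists_bounded_schedule (root := root) hacyclic
  let extend : (Fin N → Option V) → ℕ → Option V := fun l t => if ht : t < N then l ⟨t, ht⟩ else none
  let P : (Fin N → Option V) × Fin (N + 1) → ℝ → (Fin (N + 1) × V × Bool → ℝ) → Prop :=
    fun d p x => IsSchedule child root p N d.2 (extend d.1) (decodeConfig x)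
  have hP : ∀ {p T h lab C}, IsSchedule child root p T h lab C → ∃ d x, P d p x := by
    intro p T h lab C hC
    obtain ⟨T', h', lab', C', hT', hC'⟩ := hN hC
    have hC := hC'.pad hT'
    obtain ⟨L, hL⟩ : ∃ L, L = fun t => if t < T' then lab' t else none := ⟨_, rfl⟩
    obtain ⟨D, hD⟩ : ∃ D, D = fun t => C' (min t T') := ⟨_, rfl⟩
    rw [← hL, ← hD] at hC
    let x : Fin (N + 1) × V × Bool → ℝ :=
      fun i => if i.2.2 then (D i.1).b i.2.1 else (D i.1).w i.2.1
    have hx : ∀ t ≤ N, decodeConfig x t = D t := by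
      intro t ht
      simp [decodeConfig, x, Nat.mod_eq_of_lt (Nat.lt_succ_of_le ht)]
    refine ⟨⟨fun t => L t, ⟨h', Nat.lt_succ_of_le hC.hit_le⟩⟩, x, ?_⟩
    refine ⟨fun t ht => ?_, fun t ht => ?_, ?_, ?_, fun t ht => ?_, hC.hit_le, ?_⟩
    · rw [hx t ht]
      exact hC.valid t ht
    · rw [hx t ht]
      exact hC.cost_le t ht
    · rw [hx 0 (Nat.zero_le _)]
      exact hC.start
    · rw [hx N le_rfl]
      exact hC.finish
    · rw [hx t ht.le, hx (t + 1) ht]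
      simpa [extend, ht] using hC.move t ht
    · rw [hx _ hC.hit_le]
      exact hC.hit
  have hmin : ∀ d, (∃ p x, P d p x) → ∃ (s : ℚ) (y : Fin (N + 1) × V × Bool → ℚ),
      P d s (fun i => (y i : ℝ)) ∧ ∀ p x, P d p x → (s : ℝ) ≤ p := fun d hd =>
    (ratPolyhedral_isSchedule root N d.2 (extend d.1)).exists_rat_min hd fun p x hx =>
      (Finset.sum_nonneg fun v _ => add_nonneg (hx.valid 0 (Nat.zero_le _) v).1
        (hx.valid 0 (Nat.zero_le _) v).2.1).trans (hx.cost_le 0 (Nat.zero_le _))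
  choose! s y hs using hmin
  obtain ⟨d, hd, hdmin⟩ := Set.exists_min_image {d | ∃ p x, P d p x} s (Set.toFinite _) (by
    obtain ⟨p, T, h, lab, C, hC⟩ := exists_isSchedule child root
    obtain ⟨d, x, hx⟩ := hP hC
    exact ⟨d, p, x, hx⟩)
  refine ⟨s d, N, d.2, extend d.1, _, (hs d hd).1, fun t v => ⟨⟨_, rfl⟩, ⟨_, rfl⟩⟩, fun hC => ?_⟩
  obtain ⟨d', x, hx⟩ := hP hC
  have h1 : (s d : ℝ) ≤ s d' := by exact_mod_cast hdmin d' ⟨_, x, hx⟩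
  exact h1.trans ((hs d' ⟨_, x, hx⟩).2 _ x hx)

/-! ### From macro moves to legal moves -/

/-- A valid rational configuration with at most `p` pebbles. -/
structure FracConfig.IsGood (p : ℝ) (C : FracConfig V) : Prop where
  valid : C.Valid
  cost_le : ∑ v, (C.b v + C.w v) ≤ p
  isRat : C.IsRat

/-- `C'` can be reached from `C` by legal moves through good configurations. -/
def Reaches (child : V → V → Prop) (p : ℝ) : FracConfig V → FracConfig V → Prop :=
  Relation.ReflTransGen (fun C C' => FracMove child C C' ∧ C'.IsGood p)

lemma FracConfig.IsGood.of_le {p : ℝ} {C D : FracConfig V} (hC : C.IsGood p)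
    (hb : ∀ v, 0 ≤ D.b v ∧ D.b v ≤ C.b v) (hw : ∀ v, 0 ≤ D.w v ∧ D.w v ≤ C.w v)
    (hrat : D.IsRat) : D.IsGood p :=
  ⟨fun v => ⟨(hb v).1, (hw v).1, (add_le_add (hb v).2 (hw v).2).trans (hC.valid v).2.2⟩,
    (Finset.sum_le_sum fun v _ => add_le_add (hb v).2 (hw v).2).trans hC.cost_le, hrat⟩

lemma reaches_of_black_le {p : ℝ} {C D : FracConfig V} (hC : C.IsGood p) (hD : D.IsGood p)
    (hb : ∀ v, D.b v ≤ C.b v) (hw : D.w = C.w) : Reaches child p C D := by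
  classical
  have key : ∀ s : Finset V, Reaches child p C ⟨fun v => if v ∈ s then D.b v else C.b v, C.w⟩ := by
    intro s
    induction s using Finset.induction_on with
    | empty =>
      simp only [Finset.notMem_empty, if_false]
      exact .refl
    | insert i s hi ih =>
      refine ih.tail ⟨Or.inl ⟨i, ?_, fun j hj => ?_, rfl⟩, hC.of_le (fun v => ?_)
        (fun v => ⟨(hC.valid v).2.1, le_rfl⟩) fun v => ⟨?_, (hC.isRat v).2⟩⟩
      · simpa [hi] using hb i
      · simp [hj]
      · dsimp only
        split_ifs
        · exact ⟨(hD.valid v).1, hb v⟩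
        · exact ⟨(hC.valid v).1, le_rfl⟩
      · dsimp only
        split_ifs
        · exact (hD.isRat v).1
        · exact (hC.isRat v).1
  have := key Finset.univ
  simpa only [Finset.mem_univ, if_true, ← hw] using this

lemma reaches_of_le_white {p : ℝ} {C D : FracConfig V} (hC : C.IsGood p) (hD : D.IsGood p)
    (hb : D.b = C.b) (hw : ∀ v, C.w v ≤ D.w v) : Reaches child p C D := by
  classical
  have key : ∀ s : Finset V, Reaches child p C ⟨C.b, fun v => if v ∈ s then D.w v else C.w v⟩ := by
    intro s
    induction s using Finset.induction_on with
    | empty =>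
      simp only [Finset.notMem_empty, if_false]
      exact .refl
    | insert i s hi ih =>
      refine ih.tail ⟨Or.inr (Or.inl ⟨i, ?_, fun j hj => ?_, rfl⟩), hD.of_le
        (fun v => ⟨(hC.valid v).1, (congrFun hb v).ge⟩) (fun v => ?_) fun v => ⟨(hC.isRat v).1, ?_⟩⟩
      · simpa [hi] using hw i
      · simp [hj]
      · dsimp only
        split_ifs
        · exact ⟨(hD.valid v).2.1, le_rfl⟩
        · exact ⟨(hC.valid v).2.1, hw v⟩
      · dsimp only
        split_ifs
        · exact (hD.isRat v).2
        · exact (hC.isRat v).2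
  have := key Finset.univ
  simpa only [Finset.mem_univ, if_true, ← hb] using this

lemma MacroMove.reaches (hirr : ∀ v, ¬ child v v) {p : ℝ} {o : Option V} {C C' : FracConfig V}
    (hm : MacroMove child o C C') (hC : C.IsGood p) (hC' : C'.IsGood p) :
    Reaches child p C C' := by
  classical
  cases o with
  | none =>
    have hle : ∀ j, C'.b j ≤ C.b j ∧ C.w j ≤ C'.w j := fun j => hm.2 j (by simp)
    have hD : FracConfig.IsGood p ⟨C'.b, C.w⟩ :=
      hC.of_le (fun v => ⟨(hC'.valid v).1, (hle v).1⟩) (fun v => ⟨(hC.valid v).2.1, le_rfl⟩)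
        fun v => ⟨(hC'.isRat v).1, (hC.isRat v).2⟩
    exact (reaches_of_black_le hC hD (fun v => (hle v).1) rfl).trans
      (reaches_of_le_white hD hC' rfl fun v => (hle v).2)
  | some i =>
    have hle : ∀ j, j ≠ i → C'.b j ≤ C.b j ∧ C.w j ≤ C'.w j := fun j hj =>
      hm.2 j fun h => hj (Option.some.inj h).symm
    let D₁ : FracConfig V := ⟨fun j => if child j i then C.b j else min (C.b j) (C'.b j), C.w⟩
    let D₂ : FracConfig V := ⟨C'.b, fun j => min (C.w j) (C'.w j)⟩
    have hD₁le : ∀ j, D₁.b j ≤ C.b j := fun j => by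
      simp only [D₁]
      split_ifs
      · exact le_rfl
      · exact min_le_left _ _
    have hD₁ : D₁.IsGood p := by
      refine hC.of_le (fun j => ⟨?_, hD₁le j⟩) (fun j => ⟨(hC.valid j).2.1, le_rfl⟩)
        fun j => ⟨?_, (hC.isRat j).2⟩
      · simp only [D₁]
        split_ifs
        · exact (hC.valid j).1
        · exact le_min (hC.valid j).1 (hC'.valid j).1
      · simp only [D₁]
        split_ifs
        · exact (hC.isRat j).1
        · rcases min_choice (C.b j) (C'.b j) with h | h <;> rw [h]
          · exact (hC.isRat j).1
          · exact (hC'.isRat j).1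
    have hD₂ : D₂.IsGood p := by
      refine hC'.of_le (fun j => ⟨(hC'.valid j).1, le_rfl⟩)
        (fun j => ⟨le_min (hC.valid j).2.1 (hC'.valid j).2.1, min_le_right _ _⟩)
        fun j => ⟨(hC'.isRat j).1, ?_⟩
      rcases min_choice (C.w j) (C'.w j) with h | h <;> simp only [D₂, h]
      · exact (hC.isRat j).2
      · exact (hC'.isRat j).2
    have hmove : FracMove child D₁ D₂ := by
      have hne : ∀ u, child u i → u ≠ i := fun u hu h => hirr i (h ▸ hu)
      refine Or.inr (Or.inr ⟨i, fun u hu => ?_, min_le_left _ _, ?_, fun u hu => ⟨?_, ?_⟩,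
        fun j hj hc => ⟨?_, ?_⟩⟩)
      · simpa [D₁, hu] using hm.1 i rfl u hu
      · simp [D₁, D₂, hirr i]
      · simpa [D₁, D₂, hu] using (hle u (hne u hu)).1
      · simpa [D₁, D₂] using (hle u (hne u hu)).2
      · simpa [D₁, D₂, hc] using (hle j hj).1
      · simpa [D₁, D₂] using (hle j hj).2
    exact ((reaches_of_black_le hC hD₁ hD₁le rfl).tail ⟨hmove, hD₂⟩).trans
      (reaches_of_le_white hD₂ hC' rfl fun j => min_le_right _ _)

lemma IsSchedule.reaches (hirr : ∀ v, ¬ child v v) {p : ℝ} {T h : ℕ} {lab : ℕ → Option V}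
    {C : ℕ → FracConfig V} (hC : IsSchedule child root p T h lab C) (hrat : ∀ t, (C t).IsRat)
    {s t : ℕ} (hst : s ≤ t) (ht : t ≤ T) : Reaches child p (C s) (C t) := by
  have hgood : ∀ t ≤ T, (C t).IsGood p := fun t ht => ⟨hC.valid t ht, hC.cost_le t ht, hrat t⟩
  induction t, hst using Nat.le_induction with
  | base => exact .refl
  | succ t hst ih =>
    exact (ih (by omega)).trans
      ((hC.move t ht).reaches hirr (hgood t (by omega)) (hgood (t + 1) ht))

lemma Reaches.exists_seq {p : ℝ} {C D : FracConfig V} (hCD : Reaches child p C D)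
    (hC : C.IsGood p) : ∃ (n : ℕ) (f : ℕ → FracConfig V), f 0 = C ∧ f n = D ∧
      (∀ t ≤ n, (f t).IsGood p) ∧ ∀ t < n, FracMove child (f t) (f (t + 1)) := by
  induction hCD with
  | refl => exact ⟨0, fun _ => C, rfl, rfl, fun _ _ => hC, by simp⟩
  | @tail D E _ hDE ih =>
    obtain ⟨n, f, h0, hn, hgood, hmove⟩ := ih
    refine ⟨n + 1, fun t => if t ≤ n then f t else E, by simpa using h0, by simp, fun t ht => ?_,
      fun t ht => ?_⟩
    · dsimp only
      split_ifs with h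
      · exact hgood t h
      · exact hDE.2
    · rcases Nat.lt_succ_iff_lt_or_eq.1 ht with h | rfl
      · simpa [h.le, Nat.succ_le_of_lt h] using hmove t h
      · simpa [hn] using hDE.1

end Pebbling

/-- For every finite DAG `G` (with a designated root node), there is an
optimal fractional black-white pebbling of `G` all of whose pebble values are rational:
a fractional pebbling in which every value `b(i)` and `w(i)` of every configuration is a
rational number, whose number of pebbles is at most the number of pebbles used by any
fractional pebbling of `G`; in particular `#FRpebbles(G)` is attained by a rational-valued
pebbling. -/
theorem stmt_12 (V : Type) [Fintype V] (child : V → V → Prop)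
    (hacyclic : ∀ v, ¬ Relation.TransGen child v v) (root : V) :
    ∃ P : FracPebbling V child root,
      (∀ t ≤ P.T, ∀ v, (∃ q : ℚ, (P.cfg t).b v = (q : ℝ)) ∧
        (∃ q : ℚ, (P.cfg t).w v = (q : ℝ))) ∧
      ∀ P' : FracPebbling V child root, P.cost ≤ P'.cost := by
  classical
  have hirr : ∀ v, ¬ child v v := fun v h => hacyclic v (.single h)
  obtain ⟨p, N, h, lab, C, hC, hrat, hopt⟩ := exists_rat_optimal_schedule hacyclic root
  have hgood : ∀ t ≤ N, (C t).IsGood p := fun t ht => ⟨hC.valid t ht, hC.cost_le t ht, hrat t⟩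
  obtain ⟨n, f, hf0, hfn, hfgood, hfmove⟩ :=
    (hC.reaches hirr hrat (Nat.zero_le h) hC.hit_le).exists_seq (hgood 0 (Nat.zero_le _))
  obtain ⟨m, g, hg0, hgm, hggood, hgmove⟩ :=
    (hC.reaches hirr hrat hC.hit_le le_rfl).exists_seq (hgood h hC.hit_le)
  let F : ℕ → FracConfig V := fun t => if t ≤ n then f t else g (t - n)
  have hF0 : F 0 = C 0 := by simp [F, hf0]
  have hFn : F n = C h := by simp [F, hfn]
  have hFg : ∀ t, F (n + t) = g t := by
    intro t
    cases t with
    | zero => simp [hFn, hg0]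
    | succ t => simp [F]
  have hFgood : ∀ t ≤ n + m, (F t).IsGood p := by
    intro t ht
    rcases le_total t n with h | h
    · simpa [F, h] using hfgood t h
    · obtain ⟨k, rfl⟩ := Nat.exists_eq_add_of_le h
      rw [hFg]
      exact hggood k (by omega)
  have hFmove : ∀ t < n + m, FracMove child (F t) (F (t + 1)) := by
    intro t ht
    rcases lt_or_ge t n with h | h
    · simpa [F, h.le, Nat.succ_le_of_lt h] using hfmove t h
    · obtain ⟨k, rfl⟩ := Nat.exists_eq_add_of_le h
      rw [add_assoc, hFg, hFg]
      exact hgmove k (by omega)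
  let P : FracPebbling V child root :=
    { T := n + m
      cfg := F
      valid := fun t ht => (hFgood t ht).valid
      start_b := fun v => by rw [hF0]; exact (hC.start v).1
      start_w := fun v => by rw [hF0]; exact (hC.start v).2
      finish_b := fun v => by rw [hFg, hgm]; exact (hC.finish v).1
      finish_w := fun v => by rw [hFg, hgm]; exact (hC.finish v).2
      move := hFmove
      hits_root := ⟨n, Nat.le_add_right _ _, by rw [hFn]; exact hC.hit⟩ }
  refine ⟨P, fun t ht => (hFgood t ht).isRat, fun P' => ?_⟩
  obtain ⟨h', lab', hP'⟩ := P'.exists_isSchedule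
  refine le_trans ?_ (hopt hP')
  exact Finset.sup'_le _ _ fun t ht =>
    (hFgood t (Nat.lt_succ_iff.1 (Finset.mem_range.1 ht))).cost_le
end

section
/- Let h ≥ 2, k ≥ 2 and 1 ≤ π < k. If B is a deterministic k-way branching program solving BT^h_2(k) such that |LeftThrifty(q)| ≤ π and |RightThrifty(q)| ≤ π for every state q of B labeled with an internal node variable, then B has at least k^h / π^{h−2} states. -/
/-! Framework: the tree evaluation problem and deterministic k-way branching programs.

The balanced binary tree of height `h` has nodes numbered heap-style `1, …, 2^h - 1`:
the root is node `1` and the children of node `i` are `2i` and `2i+1`.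
Elements of `[k] = {1,…,k}` are represented by `Fin k` (the element `1 ∈ [k]`
corresponds to `(0 : Fin k)`). -/

/-- Node `i` is a leaf of the height-`h` balanced binary tree. -/
def IsLeafNode (h i : ℕ) : Prop := 2 ^ (h - 1) ≤ i ∧ i < 2 ^ h

/-- Node `i` is an internal node of the height-`h` balanced binary tree. -/
def IsInternalNode (h i : ℕ) : Prop := 1 ≤ i ∧ i < 2 ^ (h - 1)

/-- An input to the height-`h` tree evaluation problem over `[k]`: a binary function on `[k]`
for each internal node and a value in `[k]` for each leaf (values at irrelevant indices
are ignored). -/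
structure TEInput (h k : ℕ) where
  f : ℕ → Fin k → Fin k → Fin k
  leaf : ℕ → Fin k

/-- Auxiliary recursion (on fuel) computing node values. -/
def TEInput.valAux {h k : ℕ} (I : TEInput h k) : ℕ → ℕ → Fin k
  | 0, i => I.leaf i
  | m + 1, i =>
      if 2 ^ (h - 1) ≤ i then I.leaf i
      else I.f i (I.valAux m (2 * i)) (I.valAux m (2 * i + 1))

/-- The value `v_i^I` of node `i`: the leaf value if `i` is a leaf, and
`f_i^I (v_{2i}^I, v_{2i+1}^I)` if `i` is an internal node. -/
def TEInput.val {h k : ℕ} (I : TEInput h k) (i : ℕ) : Fin k := I.valAux h i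

/-- The input variables of the tree evaluation problem: one variable `f_i(a,b)` for each
internal node `i` and `a b ∈ [k]`, and one variable `l_i` for each leaf `i`. -/
inductive TEVar (h k : ℕ) where
  | internal (i : ℕ) (hi : IsInternalNode h i) (a b : Fin k) : TEVar h k
  | leaf (i : ℕ) (hi : IsLeafNode h i) : TEVar h k

/-- The value of a variable under an input. -/
def TEInput.evalVar {h k : ℕ} (I : TEInput h k) : TEVar h k → Fin k
  | .internal i _ a b => I.f i a b
  | .leaf i _ => I.leaf i

/-- The node a variable belongs to. -/
def TEVar.node {h k : ℕ} : TEVar h k → ℕ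
  | .internal i _ _ _ => i
  | .leaf i _ => i

/-- `X` is the thrifty `i` variable of input `I`: it is `f_i(v_{2i}^I, v_{2i+1}^I)`
if `i` is an internal node, and `l_i` if `i` is a leaf. -/
def IsThriftyVarOf {h k : ℕ} (I : TEInput h k) (i : ℕ) : TEVar h k → Prop
  | .internal j _ a b => j = i ∧ a = I.val (2 * j) ∧ b = I.val (2 * j + 1)
  | .leaf j _ => j = i

/-- A deterministic `k`-way branching program with variables indexed by `V` and
output set `R`: a set of states (of cardinality `size`), a start state, each state
labeled either with a variable to query (non-output states, with `k` out-edges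
labeled `1,…,k`) or with an output value (output sink states). -/
structure DetBP (V : Type) (k : ℕ) (R : Type) where
  size : ℕ
  start : Fin size
  label : Fin size → V ⊕ R
  next : Fin size → Fin k → Fin size

namespace DetBP

variable {V : Type} {k : ℕ} {R : Type}

/-- One step of computation on input `x`: from a state querying variable `v`, follow
the out-edge labeled `x v`; output states are sinks. -/
def step (B : DetBP V k R) (x : V → Fin k) (s : Fin B.size) : Fin B.size :=
  match B.label s with
  | .inl v => B.next s (x v)
  | .inr _ => s

/-- The state of the computation path of `x` at time `t`. -/
def run (B : DetBP V k R) (x : V → Fin k) (t : ℕ) : Fin B.size :=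
  (B.step x)^[t] B.start

/-- The depth of `B` is at most `D`: on every input, the computation path reaches an
output state within its first `D` states. -/
def DepthLE (B : DetBP V k R) (D : ℕ) : Prop :=
  ∀ x : V → Fin k, ∃ t < D, (B.label (B.run x t)).isRight = true

/-- `B` solves the function tree evaluation problem `FT^h_2(k)`: on every input `I`, the
computation path ends in the output state labeled with the root value `v_1^I`. -/
def SolvesFT {h : ℕ} (B : DetBP (TEVar h k) k (Fin k)) : Prop :=
  ∀ I : TEInput h k, ∃ t, B.label (B.run I.evalVar t) = Sum.inr (I.val 1)

/-- `B` solves the decision tree evaluation problem `BT^h_2(k)`: on every input `I`, the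
computation path ends in the output state labeled with whether `v_1^I = 1`
(the element `1 ∈ [k]` being `(0 : Fin k)`). -/
def SolvesBT {h : ℕ} (B : DetBP (TEVar h k) k Bool) : Prop :=
  ∀ I : TEInput h k, ∃ t, B.label (B.run I.evalVar t) = Sum.inr (decide ((I.val 1 : Fin k).val = 0))

/-- `B` is thrifty: on every input `I`, every query `f_i(a,b)` made along the computation
path of `I` satisfies `a = v_{2i}^I` and `b = v_{2i+1}^I`. -/
def Thrifty {h : ℕ} (B : DetBP (TEVar h k) k R) : Prop :=
  ∀ (I : TEInput h k) (t i : ℕ) (hi : IsInternalNode h i) (a b : Fin k),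
    B.label (B.run I.evalVar t) = Sum.inl (TEVar.internal i hi a b) →
    a = I.val (2 * i) ∧ b = I.val (2 * i + 1)

end DetBP

/-- For a state `q` of `B` labeled with a variable `f_i(a,b)`, `RightThrifty B q i b` is the
set of `a' ∈ [k]` such that some input `I` whose computation path visits `q` satisfies
`v_{2i}^I = a'` and `v_{2i+1}^I = b`. -/
def RightThrifty {h k : ℕ} (B : DetBP (TEVar h k) k Bool) (q : Fin B.size)
    (i : ℕ) (b : Fin k) : Set (Fin k) :=
  {a' | ∃ I : TEInput h k, (∃ t : ℕ, B.run I.evalVar t = q) ∧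
    I.val (2 * i) = a' ∧ I.val (2 * i + 1) = b}

/-- For a state `q` of `B` labeled with a variable `f_i(a,b)`, `LeftThrifty B q i a` is the
set of `b' ∈ [k]` such that some input `I` whose computation path visits `q` satisfies
`v_{2i}^I = a` and `v_{2i+1}^I = b'`. -/
def LeftThrifty {h k : ℕ} (B : DetBP (TEVar h k) k Bool) (q : Fin B.size)
    (i : ℕ) (a : Fin k) : Set (Fin k) :=
  {b' | ∃ I : TEInput h k, (∃ t : ℕ, B.run I.evalVar t = q) ∧
    I.val (2 * i) = a ∧ I.val (2 * i + 1) = b'}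


section PairPrograms

set_option linter.unusedSectionVars false

open Finset

/-- Labels of a program that learns a table `v : D → Bool → A`: a sink, a query to an entry `n`
of the table, or a test whether the row `i` equals `p`, which reads the entry `n` if it does. -/
inductive PairLabel (D A : Type) where
  | stay : PairLabel D A
  | leaf (n : D × Bool) : PairLabel D A
  | query (i : D) (p : Bool → A) (n : D × Bool) : PairLabel D A

/-- A program whose states carry a `PairLabel`; a failed test is answered by `dflt`. -/
structure PairProg (Q D A : Type) where
  lab : Q → PairLabel D A
  nxt : Q → A → Q
  dflt : A

variable {Q D A : Type} [Fintype D] [DecidableEq D] [Fintype A] [DecidableEq A]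

namespace PairProg

/-- One step of the program on the table `v`. -/
def step (M : PairProg Q D A) (v : D → Bool → A) (q : Q) : Q :=
  match M.lab q with
  | .stay => q
  | .leaf n => M.nxt q (v n.1 n.2)
  | .query i p n => if v i = p then M.nxt q (v n.1 n.2) else M.nxt q M.dflt

/-- The entries known and the rows gained after one step. A row is gained when a test of it
succeeds before both of its entries are known. -/
def upd (M : PairProg Q D A) (v : D → Bool → A) (q : Q)
    (σ : Finset (D × Bool) × Finset D) : Finset (D × Bool) × Finset D :=
  match M.lab q with
  | .stay => σ
  | .leaf n => (insert n σ.1, σ.2)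
  | .query i p n =>
      if v i = p then
        if (i, false) ∈ σ.1 ∧ (i, true) ∈ σ.1 then (insert n σ.1, σ.2)
        else (insert n (insert (i, false) (insert (i, true) σ.1)), insert i σ.2)
      else σ

/-- The rows gained after `T` steps. -/
def gain (M : PairProg Q D A) (v : D → Bool → A) :
    ℕ → Q → Finset (D × Bool) × Finset D → Finset D
  | 0, _, σ => σ.2
  | T + 1, q, σ => M.gain v T (M.step v q) (M.upd v q σ)

/-- The state `q` reads the entry `n` when run on `v`. -/
def Reads (M : PairProg Q D A) (v : D → Bool → A) (q : Q) (n : D × Bool) : Prop :=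
  M.lab q = .leaf n ∨ ∃ i p, M.lab q = .query i p n ∧ v i = p

theorem subset_gain (M : PairProg Q D A) (v : D → Bool → A) (T : ℕ) (q : Q)
    (σ : Finset (D × Bool) × Finset D) : σ.2 ⊆ M.gain v T q σ := by
  induction T generalizing q σ with
  | zero => exact Subset.refl _
  | succ T ih =>
    refine Subset.trans ?_ (ih _ _)
    unfold upd
    split
    · exact Subset.refl _
    · exact Subset.refl _
    · split_ifs
      · exact Subset.refl _
      · exact subset_insert _ _
      · exact Subset.refl _

theorem mem_gain (M : PairProg Q D A) (v : D → Bool → A) (i : D) (s : Bool) (T t : ℕ) (q : Q)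
    (σ : Finset (D × Bool) × Finset D) (ht : t < T)
    (hq : ∃ n, M.lab ((M.step v)^[t] q) = .query i (v i) n)
    (hread : ∀ r < t, ¬ M.Reads v ((M.step v)^[r] q) (i, s))
    (hσ : (i, s) ∉ σ.1 ∨ i ∈ σ.2) : i ∈ M.gain v T q σ := by
  induction T generalizing t q σ with
  | zero => omega
  | succ T ih =>
    by_cases hi : i ∈ σ.2
    · exact M.subset_gain v _ _ _ hi
    have hs : (i, s) ∉ σ.1 := by tauto
    cases t with
    | zero =>
      obtain ⟨n, hn⟩ := hq
      simp only [Function.iterate_zero, id] at hn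
      refine M.subset_gain v T _ _ ?_
      have : ¬ ((i, false) ∈ σ.1 ∧ (i, true) ∈ σ.1) := by
        cases s <;> tauto
      simp [upd, hn, this]
    | succ t =>
      refine ih t _ _ (by omega) (by simpa using hq) ?_ ?_
      · intro r hr
        have := hread (r + 1) (by omega)
        simpa using this
      · have h0 : ¬ M.Reads v q (i, s) := by simpa using hread 0 (by omega)
        unfold Reads at h0
        push Not at h0
        obtain ⟨h1, h2⟩ := h0
        unfold upd
        split
        · tauto
        · rename_i n hn
          left
          simp only [mem_insert, not_or]
          exact ⟨fun h => h1 (by rw [hn, h]), hs⟩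
        · rename_i j p n hn
          split_ifs with hv hK
          · left
            simp only [mem_insert, not_or]
            exact ⟨fun h => h2 j p (by rw [hn, h]) hv, hs⟩
          · by_cases hj : j = i
            · right; simp [hj]
            · left
              simp only [mem_insert, not_or, Prod.mk.injEq, not_and]
              exact ⟨fun h => h2 j p (by rw [hn, h]) hv, fun h => absurd h.symm hj,
                fun h => absurd h.symm hj, hs⟩
          · tauto

end PairProg

/-- The weight of the row `i` when the entries in `K` are known, the rows in `G` are gained, and the
candidates in `e` have been tested without success. -/
noncomputable def rowWeight (A : Type) [Fintype A] (c : ℝ) (K : Finset (D × Bool)) (G : Finset D)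
    (i : D) (e : Finset (Bool → A)) : ℝ :=
  if (i, false) ∈ K ∧ (i, true) ∈ K then (if i ∈ G then c else 1)
  else if (i, false) ∈ K ∨ (i, true) ∈ K then Fintype.card A - c * #e
  else (Fintype.card A : ℝ) * Fintype.card A - c * #e

/-- Each line that meets `e` contains at most `m` points of `e ∪ P`. -/
def Tight (m : ℕ) (e P : Finset (Bool → A)) : Prop :=
  ∀ s z, e.filter (fun p => p s = z) = ∅ ∨ #((e ∪ P).filter (fun p => p s = z)) ≤ m

/-- `K`, `G` and `E` describe what is known about the tables in `X`. -/
structure Knowledge (m : ℕ) (X : Finset (D → Bool → A)) (K : Finset (D × Bool)) (G : Finset D)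
    (E : D → Finset (Bool → A)) : Prop where
  agree : ∀ i s, (i, s) ∈ K → ∀ v ∈ X, ∀ w ∈ X, v i s = w i s
  disj : ∀ i, ∀ v ∈ X, v i ∉ E i
  tight : ∀ i, Tight m (E i) (X.image fun v => v i)
  cons : ∀ i s, (i, s) ∈ K → ∀ p ∈ E i, ∀ v ∈ X, p s = v i s
  known : ∀ i ∈ G, (i, false) ∈ K ∧ (i, true) ∈ K

theorem card_line_le (s : Bool) (z : A) (P : Finset (Bool → A)) :
    #(P.filter fun p => p s = z) ≤ Fintype.card A := by
  rw [← Finset.card_univ]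
  refine card_le_card_of_injOn (fun p => p (!s)) (by simp) ?_
  intro p hp q hq h
  simp only [coe_filter, Set.mem_ofPred_eq] at hp hq
  funext b
  have h' : p (!s) = q (!s) := h
  rcases Bool.eq_or_eq_not b s with rfl | rfl
  · rw [hp.2, hq.2]
  · exact h'

theorem Tight.card_line_le {m : ℕ} {c : ℝ} (hc : 1 ≤ c) (hcm : c * m = Fintype.card A)
    {e P : Finset (Bool → A)} (h : Tight m e P) (hd : Disjoint e P) (s : Bool) (z : A) :
    (#(P.filter fun p => p s = z) : ℝ) ≤
      Fintype.card A - c * #(e.filter fun p => p s = z) := by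
  rcases h s z with h | h
  · rw [h]
    simpa using _root_.card_line_le s z P
  · rw [filter_union, card_union_of_disjoint (disjoint_filter_filter hd)] at h
    have h' : (#(e.filter fun p => p s = z) : ℝ) + #(P.filter fun p => p s = z) ≤ m := by
      exact_mod_cast h
    have h0 : (0 : ℝ) ≤ #(P.filter fun p => p s = z) := by positivity
    nlinarith

theorem Tight.card_le {m : ℕ} {c : ℝ} (hc : 1 ≤ c) (hcm : c * m = Fintype.card A)
    {e P : Finset (Bool → A)} (h : Tight m e P) (hd : Disjoint e P) :
    (#P : ℝ) ≤ (Fintype.card A : ℝ) * Fintype.card A - c * #e := by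
  have key : ∀ S : Finset (Bool → A),
      (#S : ℝ) = ∑ z : A, (#(S.filter fun p => p false = z) : ℝ) := by
    intro S
    rw [card_eq_sum_card_fiberwise (f := fun p => p false) (t := univ) (by intro x _; simp)]
    push_cast
    rfl
  rw [key P, key e, mul_sum]
  calc _ ≤ ∑ z : A, ((Fintype.card A : ℝ) - c * #(e.filter fun p => p false = z)) :=
        sum_le_sum fun z _ => h.card_line_le hc hcm hd false z
    _ = _ := by rw [sum_sub_distrib]; simp

theorem card_le_rowWeight {m : ℕ} {c : ℝ} (hc : 1 ≤ c) (hcm : c * m = Fintype.card A)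
    {K : Finset (D × Bool)} {G : Finset D} {i : D} {e P : Finset (Bool → A)}
    (h : Tight m e P) (hd : Disjoint e P) (hK : ¬ ((i, false) ∈ K ∧ (i, true) ∈ K))
    (p₀ : Bool → A) (he : ∀ s, (i, s) ∈ K → ∀ p ∈ e, p s = p₀ s)
    (hP : ∀ s, (i, s) ∈ K → ∀ p ∈ P, p s = p₀ s) :
    (#P : ℝ) ≤ rowWeight A c K G i e := by
  unfold rowWeight
  rw [if_neg hK]
  split_ifs with h1
  · have : ∃ s, (i, s) ∈ K := by
      rcases h1 with h1 | h1 <;> exact ⟨_, h1⟩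
    obtain ⟨s, hs⟩ := this
    have := h.card_line_le hc hcm hd s (p₀ s)
    rwa [filter_true_of_mem (he s hs), filter_true_of_mem (hP s hs)] at this
  · exact h.card_le hc hcm hd

namespace Knowledge

variable {m : ℕ} {c : ℝ} {X : Finset (D → Bool → A)} {K : Finset (D × Bool)} {G : Finset D}
  {E : D → Finset (Bool → A)}

theorem disjoint (h : Knowledge m X K G E) (i : D) : Disjoint (E i) (X.image fun v => v i) := by
  rw [disjoint_right]
  intro p hp
  obtain ⟨v, hv, rfl⟩ := mem_image.1 hp
  exact h.disj i v hv

theorem card_image_le (h : Knowledge m X K G E) (hc : 1 ≤ c) (hcm : c * m = Fintype.card A)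
    (hX : X.Nonempty) (i : D) :
    #(X.image fun v => v i) * (if i ∈ G then c else 1) ≤ rowWeight A c K G i (E i) := by
  obtain ⟨v₀, hv₀⟩ := hX
  by_cases hK : (i, false) ∈ K ∧ (i, true) ∈ K
  · have : #(X.image fun v => v i) ≤ 1 := by
      rw [card_le_one]
      intro p hp q hq
      obtain ⟨v, hv, rfl⟩ := mem_image.1 hp
      obtain ⟨w, hw, rfl⟩ := mem_image.1 hq
      funext s
      cases s
      · exact h.agree _ _ hK.1 v hv w hw
      · exact h.agree _ _ hK.2 v hv w hw
    have h1 : (#(X.image fun v => v i) : ℝ) ≤ 1 := by exact_mod_cast this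
    unfold rowWeight
    rw [if_pos hK]
    refine mul_le_of_le_one_left ?_ h1
    split_ifs <;> linarith
  · rw [if_neg fun hi => hK (h.known i hi), mul_one]
    refine card_le_rowWeight hc hcm (h.tight i) (h.disjoint i) hK (v₀ i)
      (fun s hs p hp => h.cons i s hs p hp v₀ hv₀) ?_
    intro s hs p hp
    obtain ⟨v, hv, rfl⟩ := mem_image.1 hp
    exact h.agree i s hs v hv v₀ hv₀

theorem rowWeight_nonneg (h : Knowledge m X K G E) (hc : 1 ≤ c) (hcm : c * m = Fintype.card A)
    (hX : X.Nonempty) (i : D) : 0 ≤ rowWeight A c K G i (E i) := by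
  refine le_trans ?_ (h.card_image_le hc hcm hX i)
  split_ifs <;> positivity

theorem card_mul_le (h : Knowledge m X K G E) (hc : 1 ≤ c) (hcm : c * m = Fintype.card A)
    (hX : X.Nonempty) : #X * c ^ #G ≤ ∏ i, rowWeight A c K G i (E i) := by
  calc (#X : ℝ) * c ^ #G
      ≤ (∏ i, (#(X.image fun v => v i) : ℝ)) * ∏ i, (if i ∈ G then c else 1) := by
        rw [prod_ite_mem univ G (fun _ => c), univ_inter, prod_const]
        refine mul_le_mul_of_nonneg_right ?_ (by positivity)
        rw [← Nat.cast_prod, ← Fintype.card_piFinset]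
        refine Nat.cast_le.2 (card_le_card fun v hv => ?_)
        rw [Fintype.mem_piFinset]
        exact fun i => mem_image_of_mem _ hv
    _ = ∏ i, (#(X.image fun v => v i) * (if i ∈ G then c else 1)) := prod_mul_distrib.symm
    _ ≤ _ := by
        refine prod_le_prod (fun i _ => ?_) fun i _ => h.card_image_le hc hcm hX i
        split_ifs <;> positivity

theorem reveal_aux (h : Knowledge m X K G E) (i : D) (s : Bool) (z : A) :
    Knowledge m (X.filter fun v => v i s = z) (insert (i, s) K) G
      (Function.update E i ((E i).filter fun p => p s = z)) where
  agree j t hj v hv w hw := by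
    rw [mem_filter] at hv hw
    rcases mem_insert.1 hj with hj | hj
    · cases hj; rw [hv.2, hw.2]
    · exact h.agree j t hj v hv.1 w hw.1
  disj j v hv := by
    rw [mem_filter] at hv
    by_cases hj : j = i
    · subst hj
      simp [h.disj j v hv.1]
    · simpa [hj] using h.disj j v hv.1
  tight j t y := by
    have hsub : Function.update E i ((E i).filter fun p => p s = z) j ⊆ E j := by
      by_cases hj : j = i
      · subst hj; simp
      · simp [hj]
    rcases h.tight j t y with h' | h'
    · left
      rw [← subset_empty, ← h']
      exact filter_subset_filter _ hsub
    · right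
      refine le_trans (card_le_card (filter_subset_filter _ ?_)) h'
      exact union_subset_union hsub (image_subset_image (filter_subset _ _))
  cons j t hj p hp v hv := by
    rw [mem_filter] at hv
    by_cases hji : j = i
    · subst hji
      simp only [Function.update_self, mem_filter] at hp
      rcases mem_insert.1 hj with hj | hj
      · cases hj; rw [hp.2, hv.2]
      · exact h.cons j t hj p hp.1 v hv.1
    · rw [Function.update_of_ne hji] at hp
      rcases mem_insert.1 hj with hj | hj
      · exact absurd (congrArg Prod.fst hj) hji
      · exact h.cons j t hj p hp v hv.1
  known j hj := ⟨mem_insert_of_mem (h.known j hj).1, mem_insert_of_mem (h.known j hj).2⟩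

theorem sum_le_of_reveal (h : Knowledge m X K G E) (hc : 1 ≤ c) (hcm : c * m = Fintype.card A)
    (hX : X.Nonempty) (n : D × Bool) (F : (D → Bool → A) → ℝ)
    (hF : ∀ z E', (X.filter fun v => v n.1 n.2 = z).Nonempty →
      Knowledge m (X.filter fun v => v n.1 n.2 = z) (insert n K) G E' →
      ∑ v ∈ X with v n.1 n.2 = z, F v ≤ ∏ i, rowWeight A c (insert n K) G i (E' i)) :
    ∑ v ∈ X, F v ≤ ∏ i, rowWeight A c K G i (E i) := by
  obtain ⟨i, s⟩ := n
  simp only at hF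
  by_cases hn : (i, s) ∈ K
  · obtain ⟨v₀, hv₀⟩ := hX
    have hall : X.filter (fun v => v i s = v₀ i s) = X :=
      filter_true_of_mem fun v hv => h.agree i s hn v hv v₀ hv₀
    have := hF (v₀ i s) E
    rw [insert_eq_of_mem hn, hall] at this
    exact this ⟨v₀, hv₀⟩ h
  set Z := X.image fun v => v i s with hZ
  set R := ∏ j ∈ univ.erase i, rowWeight A c K G j (E j) with hR
  have hR0 : 0 ≤ R := prod_nonneg fun j _ => h.rowWeight_nonneg hc hcm hX j
  have hiG : i ∉ G := fun hi => hn (by cases s; exacts [(h.known i hi).1, (h.known i hi).2])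
  have hcls : ∀ z ∈ Z, ∑ v ∈ X with v i s = z, F v ≤
      rowWeight A c (insert (i, s) K) G i ((E i).filter fun p => p s = z) * R := by
    intro z hz
    obtain ⟨v, hv, hvz⟩ := mem_image.1 hz
    refine (hF z _ ⟨v, mem_filter.2 ⟨hv, hvz⟩⟩ (h.reveal_aux i s z)).trans (le_of_eq ?_)
    rw [← mul_prod_erase univ _ (mem_univ i), Function.update_self]
    congr 1
    refine prod_congr rfl fun j hj => ?_
    have hji := ne_of_mem_erase hj
    rw [Function.update_of_ne hji]
    simp [rowWeight, hji]
  calc ∑ v ∈ X, F v = ∑ z ∈ Z, ∑ v ∈ X with v i s = z, F v :=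
        (sum_fiberwise_of_maps_to (fun v hv => mem_image_of_mem _ hv) F).symm
    _ ≤ ∑ z ∈ Z, rowWeight A c (insert (i, s) K) G i ((E i).filter fun p => p s = z) * R :=
        sum_le_sum hcls
    _ = (∑ z ∈ Z, rowWeight A c (insert (i, s) K) G i ((E i).filter fun p => p s = z)) * R := by
        rw [sum_mul]
    _ ≤ rowWeight A c K G i (E i) * R := by
        refine mul_le_mul_of_nonneg_right ?_ hR0
        by_cases ho : (i, !s) ∈ K
        · have h1 : ∀ e : Finset (Bool → A), rowWeight A c (insert (i, s) K) G i e = 1 := by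
            intro e
            unfold rowWeight
            rw [if_pos (by cases s <;> simp_all), if_neg hiG]
          simp only [h1, sum_const, nsmul_eq_mul, mul_one]
          have h2 := h.card_image_le hc hcm hX i
          rw [if_neg hiG, mul_one] at h2
          refine le_trans ?_ h2
          have : Z = (X.image fun v => v i).image fun p => p s := by
            rw [image_image]; rfl
          rw [this]
          exact_mod_cast Finset.card_image_le
        · have h1 : ∀ e : Finset (Bool → A),
              rowWeight A c (insert (i, s) K) G i e = Fintype.card A - c * #e := by
            intro e
            unfold rowWeight
            rw [if_neg (by cases s <;> simp_all), if_pos (by cases s <;> simp)]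
          have h2 : rowWeight A c K G i (E i) =
              (Fintype.card A : ℝ) * Fintype.card A - c * #(E i) := by
            unfold rowWeight
            rw [if_neg (by cases s <;> simp_all), if_neg (by cases s <;> simp_all)]
          simp only [h1, h2]
          calc _ ≤ ∑ z : A, ((Fintype.card A : ℝ) - c * #((E i).filter fun p => p s = z)) := by
                refine sum_le_sum_of_subset_of_nonneg (subset_univ _) fun z _ _ => ?_
                exact le_trans (by positivity)
                  ((h.tight i).card_line_le hc hcm (h.disjoint i) s z)
            _ = _ := by
                rw [sum_sub_distrib, ← mul_sum,
                  card_eq_sum_card_fiberwise (f := fun p => p s) (s := E i) (t := univ)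
                    (by intro x _; simp)]
                simp
    _ = _ := mul_prod_erase univ (fun j => rowWeight A c K G j (E j)) (mem_univ i)

theorem hit_aux (h : Knowledge m X K G E) (i : D) (p : Bool → A) :
    Knowledge m (X.filter fun v => v i = p) (insert (i, false) (insert (i, true) K)) (insert i G)
      (Function.update E i ∅) where
  agree j t hj v hv w hw := by
    rw [mem_filter] at hv hw
    by_cases hji : j = i
    · rw [hji, hv.2, hw.2]
    · exact h.agree j t (by simpa [hji] using hj) v hv.1 w hw.1
  disj j v hv := by
    rw [mem_filter] at hv
    by_cases hj : j = i
    · simp [hj]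
    · simpa [hj] using h.disj j v hv.1
  tight j t y := by
    by_cases hj : j = i
    · simp [hj]
    · rw [Function.update_of_ne hj]
      refine (h.tight j t y).imp id fun h' => le_trans (card_le_card ?_) h'
      exact filter_subset_filter _
        (union_subset_union Subset.rfl (image_subset_image (filter_subset _ _)))
  cons j t hj q hq v hv := by
    rw [mem_filter] at hv
    by_cases hji : j = i
    · simp [hji] at hq
    · rw [Function.update_of_ne hji] at hq
      exact h.cons j t (by simpa [hji] using hj) q hq v hv.1
  known j hj := by
    rcases mem_insert.1 hj with rfl | hj
    · simp
    · simp [h.known j hj]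

theorem tight_insert (h : Knowledge m X K G E) (i : D) (p : Bool → A)
    (hp : p ∈ X.image fun v => v i)
    (hline : ∀ s, #((X.image fun v => v i).filter fun q => q s = p s) ≤ m)
    (P : Finset (Bool → A)) (hP : P ⊆ X.image fun v => v i) :
    Tight m (insert p (E i)) P := by
  intro s z
  have hsub : insert p (E i) ∪ P ⊆ E i ∪ X.image fun v => v i :=
    union_subset (insert_subset (mem_union_right _ hp) subset_union_left)
      (hP.trans subset_union_right)
  rcases h.tight i s z with h' | h'
  · by_cases hz : p s = z
    · right
      subst hz
      refine le_trans (card_le_card ?_) (hline s)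
      refine (filter_subset_filter _ hsub).trans ?_
      rw [filter_union, h', empty_union]
    · left
      rw [filter_insert, if_neg hz, h']
  · exact Or.inr (le_trans (card_le_card (filter_subset_filter _ hsub)) h')

theorem miss_aux (h : Knowledge m X K G E) (i : D) (p : Bool → A)
    (hp : p ∈ X.image fun v => v i)
    (hline : ∀ s, #((X.image fun v => v i).filter fun q => q s = p s) ≤ m) :
    Knowledge m (X.filter fun v => ¬ v i = p) K G (Function.update E i (insert p (E i))) where
  agree j t hj v hv w hw := h.agree j t hj v (mem_filter.1 hv).1 w (mem_filter.1 hw).1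
  disj j v hv := by
    rw [mem_filter] at hv
    by_cases hj : j = i
    · subst hj
      simp [hv.2, h.disj j v hv.1]
    · simpa [hj] using h.disj j v hv.1
  tight j := by
    by_cases hj : j = i
    · subst hj
      rw [Function.update_self]
      exact h.tight_insert j p hp hline _ (image_subset_image (filter_subset _ _))
    · rw [Function.update_of_ne hj]
      intro t y
      refine (h.tight j t y).imp id fun h' => le_trans (card_le_card ?_) h'
      exact filter_subset_filter _
        (union_subset_union Subset.rfl (image_subset_image (filter_subset _ _)))
  cons j t hj q hq v hv := by
    rw [mem_filter] at hv
    by_cases hji : j = i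
    · subst hji
      rw [Function.update_self] at hq
      rcases mem_insert.1 hq with rfl | hq
      · obtain ⟨w, hw, rfl⟩ := mem_image.1 hp
        exact h.agree j t hj w hw v hv.1
      · exact h.cons j t hj q hq v hv.1
    · rw [Function.update_of_ne hji] at hq
      exact h.cons j t hj q hq v hv.1
  known := h.known

theorem sum_le_of_test (h : Knowledge m X K G E) (hc : 1 ≤ c) (hcm : c * m = Fintype.card A)
    (hX : X.Nonempty) (i : D) (p : Bool → A) (hK : ¬ ((i, false) ∈ K ∧ (i, true) ∈ K))
    (hline : ∀ s, #((X.image fun v => v i).filter fun q => q s = p s) ≤ m)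
    (F : (D → Bool → A) → ℝ)
    (hit : ∀ E', (X.filter fun v => v i = p).Nonempty →
      Knowledge m (X.filter fun v => v i = p) (insert (i, false) (insert (i, true) K))
        (insert i G) E' →
      ∑ v ∈ X with v i = p, F v ≤
        ∏ j, rowWeight A c (insert (i, false) (insert (i, true) K)) (insert i G) j (E' j))
    (miss : ∀ E', (X.filter fun v => ¬ v i = p).Nonempty →
      Knowledge m (X.filter fun v => ¬ v i = p) K G E' →
      ∑ v ∈ X with ¬ v i = p, F v ≤ ∏ j, rowWeight A c K G j (E' j)) :
    ∑ v ∈ X, F v ≤ ∏ j, rowWeight A c K G j (E j) := by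
  by_cases hp : p ∈ X.image fun v => v i
  swap
  · have hall : X.filter (fun v => ¬ v i = p) = X :=
      filter_true_of_mem fun v hv hvp => hp (mem_image.2 ⟨v, hv, hvp⟩)
    have := miss E
    rw [hall] at this
    exact this hX h
  obtain ⟨v₀, hv₀, hv₀p⟩ := mem_image.1 hp
  set R := ∏ j ∈ univ.erase i, rowWeight A c K G j (E j) with hR
  have hR0 : 0 ≤ R := prod_nonneg fun j _ => h.rowWeight_nonneg hc hcm hX j
  have h1 : ∑ v ∈ X with v i = p, F v ≤ c * R := by
    refine (hit _ ⟨v₀, mem_filter.2 ⟨hv₀, hv₀p⟩⟩ (h.hit_aux i p)).trans (le_of_eq ?_)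
    rw [← mul_prod_erase univ _ (mem_univ i)]
    congr 1
    · simp [rowWeight]
    · refine prod_congr rfl fun j hj => ?_
      have hji := ne_of_mem_erase hj
      rw [Function.update_of_ne hji]
      simp [rowWeight, hji]
  have hpE : p ∉ E i := hv₀p ▸ h.disj i v₀ hv₀
  have hW : rowWeight A c K G i (insert p (E i)) = rowWeight A c K G i (E i) - c := by
    unfold rowWeight
    rw [if_neg hK, card_insert_of_notMem hpE]
    split_ifs <;> push_cast <;> ring
  have hW0 : 0 ≤ rowWeight A c K G i (insert p (E i)) := by
    have := card_le_rowWeight (K := K) (G := G) (i := i) hc hcm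
      (h.tight_insert i p hp hline ∅ (empty_subset _)) (disjoint_empty_right _) hK p
      (fun s hs q hq => by
        rcases mem_insert.1 hq with rfl | hq
        · rfl
        · rw [h.cons i s hs q hq v₀ hv₀, hv₀p]) (by simp)
    simpa using this
  have h2 : ∑ v ∈ X with ¬ v i = p, F v ≤ (rowWeight A c K G i (E i) - c) * R := by
    rw [← hW]
    rcases (X.filter fun v => ¬ v i = p).eq_empty_or_nonempty with h0 | h0
    · rw [h0, sum_empty]
      exact mul_nonneg hW0 hR0
    · refine (miss _ h0 (h.miss_aux i p hp hline)).trans (le_of_eq ?_)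
      rw [← mul_prod_erase univ _ (mem_univ i), Function.update_self]
      congr 1
      refine prod_congr rfl fun j hj => ?_
      rw [Function.update_of_ne (ne_of_mem_erase hj)]
  rw [← sum_filter_add_sum_filter_not X (fun v => v i = p) F,
    ← mul_prod_erase univ (fun j => rowWeight A c K G j (E j)) (mem_univ i)]
  linarith

end Knowledge

/-- A Kraft-type inequality: every gained row saves a factor `c`. -/
theorem PairProg.sum_pow_gain_le (M : PairProg Q D A) {m : ℕ} {c : ℝ} (hc : 1 ≤ c)
    (hcm : c * m = Fintype.card A) (V : Q → Set (D → Bool → A))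
    (hV : ∀ q, ∀ v ∈ V q, v ∈ V (M.step v q))
    (hline : ∀ q i p n, M.lab q = .query i p n → ∀ (s : Bool) (P : Finset (Bool → A)),
      (∀ x ∈ P, x s = p s ∧ ∃ v ∈ V q, v i = x) → #P ≤ m)
    (T : ℕ) (q : Q) (X : Finset (D → Bool → A)) (K : Finset (D × Bool)) (G : Finset D)
    (E : D → Finset (Bool → A)) (hX : X.Nonempty) (hE : Knowledge m X K G E)
    (hXV : ∀ v ∈ X, v ∈ V q) :
    ∑ v ∈ X, c ^ #(M.gain v T q (K, G)) ≤ ∏ i, rowWeight A c K G i (E i) := by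
  induction T generalizing q X K G E with
  | zero =>
    simp only [PairProg.gain, sum_const, nsmul_eq_mul]
    exact hE.card_mul_le hc hcm hX
  | succ T ih =>
    simp only [PairProg.gain]
    have reveal : ∀ (n : D × Bool) (Y : Finset (D → Bool → A)) (K' : Finset (D × Bool))
        (G' : Finset D) (E' : D → Finset (Bool → A)), Y ⊆ X → Y.Nonempty →
        Knowledge m Y K' G' E' →
        (∀ v ∈ Y, M.step v q = M.nxt q (v n.1 n.2) ∧ M.upd v q (K, G) = (insert n K', G')) →
        ∑ v ∈ Y, c ^ #(M.gain v T (M.step v q) (M.upd v q (K, G))) ≤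
          ∏ i, rowWeight A c K' G' i (E' i) := by
      intro n Y K' G' E' hYX hY hE' hs
      refine hE'.sum_le_of_reveal hc hcm hY n _ fun z E'' hne hE'' => ?_
      refine le_trans (le_of_eq ?_) (ih (M.nxt q z) _ _ _ _ hne hE'' ?_)
      · refine sum_congr rfl fun v hv => ?_
        rw [mem_filter] at hv
        rw [(hs v hv.1).1, (hs v hv.1).2, hv.2]
      · intro v hv
        rw [mem_filter] at hv
        have := hV q v (hXV v (hYX hv.1))
        rwa [(hs v hv.1).1, hv.2] at this
    rcases hlab : M.lab q with _ | n | ⟨i, p, n⟩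
    · have hs : ∀ v, M.step v q = q ∧ M.upd v q (K, G) = (K, G) := fun v => by
        simp [PairProg.step, PairProg.upd, hlab]
      simp only [hs]
      exact ih q X K G E hX hE hXV
    · exact reveal n X K G E Subset.rfl hX hE fun v _ => by
        simp [PairProg.step, PairProg.upd, hlab]
    · have hmiss : ∀ (Y : Finset (D → Bool → A)) (E' : D → Finset (Bool → A)), Y ⊆ X →
          Y.Nonempty → Knowledge m Y K G E' → (∀ v ∈ Y, ¬ v i = p) →
          ∑ v ∈ Y, c ^ #(M.gain v T (M.step v q) (M.upd v q (K, G))) ≤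
            ∏ i, rowWeight A c K G i (E' i) := by
        intro Y E' hYX hY hE' hYp
        have hs : ∀ v ∈ Y, M.step v q = M.nxt q M.dflt ∧ M.upd v q (K, G) = (K, G) := by
          intro v hv
          simp [PairProg.step, PairProg.upd, hlab, hYp v hv]
        refine le_trans (le_of_eq ?_) (ih (M.nxt q M.dflt) Y K G E' hY hE' ?_)
        · exact sum_congr rfl fun v hv => by rw [(hs v hv).1, (hs v hv).2]
        · intro v hv
          have := hV q v (hXV v (hYX hv))
          rwa [(hs v hv).1] at this
      by_cases hK : (i, false) ∈ K ∧ (i, true) ∈ K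
      · obtain ⟨v₀, hv₀⟩ := hX
        have hconst : ∀ v ∈ X, v i = v₀ i := by
          intro v hv
          funext s
          cases s
          · exact hE.agree _ _ hK.1 v hv v₀ hv₀
          · exact hE.agree _ _ hK.2 v hv v₀ hv₀
        by_cases hp : v₀ i = p
        · refine reveal n X K G E Subset.rfl ⟨v₀, hv₀⟩ hE fun v hv => ?_
          simp [PairProg.step, PairProg.upd, hlab, hconst v hv, hp, hK]
        · exact hmiss X E Subset.rfl ⟨v₀, hv₀⟩ hE fun v hv => by rwa [hconst v hv]
      · refine hE.sum_le_of_test hc hcm hX i p hK ?_ _ ?_ ?_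
        · intro s
          refine hline q i p n hlab s _ fun x hx => ?_
          rw [mem_filter, mem_image] at hx
          obtain ⟨⟨v, hv, hvx⟩, hxs⟩ := hx
          exact ⟨hxs, v, hXV v hv, hvx⟩
        · intro E' hne hE'
          refine reveal n _ _ _ E' (filter_subset _ _) hne hE' fun v hv => ?_
          rw [mem_filter] at hv
          simp only [PairProg.step, PairProg.upd, hlab, hv.2, if_true, if_neg hK, and_self]
        · intro E' hne hE'
          exact hmiss _ E' (filter_subset _ _) hne hE' fun v hv => (mem_filter.1 hv).2

end PairPrograms

namespace TEInput

variable {h k : ℕ} (I : TEInput h k)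

theorem valAux_succ (m i : ℕ) (hi : 2 ^ (h - 1) ≤ i * 2 ^ m) :
    I.valAux m i = I.valAux (m + 1) i := by
  induction m generalizing i with
  | zero =>
    rw [pow_zero, mul_one] at hi
    simp [valAux, hi]
  | succ m ih =>
    have h2 : i * 2 ^ (m + 1) = 2 * i * 2 ^ m := by ring
    rw [valAux, valAux]
    split_ifs
    · rfl
    · rw [ih (2 * i) (by omega), ih (2 * i + 1) (by rw [add_mul]; omega)]

theorem val_of_leaf {i : ℕ} (hi : 2 ^ (h - 1) ≤ i) : I.val i = I.leaf i := by
  cases h <;> simp_all [val, valAux]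

theorem val_of_internal {i : ℕ} (hi : IsInternalNode h i) :
    I.val i = I.f i (I.val (2 * i)) (I.val (2 * i + 1)) := by
  obtain ⟨h1, h2⟩ := hi
  cases h with
  | zero => simp at h2; omega
  | succ m =>
    rw [Nat.add_sub_cancel] at h2
    unfold val
    rw [← I.valAux_succ m (2 * i), ← I.valAux_succ m (2 * i + 1), valAux, if_neg]
    · rw [Nat.add_sub_cancel]; omega
    · rw [Nat.add_sub_cancel]; exact Nat.le_mul_of_pos_left _ (by omega)
    · rw [Nat.add_sub_cancel]; exact Nat.le_mul_of_pos_left _ (by omega)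

/-- Node values, characterized by the defining recursion on a set of nodes closed under children. -/
theorem val_eq_of_rec (S : ℕ → Prop) (g : ℕ → Fin k)
    (hS : ∀ n, S n → 1 ≤ n ∧ n < 2 ^ h)
    (hleaf : ∀ n, S n → 2 ^ (h - 1) ≤ n → I.leaf n = g n)
    (hrec : ∀ n, S n → IsInternalNode h n →
      S (2 * n) ∧ S (2 * n + 1) ∧ I.f n (g (2 * n)) (g (2 * n + 1)) = g n)
    (n : ℕ) (hn : S n) : I.val n = g n := by
  have h1 := hS n hn
  by_cases hl : 2 ^ (h - 1) ≤ n
  · rw [I.val_of_leaf hl, hleaf n hn hl]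
  · have hi : IsInternalNode h n := ⟨h1.1, by omega⟩
    obtain ⟨ha, hb, hf⟩ := hrec n hn hi
    rw [I.val_of_internal hi, val_eq_of_rec S g hS hleaf hrec (2 * n) ha,
      val_eq_of_rec S g hS hleaf hrec (2 * n + 1) hb, hf]
termination_by 2 ^ h - n

theorem children_lt {i : ℕ} (hi : IsInternalNode h i) : 2 * i + 1 < 2 ^ h := by
  obtain ⟨h1, h2⟩ := hi
  cases h with
  | zero => simp at h2; omega
  | succ m => rw [Nat.add_sub_cancel] at h2; rw [pow_succ]; omega

/-- The input `I` with its thrifty `c` variable changed to `a`. -/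
def setVal (c : ℕ) (a : Fin k) : TEInput h k where
  f j x y := if j = c ∧ x = I.val (2 * c) ∧ y = I.val (2 * c + 1) then a else I.f j x y
  leaf j := if j = c then a else I.leaf j

theorem val_setVal_of_ne (c : ℕ) (a : Fin k) {n : ℕ} (hn : n < 2 ^ h) (hc : c / 2 < n)
    (hne : n ≠ c) : (I.setVal c a).val n = I.val n := by
  refine (I.setVal c a).val_eq_of_rec (fun n => n < 2 ^ h ∧ c / 2 < n ∧ n ≠ c) I.val ?_ ?_ ?_ n
    ⟨hn, hc, hne⟩
  · rintro n ⟨h1, h2, -⟩; omega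
  · rintro n ⟨-, -, h3⟩ h4
    rw [I.val_of_leaf h4]
    simp [setVal, h3]
  · rintro n ⟨h1, h2, h3⟩ hi
    have := children_lt hi
    refine ⟨⟨by omega, by omega, by omega⟩, ⟨by omega, by omega, by omega⟩, ?_⟩
    rw [I.val_of_internal hi]
    simp [setVal, h3]

theorem val_setVal_self (c : ℕ) (a : Fin k) (h1 : 1 ≤ c) : (I.setVal c a).val c = a := by
  by_cases hl : 2 ^ (h - 1) ≤ c
  · rw [val_of_leaf _ hl]; simp [setVal]
  · have hi : IsInternalNode h c := ⟨h1, by omega⟩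
    have := children_lt hi
    rw [val_of_internal _ hi, I.val_setVal_of_ne c a (by omega) (by omega) (by omega),
      I.val_setVal_of_ne c a (by omega) (by omega) (by omega)]
    simp [setVal]

theorem evalVar_setVal (c : ℕ) (a : Fin k) (x : TEVar h k) (hx : ¬ IsThriftyVarOf I c x) :
    (I.setVal c a).evalVar x = I.evalVar x := by
  cases x with
  | internal i hi a' b' =>
    simp only [evalVar, setVal]
    rw [if_neg]
    rintro ⟨rfl, ha, hb⟩
    exact hx ⟨rfl, ha, hb⟩
  | leaf i hi =>
    simp only [evalVar, setVal]
    rw [if_neg]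
    exact fun h => hx h

end TEInput

theorem IsThriftyVarOf.node_eq {h k : ℕ} {I : TEInput h k} {n : ℕ} {x : TEVar h k}
    (hx : IsThriftyVarOf I n x) : x.node = n := by
  cases x
  · exact hx.1
  · exact hx

namespace DetBP

theorem run_succ {V : Type} {k : ℕ} {R : Type} (B : DetBP V k R) (x : V → Fin k) (t : ℕ) :
    B.run x (t + 1) = B.step x (B.run x t) :=
  Function.iterate_succ_apply' _ _ _

theorem run_add {V : Type} {k : ℕ} {R : Type} (B : DetBP V k R) (x : V → Fin k) (t r : ℕ) :
    B.run x (t + r) = (B.step x)^[r] (B.run x t) := by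
  rw [run, run, ← Function.iterate_add_apply, add_comm]

theorem run_congr {V : Type} {k : ℕ} {R : Type} (B : DetBP V k R) {x y : V → Fin k} {t : ℕ}
    (hxy : ∀ r < t, ∀ z, B.label (B.run x r) = Sum.inl z → x z = y z) :
    B.run y t = B.run x t := by
  induction t with
  | zero => rfl
  | succ t ih =>
    rw [run_succ, run_succ, ih fun r hr => hxy r (by omega)]
    unfold step
    split
    · rename_i z hz
      rw [hxy t (by omega) z hz]
    · rfl

theorem run_of_sink {V : Type} {k : ℕ} {R : Type} (B : DetBP V k R) {x : V → Fin k} {t : ℕ} {o : R}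
    (ho : B.label (B.run x t) = Sum.inr o) (s : ℕ) : B.run x (t + s) = B.run x t := by
  induction s with
  | zero => rfl
  | succ s ih => rw [← add_assoc, run_succ, ih, step, ho]

variable {h k : ℕ}

/-- At time `t`, the computation on `I` queries the thrifty variable of node `n`. -/
def QueriesThrifty (B : DetBP (TEVar h k) k Bool) (I : TEInput h k) (n t : ℕ) : Prop :=
  ∃ x, B.label (B.run I.evalVar t) = Sum.inl x ∧ IsThriftyVarOf I n x

theorem QueriesThrifty.node_unique {B : DetBP (TEVar h k) k Bool} {I J : TEInput h k}
    {m n t s : ℕ} (hm : B.QueriesThrifty I m t) (hn : B.QueriesThrifty J n s)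
    (hts : B.run I.evalVar t = B.run J.evalVar s) : m = n := by
  obtain ⟨x, hx, hxm⟩ := hm
  obtain ⟨y, hy, hyn⟩ := hn
  rw [hts, hy] at hx
  cases hx
  rw [← hxm.node_eq, ← hyn.node_eq]

theorem run_setVal {B : DetBP (TEVar h k) k Bool} {I : TEInput h k} {c t : ℕ}
    (hc : ∀ r < t, ¬ B.QueriesThrifty I c r) (a : Fin k) :
    B.run (I.setVal c a).evalVar t = B.run I.evalVar t :=
  B.run_congr fun r hr x hx =>
    (I.evalVar_setVal c a x fun hth => hc r hr ⟨x, hx, hth⟩).symm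

theorem exists_queriesThrifty_root {B : DetBP (TEVar h k) k Bool} (hB : B.SolvesBT) (hk : 2 ≤ k)
    (I : TEInput h k) : ∃ t, B.QueriesThrifty I 1 t := by
  by_contra! hno
  obtain ⟨t₀, h₀⟩ := hB (I.setVal 1 ⟨0, by omega⟩)
  obtain ⟨t₁, h₁⟩ := hB (I.setVal 1 ⟨1, by omega⟩)
  rw [run_setVal fun r _ => hno r, TEInput.val_setVal_self _ _ _ le_rfl] at h₀ h₁
  have e₀ := B.run_of_sink h₀ t₁
  have e₁ := B.run_of_sink h₁ t₀
  rw [add_comm, e₁] at e₀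
  rw [← e₀, h₁] at h₀
  simp at h₀

theorem exists_queriesThrifty_child {B : DetBP (TEVar h k) k Bool} {π : ℕ} (hπk : π < k)
    (hbound : ∀ (q : Fin B.size) (i : ℕ) (hi : IsInternalNode h i) (a b : Fin k),
      B.label q = Sum.inl (TEVar.internal i hi a b) →
      (LeftThrifty B q i a).ncard ≤ π ∧ (RightThrifty B q i b).ncard ≤ π)
    {I : TEInput h k} {c t : ℕ} (hc : 2 ≤ c) (hch : c < 2 ^ h)
    (ht : B.QueriesThrifty I (c / 2) t) : ∃ r < t, B.QueriesThrifty I c r := by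
  by_contra! hno
  have hlt : c / 2 < 2 ^ (h - 1) := by
    cases h with
    | zero => simp at hch; omega
    | succ m => rw [pow_succ] at hch; rw [Nat.add_sub_cancel]; omega
  obtain ⟨x, hx, hth⟩ := ht
  cases x with
  | leaf i hi =>
    have : i = c / 2 := hth
    have := hi.1
    omega
  | internal i hi a b =>
    obtain ⟨rfl, ha, hb⟩ := hth
    have hrun := fun a' => run_setVal hno a'
    have hcard : ∀ S : Set (Fin k), (∀ a', a' ∈ S) → S.ncard = k := by
      intro S hS
      rw [Set.eq_univ_of_forall hS, Set.ncard_univ, Nat.card_fin]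
    have hch' := TEInput.children_lt hi
    obtain ⟨hl, hr⟩ := hbound _ _ hi a b hx
    rcases Nat.even_or_odd' c with ⟨j, hj | hj⟩
    · have hcj : c / 2 = j := by omega
      rw [hcard] at hr
      · omega
      · intro a'
        refine ⟨I.setVal c a', ⟨t, hrun a'⟩, ?_, ?_⟩
        · rw [hcj, ← hj, I.val_setVal_self c a' (by omega)]
        · rw [I.val_setVal_of_ne c a' (by omega) (by omega) (by omega), hb]
    · have hcj : c / 2 = j := by omega
      rw [hcard] at hl
      · omega
      · intro a'
        refine ⟨I.setVal c a', ⟨t, hrun a'⟩, ?_, ?_⟩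
        · rw [I.val_setVal_of_ne c a' (by omega) (by omega) (by omega), ha]
        · rw [hcj, ← hj, I.val_setVal_self c a' (by omega)]

end DetBP

open Classical in
/-- Times chosen from the root downwards: each node gets the last time before that of its parent
at which `P` holds. -/
noncomputable def lastTime (P : ℕ → ℕ → Prop) (t₀ : ℕ) (n : ℕ) : ℕ :=
  if _ : n ≤ 1 then t₀ else Nat.findGreatest (P n) (lastTime P t₀ (n / 2) - 1)
termination_by n

theorem exists_pebbling_times {h : ℕ} {P : ℕ → ℕ → Prop} (hroot : ∃ t, P 1 t)
    (hchild : ∀ c t, 2 ≤ c → c < 2 ^ h → P (c / 2) t → ∃ r < t, P c r) :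
    ∃ τ : ℕ → ℕ, (∀ n, 1 ≤ n → n < 2 ^ h → P n (τ n)) ∧
      ∀ n, 2 ≤ n → n < 2 ^ h → τ n < τ (n / 2) ∧ ∀ t, τ n < t → t < τ (n / 2) → ¬ P n t := by
  classical
  obtain ⟨t₀, h₀⟩ := hroot
  have hstep : ∀ n, 2 ≤ n →
      lastTime P t₀ n = Nat.findGreatest (P n) (lastTime P t₀ (n / 2) - 1) := by
    intro n hn
    rw [lastTime, dif_neg (by omega)]
  have hP : ∀ n, 1 ≤ n → n < 2 ^ h → P n (lastTime P t₀ n) := by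
    intro n
    induction n using Nat.strong_induction_on with
    | _ n ih =>
      intro h1 h2
      rcases Nat.lt_or_ge n 2 with hn | hn
      · obtain rfl : n = 1 := by omega
        rw [lastTime, dif_pos le_rfl]
        exact h₀
      · obtain ⟨r, hr, hPr⟩ := hchild n _ hn h2 (ih (n / 2) (by omega) (by omega) (by omega))
        rw [hstep n hn]
        exact Nat.findGreatest_spec (m := r) (by omega) hPr
  refine ⟨lastTime P t₀, hP, fun n hn h2 => ?_⟩
  obtain ⟨r, hr, -⟩ := hchild n _ hn h2 (hP (n / 2) (by omega) (by omega))
  rw [hstep n hn]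
  refine ⟨?_, fun t ht ht' => ?_⟩
  · have := Nat.findGreatest_le (P := P n) (lastTime P t₀ (n / 2) - 1)
    omega
  · exact Nat.findGreatest_is_greatest ht (by omega)

theorem div_two_pow_bounds {H w m : ℕ} (h1 : 2 ^ H ≤ w) (h2 : w < 2 ^ (H + 1)) (hm : m ≤ H) :
    2 ^ (H - m) ≤ w / 2 ^ m ∧ w / 2 ^ m < 2 ^ (H - m + 1) := by
  constructor
  · rw [Nat.le_div_iff_mul_le (by positivity), ← pow_add]
    convert h1 using 2
    omega
  · rw [Nat.div_lt_iff_lt_mul (by positivity), ← pow_add]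
    convert h2 using 2
    omega

theorem xor_two_pow_div_of_lt (p : ℕ) {j i : ℕ} (hji : j < i) :
    (p ^^^ 2 ^ j) / 2 ^ i = p / 2 ^ i := by
  rw [← Nat.shiftRight_eq_div_pow, Nat.shiftRight_xor_distrib, Nat.shiftRight_eq_div_pow (2 ^ j),
    Nat.div_eq_of_lt (Nat.pow_lt_pow_right (by norm_num) hji), Nat.xor_zero,
    Nat.shiftRight_eq_div_pow]

theorem xor_two_pow_div_self_ne (p j : ℕ) : (p ^^^ 2 ^ j) / 2 ^ j ≠ p / 2 ^ j := by
  rw [← Nat.shiftRight_eq_div_pow, Nat.shiftRight_xor_distrib, Nat.shiftRight_eq_div_pow (2 ^ j),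
    Nat.div_self (by positivity), ← Nat.shiftRight_eq_div_pow]
  intro hc
  have := congrArg (fun x => (p >>> j) ^^^ x) hc
  simp at this

/-- When the last node just above the leaves is pebbled, there are at least `h - 2` other nodes that
are pebbled later but already have a pebbled child. -/
theorem exists_bottleneck {H : ℕ} {τ : ℕ → ℕ}
    (hlt : ∀ n, 2 ≤ n → n < 2 ^ (H + 2) → τ n < τ (n / 2))
    (hinj : ∀ m n, 1 ≤ m → m < 2 ^ (H + 2) → 1 ≤ n → n < 2 ^ (H + 2) → τ m = τ n → m = n) :
    ∃ p, IsInternalNode (H + 2) p ∧ ∃ S : Finset ℕ, S.card = H ∧ ∀ i ∈ S,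
      IsInternalNode (H + 2) i ∧ i ≠ p ∧ τ p < τ i ∧
        ∃ u, 2 ≤ u ∧ u < 2 ^ (H + 2) ∧ u / 2 = i ∧ τ u < τ p := by
  have hpow : 2 ^ (H + 2) = 2 * 2 ^ (H + 1) := by ring
  have hpow' : 2 ^ (H + 1) = 2 * 2 ^ H := by ring
  have hpos : 1 ≤ 2 ^ H := Nat.one_le_two_pow
  obtain ⟨p, hp, hmax⟩ := Finset.exists_max_image (Finset.Ico (2 ^ H) (2 ^ (H + 1))) τ
    ⟨2 ^ H, by rw [Finset.mem_Ico]; omega⟩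
  rw [Finset.mem_Ico] at hp
  have hchain : ∀ m, m < H → τ p < τ (p / 2 ^ (m + 1)) := by
    intro m hm
    induction m with
    | zero => simpa using hlt p (by
        have : 2 ^ 1 ≤ 2 ^ H := Nat.pow_le_pow_right (by norm_num) (by omega)
        omega) (by omega)
    | succ m ih =>
      have hb := div_two_pow_bounds hp.1 hp.2 (show m + 1 ≤ H by omega)
      have h2 : 2 ^ 1 ≤ 2 ^ (H - (m + 1)) := Nat.pow_le_pow_right (by norm_num) (by omega)
      have hle := Nat.div_le_self p (2 ^ (m + 1))
      have := hlt (p / 2 ^ (m + 1)) (by omega) (by omega)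
      rw [Nat.div_div_eq_div_mul, ← pow_succ] at this
      exact (ih (by omega)).trans this
  have hw : ∀ j < H, 2 ^ H ≤ p ^^^ 2 ^ j ∧ p ^^^ 2 ^ j < 2 ^ (H + 1) := by
    intro j hj
    have e := xor_two_pow_div_of_lt p hj
    have e1 : p / 2 ^ H = 1 := by
      rw [Nat.div_eq_iff (by positivity)]; omega
    rw [e1, Nat.div_eq_iff (by positivity)] at e
    omega
  have key : ∀ j, ∃ m, j < H → m ≤ j ∧
      τ ((p ^^^ 2 ^ j) / 2 ^ m) < τ p ∧ τ p < τ ((p ^^^ 2 ^ j) / 2 ^ (m + 1)) := by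
    intro j
    by_cases hj : j < H
    swap
    · exact ⟨0, fun h => absurd h hj⟩
    obtain ⟨w1, w2⟩ := hw j hj
    have hne : p ^^^ 2 ^ j ≠ p := fun e => xor_two_pow_div_self_ne p j (by rw [e])
    have hex : ∃ m, τ p < τ ((p ^^^ 2 ^ j) / 2 ^ m) :=
      ⟨j + 1, by rw [xor_two_pow_div_of_lt p (Nat.lt_succ_self j)]; exact hchain j hj⟩
    obtain ⟨m, hm⟩ : ∃ m, Nat.find hex = m + 1 := by
      refine Nat.exists_eq_succ_of_ne_zero fun h0 => ?_
      have h1 := Nat.find_spec hex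
      rw [h0, pow_zero, Nat.div_one] at h1
      have := hmax _ (Finset.mem_Ico.2 ⟨w1, w2⟩)
      omega
    have hmj : m ≤ j := by
      have : Nat.find hex ≤ j + 1 := Nat.find_min' hex (by
        rw [xor_two_pow_div_of_lt p (Nat.lt_succ_self j)]; exact hchain j hj)
      omega
    refine ⟨m, fun _ => ⟨hmj, ?_, hm ▸ Nat.find_spec hex⟩⟩
    have hnot := Nat.find_min hex (show m < Nat.find hex by omega)
    have hb := div_two_pow_bounds w1 w2 (show m ≤ H by omega)
    have hb1 : 1 ≤ 2 ^ (H - m) := Nat.one_le_two_pow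
    have hle := Nat.div_le_self (p ^^^ 2 ^ j) (2 ^ m)
    have hup : (p ^^^ 2 ^ j) / 2 ^ m ≠ p := by
      rcases Nat.eq_zero_or_pos m with rfl | hm0
      · simp [hne]
      · have : 2 ^ (H - m + 1) ≤ 2 ^ H := Nat.pow_le_pow_right (by norm_num) (by omega)
        omega
    have hτ : τ ((p ^^^ 2 ^ j) / 2 ^ m) ≠ τ p := fun e =>
      hup (hinj _ _ (by omega) (by omega) (by omega) (by omega) e)
    omega
  choose m hm using key
  refine ⟨p, ⟨by omega, by simpa using hp.2⟩,
    (Finset.range H).image fun j => (p ^^^ 2 ^ j) / 2 ^ (m j + 1), ?_, ?_⟩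
  · rw [Finset.card_image_of_injOn, Finset.card_range]
    have hno : ∀ j j', j < j' → j' < H →
        (p ^^^ 2 ^ j) / 2 ^ (m j + 1) ≠ (p ^^^ 2 ^ j') / 2 ^ (m j' + 1) := by
      intro j j' hjj hj' e
      have hj : j < H := by omega
      have hmj := (hm j hj).1
      have hmj' := (hm j' hj').1
      have hb := div_two_pow_bounds (hw j hj).1 (hw j hj).2 (show m j + 1 ≤ H by omega)
      have hb' := div_two_pow_bounds (hw j' hj').1 (hw j' hj').2 (show m j' + 1 ≤ H by omega)
      rw [← e] at hb'
      have hmm : m j = m j' := by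
        have l1 := (Nat.pow_lt_pow_iff_right (by norm_num)).1 (hb.1.trans_lt hb'.2)
        have l2 := (Nat.pow_lt_pow_iff_right (by norm_num)).1 (hb'.1.trans_lt hb.2)
        omega
      rw [← hmm] at e
      have e' := congrArg (fun x => x / 2 ^ (j' - (m j + 1))) e
      simp only [Nat.div_div_eq_div_mul, ← pow_add] at e'
      rw [Nat.add_sub_cancel' (by omega), xor_two_pow_div_of_lt p hjj] at e'
      exact xor_two_pow_div_self_ne p j' e'.symm
    intro j hj j' hj' e
    simp only [Finset.coe_range, Set.mem_Iio] at hj hj'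
    rcases lt_trichotomy j j' with hl | hl | hl
    · exact absurd e (hno j j' hl hj')
    · exact hl
    · exact absurd e.symm (hno j' j hl hj)
  · intro i hi
    obtain ⟨j, hj, rfl⟩ := Finset.mem_image.1 hi
    rw [Finset.mem_range] at hj
    obtain ⟨hmj, hu, hi'⟩ := hm j hj
    have hb := div_two_pow_bounds (hw j hj).1 (hw j hj).2 (show m j ≤ H by omega)
    have hb' := div_two_pow_bounds (hw j hj).1 (hw j hj).2 (show m j + 1 ≤ H by omega)
    have h1 : 1 ≤ 2 ^ (H - (m j + 1)) := Nat.one_le_two_pow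
    have h2 : 2 ^ 1 ≤ 2 ^ (H - m j) := Nat.pow_le_pow_right (by norm_num) (by omega)
    have h3 : 2 ^ (H - (m j + 1) + 1) ≤ 2 ^ H := Nat.pow_le_pow_right (by norm_num) (by omega)
    have hle := Nat.div_le_self (p ^^^ 2 ^ j) (2 ^ m j)
    have hwj := hw j hj
    refine ⟨⟨by omega, ?_⟩, by omega, hi', (p ^^^ 2 ^ j) / 2 ^ m j, by omega, by omega, ?_, hu⟩
    · have : H + 2 - 1 = H + 1 := by omega
      rw [this]; omega
    · rw [Nat.div_div_eq_div_mul, ← pow_succ]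

section Tables

variable {h k : ℕ} [NeZero k]

/-- The table row holding the values of the two children of node `i`. -/
def childRow (h i : ℕ) : Fin (2 ^ (h - 1)) := Fin.ofNat _ i

/-- The table entry holding the value of node `n`. -/
def slot (h n : ℕ) : Fin (2 ^ (h - 1)) × Bool := (childRow h (n / 2), decide (n % 2 = 1))

/-- The input whose node values are given by the table `v`, where every function takes the value `0`
away from its thrifty variable. -/
def tableInput (v : Fin (2 ^ (h - 1)) → Bool → Fin k) : TEInput h k where
  f i a b := if v (childRow h i) = (fun s => cond s b a) then v (slot h i).1 (slot h i).2 else 0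
  leaf i := v (slot h i).1 (slot h i).2

theorem childRow_inj {i j : ℕ} (hi : i < 2 ^ (h - 1)) (hj : j < 2 ^ (h - 1))
    (hij : childRow h i = childRow h j) : i = j := by
  have := congrArg Fin.val hij
  simpa [childRow, Nat.mod_eq_of_lt hi, Nat.mod_eq_of_lt hj] using this

theorem slot_inj (hh : 1 ≤ h) {m n : ℕ} (hm : m < 2 ^ h) (hn : n < 2 ^ h)
    (hmn : slot h m = slot h n) : m = n := by
  obtain ⟨h, rfl⟩ := Nat.exists_eq_add_of_le' hh
  rw [pow_succ] at hm hn
  have h1 := childRow_inj (by rw [Nat.add_sub_cancel]; omega)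
    (by rw [Nat.add_sub_cancel]; omega) (congrArg Prod.fst hmn)
  have h2 := congrArg Prod.snd hmn
  simp only [slot, decide_eq_decide] at h2
  omega

theorem slot_two_mul (i : ℕ) : slot h (2 * i) = (childRow h i, false) := by
  simp [slot]

theorem slot_two_mul_add_one (i : ℕ) : slot h (2 * i + 1) = (childRow h i, true) := by
  have : (2 * i + 1) / 2 = i := by omega
  simp [slot, this]

theorem val_tableInput (v : Fin (2 ^ (h - 1)) → Bool → Fin k) {n : ℕ} (h1 : 1 ≤ n)
    (h2 : n < 2 ^ h) : (tableInput v).val n = v (slot h n).1 (slot h n).2 := by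
  refine (tableInput v).val_eq_of_rec (fun n => 1 ≤ n ∧ n < 2 ^ h)
    (fun n => v (slot h n).1 (slot h n).2) (fun _ h => h) (fun _ _ _ => rfl) ?_ n ⟨h1, h2⟩
  rintro n ⟨h1, -⟩ hi
  have := TEInput.children_lt hi
  refine ⟨⟨by omega, by omega⟩, ⟨by omega, by omega⟩, ?_⟩
  simp only [tableInput, slot_two_mul, slot_two_mul_add_one]
  rw [if_pos]
  funext s
  cases s <;> rfl

theorem tableInput_row_eq_iff (v : Fin (2 ^ (h - 1)) → Bool → Fin k) {i : ℕ}
    (hi : IsInternalNode h i) (a b : Fin k) :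
    v (childRow h i) = (fun s => cond s b a) ↔
      a = (tableInput v).val (2 * i) ∧ b = (tableInput v).val (2 * i + 1) := by
  have := TEInput.children_lt hi
  have h1 := hi.1
  rw [val_tableInput v (by omega) (by omega), val_tableInput v (by omega) this, slot_two_mul,
    slot_two_mul_add_one]
  constructor
  · intro e
    rw [e]
    exact ⟨rfl, rfl⟩
  · rintro ⟨rfl, rfl⟩
    funext s
    cases s <;> rfl

namespace DetBP

/-- The program on tables induced by a branching program. -/
def toPairProg (B : DetBP (TEVar h k) k Bool) :
    PairProg (Fin B.size) (Fin (2 ^ (h - 1))) (Fin k) where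
  lab q := match B.label q with
    | .inr _ => .stay
    | .inl (.leaf n _) => .leaf (slot h n)
    | .inl (.internal i _ a b) => .query (childRow h i) (fun s => cond s b a) (slot h i)
  nxt := B.next
  dflt := 0

theorem toPairProg_step (B : DetBP (TEVar h k) k Bool) (v : Fin (2 ^ (h - 1)) → Bool → Fin k) :
    B.toPairProg.step v = B.step (tableInput v).evalVar := by
  funext q
  rcases hq : B.label q with (⟨i, hi, a, b⟩ | ⟨n, hn⟩) | o
  · simp only [PairProg.step, toPairProg, DetBP.step, hq, TEInput.evalVar, tableInput]
    split_ifs <;> rfl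
  · simp only [PairProg.step, toPairProg, DetBP.step, hq, TEInput.evalVar, tableInput]
  · simp only [PairProg.step, toPairProg, DetBP.step, hq]

theorem QueriesThrifty.exists_lab {B : DetBP (TEVar h k) k Bool}
    {v : Fin (2 ^ (h - 1)) → Bool → Fin k} {i t : ℕ} (hi : IsInternalNode h i)
    (ht : B.QueriesThrifty (tableInput v) i t) :
    B.toPairProg.lab (B.run (tableInput v).evalVar t) =
      .query (childRow h i) (v (childRow h i)) (slot h i) := by
  obtain ⟨x, hx, hth⟩ := ht
  cases x with
  | leaf n hn =>
    have e : n = i := hth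
    have := hn.1
    have := hi.2
    omega
  | internal j hj a b =>
    obtain ⟨rfl, hab⟩ := hth
    rw [← tableInput_row_eq_iff v hj] at hab
    simp [toPairProg, hx, hab]

theorem queriesThrifty_of_reads {B : DetBP (TEVar h k) k Bool}
    {v : Fin (2 ^ (h - 1)) → Bool → Fin k} {u t : ℕ} (hh : 1 ≤ h) (hu : u < 2 ^ h)
    (hr : B.toPairProg.Reads v (B.run (tableInput v).evalVar t) (slot h u)) :
    B.QueriesThrifty (tableInput v) u t := by
  rcases hx : B.label (B.run (tableInput v).evalVar t) with (⟨i, hi, a, b⟩ | ⟨n, hn⟩) | o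
  · rcases hr with hr | ⟨j, p, hr, hp⟩
    · simp [toPairProg, hx] at hr
    · simp only [toPairProg, hx, PairLabel.query.injEq] at hr
      obtain ⟨rfl, rfl, hs⟩ := hr
      have := TEInput.children_lt hi
      exact ⟨_, hx, slot_inj hh (by omega) hu hs, (tableInput_row_eq_iff v hi a b).1 hp⟩
  · rcases hr with hr | ⟨j, p, hr, hp⟩
    · simp only [toPairProg, hx, PairLabel.leaf.injEq] at hr
      exact ⟨_, hx, slot_inj hh hn.2 hu hr⟩
    · simp [toPairProg, hx] at hr
  · rcases hr with hr | ⟨j, p, hr, hp⟩ <;> simp [toPairProg, hx] at hr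

/-- Every table has a time at which some internal node is queried thriftily, and after which at
least `h - 2` rows are gained. -/
theorem exists_critical_time {π : ℕ} (hh : 2 ≤ h) (hk : 2 ≤ k) (hπk : π < k)
    {B : DetBP (TEVar h k) k Bool} (hB : B.SolvesBT)
    (hbound : ∀ (q : Fin B.size) (i : ℕ) (hi : IsInternalNode h i) (a b : Fin k),
      B.label q = Sum.inl (TEVar.internal i hi a b) →
      (LeftThrifty B q i a).ncard ≤ π ∧ (RightThrifty B q i b).ncard ≤ π)
    (v : Fin (2 ^ (h - 1)) → Bool → Fin k) :
    ∃ t p, IsInternalNode h p ∧ B.QueriesThrifty (tableInput v) p t ∧ ∃ T₀, ∀ T, T₀ ≤ T →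
      h - 2 ≤ (B.toPairProg.gain v T (B.run (tableInput v).evalVar t)
        ({(childRow h p, false), (childRow h p, true)}, ∅)).card := by
  obtain ⟨H, rfl⟩ := Nat.exists_eq_add_of_le' hh
  obtain ⟨τ, hτ, hτ'⟩ := exists_pebbling_times (h := H + 2)
    (exists_queriesThrifty_root hB hk (tableInput v))
    (fun c t h1 h2 ht => exists_queriesThrifty_child hπk hbound h1 h2 ht)
  obtain ⟨p, hp, S, hS, hS'⟩ := exists_bottleneck (fun n h1 h2 => (hτ' n h1 h2).1)
    (fun m n m1 m2 n1 n2 e => (hτ m m1 m2).node_unique (hτ n n1 n2) (by rw [e]))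
  have hlt : ∀ i, IsInternalNode (H + 2) i → 1 ≤ i ∧ i < 2 ^ (H + 2) := by
    intro i hi
    have := TEInput.children_lt hi
    exact ⟨hi.1, by omega⟩
  refine ⟨τ p, p, hp, hτ p (hlt p hp).1 (hlt p hp).2, S.sup τ, fun T hT => ?_⟩
  have hcard : (S.image (childRow (H + 2))).card = H := by
    rw [Finset.card_image_of_injOn, hS]
    intro i hi j hj e
    exact childRow_inj (hS' i hi).1.2 (hS' j hj).1.2 e
  rw [Nat.add_sub_cancel]
  refine hcard.symm.le.trans (Finset.card_le_card fun r hr => ?_)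
  obtain ⟨i, hiS, rfl⟩ := Finset.mem_image.1 hr
  obtain ⟨hi, hip, hpi, u, hu1, hu2, hui, hup⟩ := hS' i hiS
  have hiT : τ i ≤ T := (Finset.le_sup hiS).trans hT
  have hu : slot (H + 2) u = (childRow (H + 2) i, decide (u % 2 = 1)) := by rw [slot, hui]
  have hrun : ∀ r, (B.toPairProg.step v)^[r] (B.run (tableInput v).evalVar (τ p)) =
      B.run (tableInput v).evalVar (τ p + r) := by
    intro r
    rw [toPairProg_step, run_add]
  refine PairProg.mem_gain _ v _ (decide (u % 2 = 1)) T (τ i - τ p) _ _ ?_ ?_ ?_ (Or.inl ?_)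
  · have : τ p ≠ 0 := by omega
    omega
  · rw [hrun, Nat.add_sub_cancel' hpi.le]
    exact ⟨_, (hτ i (hlt i hi).1 (hlt i hi).2).exists_lab hi⟩
  · intro r hr hread
    rw [hrun, ← hu] at hread
    exact (hτ' u hu1 hu2).2 (τ p + r) (by omega) (by rw [hui]; omega)
      (queriesThrifty_of_reads (by omega) hu2 hread)
  · have : childRow (H + 2) i ≠ childRow (H + 2) p := fun e =>
      hip (childRow_inj hi.2 hp.2 e)
    simp [this]

theorem card_line_of_bound {π : ℕ} {B : DetBP (TEVar h k) k Bool}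
    (hbound : ∀ (q : Fin B.size) (i : ℕ) (hi : IsInternalNode h i) (a b : Fin k),
      B.label q = Sum.inl (TEVar.internal i hi a b) →
      (LeftThrifty B q i a).ncard ≤ π ∧ (RightThrifty B q i b).ncard ≤ π)
    (q : Fin B.size) (i : Fin (2 ^ (h - 1))) (p : Bool → Fin k) (n : Fin (2 ^ (h - 1)) × Bool)
    (hq : B.toPairProg.lab q = .query i p n) (s : Bool) (P : Finset (Bool → Fin k))
    (hP : ∀ x ∈ P, x s = p s ∧
      ∃ v ∈ {v | ∃ t, B.run (tableInput v).evalVar t = q}, v i = x) : P.card ≤ π := by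
  rcases hx : B.label q with (⟨j, hj, a, b⟩ | ⟨n, hn⟩) | o
  · simp only [toPairProg, hx, PairLabel.query.injEq] at hq
    obtain ⟨rfl, rfl, -⟩ := hq
    have hch := TEInput.children_lt hj
    have hj1 := hj.1
    obtain ⟨hl, hr⟩ := hbound q j hj a b hx
    have hinj : Set.InjOn (fun x : Bool → Fin k => x (!s)) P := by
      intro x hxP y hyP hxy
      funext c
      rcases Bool.eq_or_eq_not c s with rfl | rfl
      · rw [(hP x hxP).1, (hP y hyP).1]
      · exact hxy
    rw [← Finset.card_image_of_injOn hinj, ← Set.ncard_coe_finset]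
    have hval : ∀ v : Fin (2 ^ (h - 1)) → Bool → Fin k,
        (tableInput v).val (2 * j) = v (childRow h j) false ∧
          (tableInput v).val (2 * j + 1) = v (childRow h j) true := by
      intro v
      rw [val_tableInput v (by omega) (by omega), val_tableInput v (by omega) hch, slot_two_mul,
        slot_two_mul_add_one]
      exact ⟨rfl, rfl⟩
    cases s
    · refine le_trans (Set.ncard_le_ncard ?_ (Set.toFinite _)) hl
      intro y hy
      obtain ⟨x, hxP, rfl⟩ := Finset.mem_image.1 (Finset.mem_coe.1 hy)
      obtain ⟨hxs, v, hv, rfl⟩ := hP x hxP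
      exact ⟨tableInput v, hv, (hval v).1.trans hxs, (hval v).2⟩
    · refine le_trans (Set.ncard_le_ncard ?_ (Set.toFinite _)) hr
      intro y hy
      obtain ⟨x, hxP, rfl⟩ := Finset.mem_image.1 (Finset.mem_coe.1 hy)
      obtain ⟨hxs, v, hv, rfl⟩ := hP x hxP
      exact ⟨tableInput v, hv, (hval v).1, (hval v).2.trans hxs⟩
  · simp [toPairProg, hx] at hq
  · simp [toPairProg, hx] at hq

/-- Few tables share a critical state. -/
theorem card_critical_mul_le {π : ℕ} {B : DetBP (TEVar h k) k Bool} {c : ℝ} (hc : 1 ≤ c)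
    (hcπ : c * π = k)
    (hbound : ∀ (q : Fin B.size) (i : ℕ) (hi : IsInternalNode h i) (a b : Fin k),
      B.label q = Sum.inl (TEVar.internal i hi a b) →
      (LeftThrifty B q i a).ncard ≤ π ∧ (RightThrifty B q i b).ncard ≤ π)
    (X : Finset (Fin (2 ^ (h - 1)) → Bool → Fin k)) (q : Fin B.size) (d : ℕ)
    (hX : ∀ v ∈ X, ∃ t p, B.run (tableInput v).evalVar t = q ∧ IsInternalNode h p ∧
      B.QueriesThrifty (tableInput v) p t ∧ ∃ T₀, ∀ T, T₀ ≤ T →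
      d ≤ (B.toPairProg.gain v T q ({(childRow h p, false), (childRow h p, true)}, ∅)).card) :
    X.card * c ^ d ≤ ((k : ℝ) * k) ^ (2 ^ (h - 1) - 1) := by
  rcases X.eq_empty_or_nonempty with rfl | ⟨v₀, hv₀⟩
  · simp only [Finset.card_empty, Nat.cast_zero, zero_mul]
    positivity
  obtain ⟨t₀, p, hq₀, hp, hth₀, -⟩ := hX v₀ hv₀
  have hlab := hth₀.exists_lab hp
  have hrow : ∀ v ∈ X, v (childRow h p) = v₀ (childRow h p) ∧ ∃ T₀, ∀ T, T₀ ≤ T →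
      d ≤ (B.toPairProg.gain v T q ({(childRow h p, false), (childRow h p, true)}, ∅)).card := by
    intro v hv
    obtain ⟨t, p', hq, hp', hth, hT⟩ := hX v hv
    obtain rfl := hth.node_unique hth₀ (by rw [hq, hq₀])
    have hlab' := hth.exists_lab hp
    rw [hq, ← hq₀, hlab, PairLabel.query.injEq] at hlab'
    exact ⟨hlab'.2.1.symm, hT⟩
  have hT : ∀ v, ∃ T₀, v ∈ X → ∀ T, T₀ ≤ T →
      d ≤ (B.toPairProg.gain v T q ({(childRow h p, false), (childRow h p, true)}, ∅)).card := by
    intro v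
    by_cases hv : v ∈ X
    · obtain ⟨T₀, hT₀⟩ := (hrow v hv).2
      exact ⟨T₀, fun _ => hT₀⟩
    · exact ⟨0, fun h => absurd h hv⟩
  choose T₀ hT₀ using hT
  have hK : Knowledge π X {(childRow h p, false), (childRow h p, true)} ∅ fun _ => ∅ := by
    refine ⟨?_, by simp, fun i s z => Or.inl (by simp), by simp, by simp⟩
    intro i s his v hv w hw
    have hi : i = childRow h p := by
      simp only [Finset.mem_insert, Finset.mem_singleton, Prod.mk.injEq] at his
      tauto
    rw [hi, (hrow v hv).1, (hrow w hw).1]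
  have main := B.toPairProg.sum_pow_gain_le hc (by simpa using hcπ)
    (fun q => {v | ∃ t, B.run (tableInput v).evalVar t = q})
    (by
      rintro q v ⟨t, rfl⟩
      exact ⟨t + 1, by rw [run_succ, toPairProg_step]⟩)
    (card_line_of_bound hbound) (X.sup T₀) q X _ _ _ ⟨v₀, hv₀⟩ hK
    (by
      intro v hv
      obtain ⟨t, -, hq, -⟩ := hX v hv
      exact ⟨t, hq⟩)
  calc (X.card : ℝ) * c ^ d = ∑ v ∈ X, c ^ d := by rw [Finset.sum_const, nsmul_eq_mul]
    _ ≤ _ := Finset.sum_le_sum fun v hv =>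
        pow_le_pow_right₀ hc (hT₀ v hv _ (Finset.le_sup hv))
    _ ≤ _ := main
    _ = _ := by
        rw [← Finset.mul_prod_erase Finset.univ _ (Finset.mem_univ (childRow h p))]
        rw [Finset.prod_congr rfl (g := fun _ => (k : ℝ) * k), Finset.prod_const,
          Finset.card_erase_of_mem (Finset.mem_univ _), Finset.card_univ, Fintype.card_fin]
        · simp [rowWeight]
        · intro j hj
          simp [rowWeight, Finset.ne_of_mem_erase hj]

end DetBP

end Tables

/-- Let `h ≥ 2`, `k ≥ 2` and `1 ≤ π < k`. If `B` is a deterministic `k`-way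
branching program solving `BT^h_2(k)` such that `|LeftThrifty(q)| ≤ π` and
`|RightThrifty(q)| ≤ π` for every state `q` labeled with an internal node variable, then
`B` has at least `k^h / π^(h-2)` states. -/
theorem stmt_17 (h k π : ℕ) (hh : 2 ≤ h) (hk : 2 ≤ k) (hπ1 : 1 ≤ π) (hπk : π < k)
    (B : DetBP (TEVar h k) k Bool) (hB : B.SolvesBT)
    (hbound : ∀ (q : Fin B.size) (i : ℕ) (hi : IsInternalNode h i) (a b : Fin k),
      B.label q = Sum.inl (TEVar.internal i hi a b) →
      (LeftThrifty B q i a).ncard ≤ π ∧ (RightThrifty B q i b).ncard ≤ π) :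
    (k : ℝ) ^ h / (π : ℝ) ^ (h - 2) ≤ (B.size : ℝ) := by
  have : NeZero k := ⟨by omega⟩
  have hπ0 : (0 : ℝ) < π := by exact_mod_cast hπ1
  have hk0 : (0 : ℝ) < k := by exact_mod_cast (by omega : 0 < k)
  set c : ℝ := k / π with hcdef
  have hc : 1 ≤ c := by
    rw [hcdef, one_le_div hπ0]
    exact_mod_cast hπk.le
  have hcπ : c * π = k := div_mul_cancel₀ _ hπ0.ne'
  choose t p hp hth hT using
    fun v => DetBP.exists_critical_time hh hk hπk hB hbound v
  have hq : ∀ q : Fin B.size,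
      ((Finset.univ.filter fun v => B.run (tableInput v).evalVar (t v) = q).card : ℝ) * c ^ (h - 2)
        ≤ ((k : ℝ) * k) ^ (2 ^ (h - 1) - 1) := by
    intro q
    refine DetBP.card_critical_mul_le hc hcπ hbound _ q _ fun v hv => ?_
    have hv' := (Finset.mem_filter.1 hv).2
    refine ⟨t v, p v, hv', hp v, hth v, ?_⟩
    have := hT v
    rwa [hv'] at this
  have hcard : ∑ q : Fin B.size,
      ((Finset.univ.filter fun v => B.run (tableInput v).evalVar (t v) = q).card : ℝ) =
        ((k : ℝ) * k) ^ 2 ^ (h - 1) := by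
    rw [← Nat.cast_sum, ← Finset.card_eq_sum_card_fiberwise (by intro x _; simp)]
    simp [sq]
  have hsum := Finset.sum_le_sum fun q (_ : q ∈ Finset.univ) => hq q
  rw [← Finset.sum_mul, hcard, Finset.sum_const, Finset.card_univ, Fintype.card_fin, nsmul_eq_mul,
    ← Nat.sub_add_cancel (Nat.one_le_two_pow (n := h - 1)), pow_succ, Nat.add_sub_cancel,
    mul_assoc, mul_comm (B.size : ℝ)] at hsum
  have hmain := le_of_mul_le_mul_left hsum (by positivity)
  refine le_trans (le_of_eq ?_) hmain
  rw [hcdef, div_pow, ← mul_div_assoc, ← sq, ← pow_add, Nat.add_sub_cancel' hh]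
end
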